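/- Let K be a finite 2-dimensional geometric simplicial complex in ℝⁿ such that |K| is connected, K is locally planar, every edge of K is an interior edge (K has no boundary edges), and K is orientable. Then the genus g of the space |K| satisfies g = (2 − χ(K))/2, equivalently χ(K) = 2 − 2g. -/

import Mathlib

open Geometry

namespace PaperAlg

/-- Points of `ℝⁿ`. -/
abbrev Pt (n : ℕ) := EuclideanSpace ℝ (Fin n)

variable {n : ℕ}

/-- The 1-skeleton graph of a geometric simplicial complex `K`: its vertex set is the set of
vertices of `K`, and two vertices are adjacent iff they form an edge (a two-element face) of `K`. -/
def skeletonGraph (K : SimplicialComplex ℝ (Pt n)) : SimpleGraph K.vertices where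
  Adj u v := (u : Pt n) ≠ (v : Pt n) ∧
    ∃ s ∈ K.faces, (s : Set (Pt n)) = {(u : Pt n), (v : Pt n)}
  symm := by
    constructor
    rintro u v ⟨hne, s, hs, hset⟩
    exact ⟨fun h => hne h.symm, s, hs, by rw [hset, Set.pair_comm]⟩
  loopless := by constructor; rintro u ⟨hne, -⟩; exact hne rfl

/-- `K` is 2-dimensional: every face has at most three elements. -/
def TwoDimensional (K : SimplicialComplex ℝ (Pt n)) : Prop :=
  ∀ s ∈ K.faces, s.card ≤ 3

/-- The set of triangles (three-element faces) of `K` containing the finset `e`. -/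
def trianglesContaining (K : SimplicialComplex ℝ (Pt n)) (e : Finset (Pt n)) :
    Set (Finset (Pt n)) :=
  {t | t ∈ K.faces ∧ t.card = 3 ∧ e ⊆ t}

/-- An edge of `K` contained in exactly one triangle. -/
def IsBoundaryEdge (K : SimplicialComplex ℝ (Pt n)) (e : Finset (Pt n)) : Prop :=
  e ∈ K.faces ∧ e.card = 2 ∧ (trianglesContaining K e).ncard = 1

/-- An edge of `K` contained in exactly two triangles. -/
def IsInteriorEdge (K : SimplicialComplex ℝ (Pt n)) (e : Finset (Pt n)) : Prop :=
  e ∈ K.faces ∧ e.card = 2 ∧ (trianglesContaining K e).ncard = 2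

/-- The closed upper half-plane `{(a, b) ∈ ℝ² : b ≥ 0}`. -/
def HalfPlane : Set (ℝ × ℝ) := {p | 0 ≤ p.2}

/-- `x` has a neighborhood in `|K|` homeomorphic to an open subset of `ℝ²`. -/
def HasPlanarNbhd (K : SimplicialComplex ℝ (Pt n)) (x : Pt n) : Prop :=
  ∃ U : Set (Pt n), U ⊆ K.space ∧ U ∈ nhdsWithin x K.space ∧
    ∃ V : Set (ℝ × ℝ), IsOpen V ∧ Nonempty (↥U ≃ₜ ↥V)

/-- `x` has a neighborhood in `|K|` homeomorphic to an open subset of the closed half-plane. -/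
def HasHalfPlanarNbhd (K : SimplicialComplex ℝ (Pt n)) (x : Pt n) : Prop :=
  ∃ U : Set (Pt n), U ⊆ K.space ∧ U ∈ nhdsWithin x K.space ∧
    ∃ V : Set ↥HalfPlane, IsOpen V ∧ Nonempty (↥U ≃ₜ ↥V)

/-- `x` is a locally planar point of `|K|`. -/
def IsLocallyPlanarPt (K : SimplicialComplex ℝ (Pt n)) (x : Pt n) : Prop :=
  x ∈ K.space ∧ (HasPlanarNbhd K x ∨ HasHalfPlanarNbhd K x)

/-- `K` is locally planar if every point of `|K|` is locally planar. -/
def LocallyPlanar (K : SimplicialComplex ℝ (Pt n)) : Prop :=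
  ∀ x ∈ K.space, IsLocallyPlanarPt K x

/-- The vertices `a` of `K` such that `{v, a}` is an edge of `K`. -/
def linkVertices (K : SimplicialComplex ℝ (Pt n)) (v : Pt n) : Set (Pt n) :=
  {a | a ≠ v ∧ ∃ s ∈ K.faces, (s : Set (Pt n)) = {v, a}}

/-- The link graph `L(v)`: vertices are the `a` with `{v, a}` an edge of `K`, and `a`, `b`
are adjacent iff `{v, a, b}` is a triangle of `K`. -/
def linkGraph (K : SimplicialComplex ℝ (Pt n)) (v : Pt n) :
    SimpleGraph (linkVertices K v) where
  Adj a b := (a : Pt n) ≠ (b : Pt n) ∧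
    ∃ t ∈ K.faces, t.card = 3 ∧ (t : Set (Pt n)) = {v, (a : Pt n), (b : Pt n)}
  symm := by
    constructor
    rintro a b ⟨hne, t, ht, hc, hset⟩
    exact ⟨fun h => hne h.symm, t, ht, hc, by rw [hset, Set.pair_comm]⟩
  loopless := by constructor; rintro a ⟨hne, -⟩; exact hne rfl

/-- The vertices of `K` lying on some boundary edge. -/
def boundaryVertices (K : SimplicialComplex ℝ (Pt n)) : Set (Pt n) :=
  {v | ∃ e, IsBoundaryEdge K e ∧ v ∈ e}

/-- The boundary graph of `K`: the simple graph formed by the boundary edges of `K`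
and their endpoints. -/
def boundaryGraph (K : SimplicialComplex ℝ (Pt n)) :
    SimpleGraph (boundaryVertices K) where
  Adj u v := (u : Pt n) ≠ (v : Pt n) ∧
    ∃ e, IsBoundaryEdge K e ∧ (e : Set (Pt n)) = {(u : Pt n), (v : Pt n)}
  symm := by
    constructor
    rintro u v ⟨hne, e, he, hset⟩
    exact ⟨fun h => hne h.symm, e, he, by rw [hset, Set.pair_comm]⟩
  loopless := by constructor; rintro u ⟨hne, -⟩; exact hne rfl

/-- The Euler characteristic `χ(K) = V - E + F`. -/
noncomputable def eulerChar (K : SimplicialComplex ℝ (Pt n)) : ℤ :=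
  (K.vertices.ncard : ℤ)
    - ({e : Finset (Pt n) | e ∈ K.faces ∧ e.card = 2}.ncard : ℤ)
    + ({t : Finset (Pt n) | t ∈ K.faces ∧ t.card = 3}.ncard : ℤ)

/-- The three directed edges induced on its boundary by the cyclic ordering `(a, b, c)`. -/
def triDirs (o : Pt n × Pt n × Pt n) : Set (Pt n × Pt n) :=
  {(o.1, o.2.1), (o.2.1, o.2.2), (o.2.2, o.1)}

/-- `K` is orientable: one can assign to each triangle a cyclic ordering of its vertices so
that the two triangles containing any interior edge induce opposite directions on it. -/
def Orientable (K : SimplicialComplex ℝ (Pt n)) : Prop :=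
  ∃ ori : Finset (Pt n) → Pt n × Pt n × Pt n,
    (∀ t ∈ K.faces, t.card = 3 →
      (t : Set (Pt n)) = {(ori t).1, (ori t).2.1, (ori t).2.2}) ∧
    (∀ t₁ ∈ K.faces, ∀ t₂ ∈ K.faces, t₁.card = 3 → t₂.card = 3 → t₁ ≠ t₂ →
      ∀ e ∈ K.faces, e.card = 2 → e ⊆ t₁ → e ⊆ t₂ →
      ∀ x y : Pt n, x ∈ e → y ∈ e → x ≠ y →
        (x, y) ∈ triDirs (ori t₁) → (y, x) ∈ triDirs (ori t₂))

/-- The genus of a topological space `X`: the supremum of the numbers `m` for which there exist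
`m` pairwise disjoint subsets of `X`, each homeomorphic to the circle `S¹`, whose union has
connected complement. -/
noncomputable def genus (X : Type*) [TopologicalSpace X] : ℕ :=
  sSup {m : ℕ | ∃ C : Fin m → Set X,
    (Pairwise fun i j => Disjoint (C i) (C j)) ∧
    (∀ i, Nonempty (↥(C i) ≃ₜ ↥(Metric.sphere (0 : EuclideanSpace ℝ (Fin 2)) 1))) ∧
    IsConnected (⋃ i, C i)ᶜ}

/-!
Describe the surface by its darts, the oriented edges of its triangles. Among the real functions on
darts the cocycles modulo the coboundaries have dimension `2 - χ`, so this dimension has to be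
compared with twice the genus.

If `m` disjoint circles have connected complement, each of them gives a cocycle that counts
crossings with it and is supported near it. A complex function mapping the circle homeomorphically
to the unit circle does not vanish near it, so the increments of its argument are closed there, and
on a fine subdivision their cup product with the crossing cocycle is a nonzero multiple of the
winding number `1`. Since the complement is connected, a linear relation among the crossing cocycles
modulo coboundaries splits into its single terms, which this pairing excludes. The crossing cocycles
thus span an `m`-dimensional isotropic subspace of cohomology, on which the cup product is
nondegenerate, so `2 * m ≤ 2 - χ`.

Conversely, take `m` disjoint simple cycles of edges with connected complement. Suppose first that
every cocycle vanishing on the cycles has integral zero over the closed walks avoiding them. A class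
with zero integral over each cycle is then represented by a cocycle that is nonzero only on edges
leaving the cycles, and such a cocycle has at most one parameter per cycle, so `2 - χ ≤ 2 * m`.
Otherwise some cocycle vanishing on the cycles has a nonzero integral over a closed walk avoiding
them. A shortest such walk is simple, and it does not separate the complement of the cycles because
integrals over boundaries vanish; it can be added to the system, and this stops by finiteness of
`2 - χ`.

Local planarity enters because a planar or half-planar neighbourhood of a point stays connected when
the point is removed, which makes the triangles at a vertex form a single fan.
-/

open Relation

/-! ### Triangulated surfaces -/

section Triple

variable {V : Type*} [AddCommGroup V] [Module ℝ V] {a b c : V}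

lemma mem_convexHull_triple {x : V} :
    x ∈ convexHull ℝ {a, b, c} ↔
      ∃ u v w : ℝ, 0 ≤ u ∧ 0 ≤ v ∧ 0 ≤ w ∧ u + v + w = 1 ∧ u • a + v • b + w • c = x := by
  constructor
  · rw [convexHull_insert (Set.insert_nonempty b {c}), convexHull_pair, mem_convexJoin]
    rintro ⟨_, rfl, _, ⟨v, w, hv, hw, hvw, rfl⟩, s, t, hs, ht, hst, rfl⟩
    exact ⟨s, t * v, t * w, hs, by positivity, by positivity,
      by linear_combination hst + t * hvw, by module⟩
  · rintro ⟨u, v, w, hu, hv, hw, hsum, hx⟩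
    refine mem_convexHull_of_exists_fintype ![u, v, w] ![a, b, c] ?_ ?_ ?_ ?_
    · simp [Fin.forall_fin_succ, hu, hv, hw]
    · simpa [Fin.sum_univ_three] using hsum
    · simp [Fin.forall_fin_succ]
    · simpa [Fin.sum_univ_three] using hx

lemma affineIndependent_triple_iff :
    AffineIndependent ℝ ![a, b, c] ↔
      ∀ u v w : ℝ, u + v + w = 0 → u • a + v • b + w • c = 0 → u = 0 ∧ v = 0 ∧ w = 0 := by
  constructor
  · intro h u v w hsum hcomb
    have hzero := h.eq_zero_of_sum_eq_zero (s := Finset.univ) (w := ![u, v, w])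
      (by simpa [Fin.sum_univ_three] using hsum) (by simpa [Fin.sum_univ_three] using hcomb)
    simpa [Fin.forall_fin_succ] using hzero
  · refine fun h => (affineIndependent_iff_of_fintype ℝ _).2 fun w hsum hcomb => ?_
    rw [Finset.univ.weightedVSub_eq_linear_combination hsum] at hcomb
    have hzero := h (w 0) (w 1) (w 2) (by simpa [Fin.sum_univ_three] using hsum)
      (by simpa [Fin.sum_univ_three] using hcomb)
    simpa [Fin.forall_fin_succ] using hzero

lemma affineIndependent_triple_rotate (h : AffineIndependent ℝ ![a, b, c]) :
    AffineIndependent ℝ ![b, c, a] := by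
  rw [affineIndependent_triple_iff] at h ⊢
  intro u v w hsum hcomb
  have hzero := h w u v (by linarith) (by rw [← hcomb]; abel)
  tauto

end Triple

/-- An oriented combinatorial map all of whose faces are triangles, with vertices in `V`.
A dart is an oriented edge together with the face on its left: `next` is the following dart of
that face, `flip` the oppositely oriented dart of the face across the edge, and `src` the point
at which the dart starts. -/
structure TriMap (V : Type*) where
  Dart : Type
  [fintypeDart : Fintype Dart]
  [nonemptyDart : Nonempty Dart]
  next : Dart → Dart
  flip : Dart → Dart
  src : Dart → V
  next_next_next : ∀ d, next (next (next d)) = d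
  flip_flip : ∀ d, flip (flip d) = d
  src_flip : ∀ d, src (flip d) = src (next d)

namespace TriMap

variable {V : Type*}

attribute [instance] fintypeDart nonemptyDart
attribute [simp] next_next_next flip_flip src_flip

noncomputable instance (X : TriMap V) : DecidableEq X.Dart := Classical.decEq _

section Combinatorial

variable (X : TriMap V)

@[simp] lemma src_next_flip (d : X.Dart) : X.src (X.next (X.flip d)) = X.src d := by
  rw [← X.src_flip, X.flip_flip]

lemma next_bijective : Function.Bijective X.next :=
  Function.bijective_iff_has_inverse.2 ⟨fun d => X.next (X.next d), by simp [Function.LeftInverse],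
    by simp [Function.RightInverse, Function.LeftInverse]⟩

lemma flip_bijective : Function.Bijective X.flip := Function.Involutive.bijective X.flip_flip

lemma sum_next {M : Type*} [AddCommMonoid M] (f : X.Dart → M) :
    ∑ d, f (X.next d) = ∑ d, f d :=
  X.next_bijective.sum_comp f

lemma sum_flip {M : Type*} [AddCommMonoid M] (f : X.Dart → M) :
    ∑ d, f (X.flip d) = ∑ d, f d :=
  X.flip_bijective.sum_comp f

/-- The rotation of a dart about the vertex at which it starts. -/
def rot : Equiv.Perm X.Dart where
  toFun d := X.flip (X.next (X.next d))
  invFun d := X.next (X.flip d)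
  left_inv d := by simp
  right_inv d := by simp

lemma rot_apply (d : X.Dart) : X.rot d = X.flip (X.next (X.next d)) := rfl

@[simp] lemma src_rot (d : X.Dart) : X.src (X.rot d) = X.src d := by simp [rot_apply]

/-- Two darts belong to the same face. -/
def SameFace (d e : X.Dart) : Prop := d = e ∨ d = X.next e ∨ d = X.next (X.next e)

variable {X}

lemma SameFace.refl (d : X.Dart) : X.SameFace d d := Or.inl rfl

lemma SameFace.symm {d e : X.Dart} (h : X.SameFace d e) : X.SameFace e d := by
  rcases h with rfl | rfl | rfl <;> simp [SameFace]

lemma SameFace.next_right {d e : X.Dart} (h : X.SameFace d e) : X.SameFace d (X.next e) := by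
  unfold SameFace at *
  simp only [X.next_next_next]
  tauto

variable (X)

/-- The number of vertices. -/
noncomputable def numVertices : ℕ := (Set.range X.src).ncard

/-- The integer `6 (2 - χ)`. An edge has two darts and a face three, so `χ = V - D / 2 + D / 3`
where `D` is the number of darts; the factor `6` avoids the divisions. -/
noncomputable def eulerDefect : ℤ := 12 - 6 * (X.numVertices : ℤ) + Fintype.card X.Dart

end Combinatorial

section Geometric

variable [AddCommGroup V] [Module ℝ V] (X : TriMap V)

/-- The point with barycentric coordinates `(u, v, w)` in the face of `d`. -/
def bary (d : X.Dart) (u v w : ℝ) : V :=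
  u • X.src d + v • X.src (X.next d) + w • X.src (X.next (X.next d))

lemma bary_next (d : X.Dart) (u v w : ℝ) : X.bary (X.next d) u v w = X.bary d w u v := by
  simp only [bary, X.next_next_next]
  abel

/-- The closed triangle to the left of a dart. -/
def face (d : X.Dart) : Set V :=
  convexHull ℝ {X.src d, X.src (X.next d), X.src (X.next (X.next d))}

/-- The interior of the triangle to the left of a dart. -/
def openFace (d : X.Dart) : Set V :=
  {x | ∃ u v w : ℝ, 0 < u ∧ 0 < v ∧ 0 < w ∧ u + v + w = 1 ∧ X.bary d u v w = x}

/-- The closed edge carrying a dart. -/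
def edge (d : X.Dart) : Set V := segment ℝ (X.src d) (X.src (X.next d))

/-- The edge carrying a dart, without its endpoints. -/
def openEdge (d : X.Dart) : Set V := openSegment ℝ (X.src d) (X.src (X.next d))

/-- The union of all faces. -/
def space : Set V := ⋃ d, X.face d

/-- The dart `e` is reached from `d` inside its face or by crossing an edge through `x`. -/
def Step (x : V) (d e : X.Dart) : Prop := e = X.next d ∨ (e = X.flip d ∧ x ∈ X.edge d)

lemma mem_space {x : V} : x ∈ X.space ↔ ∃ d, x ∈ X.face d := Set.mem_iUnion

lemma mem_face {x : V} {d : X.Dart} :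
    x ∈ X.face d ↔ ∃ u v w : ℝ, 0 ≤ u ∧ 0 ≤ v ∧ 0 ≤ w ∧ u + v + w = 1 ∧ X.bary d u v w = x :=
  mem_convexHull_triple

@[simp] lemma face_next (d : X.Dart) : X.face (X.next d) = X.face d := by
  simp only [face, X.next_next_next]
  congr 1
  ext x
  simp only [Set.mem_insert_iff, Set.mem_singleton_iff]
  tauto

@[simp] lemma openFace_next (d : X.Dart) : X.openFace (X.next d) = X.openFace d := by
  ext x
  constructor
  · rintro ⟨u, v, w, hu, hv, hw, hsum, rfl⟩
    exact ⟨w, u, v, hw, hu, hv, by linarith, (X.bary_next ..).symm⟩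
  · rintro ⟨u, v, w, hu, hv, hw, hsum, rfl⟩
    exact ⟨v, w, u, hv, hw, hu, by linarith, X.bary_next ..⟩

@[simp] lemma edge_flip (d : X.Dart) : X.edge (X.flip d) = X.edge d := by
  simp [edge, segment_symm]

@[simp] lemma openEdge_flip (d : X.Dart) : X.openEdge (X.flip d) = X.openEdge d := by
  simp [openEdge, openSegment_symm]

lemma openEdge_subset_edge (d : X.Dart) : X.openEdge d ⊆ X.edge d :=
  openSegment_subset_segment ..

lemma edge_subset_face (d : X.Dart) : X.edge d ⊆ X.face d :=
  segment_subset_convexHull (by simp) (by simp)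

lemma src_mem_edge (d : X.Dart) : X.src d ∈ X.edge d := left_mem_segment ..

lemma src_mem_face (d : X.Dart) : X.src d ∈ X.face d := X.edge_subset_face d (X.src_mem_edge d)

lemma convex_face (d : X.Dart) : Convex ℝ (X.face d) := convex_convexHull ..

variable {X}

lemma SameFace.openFace_eq {d e : X.Dart} (h : X.SameFace d e) :
    X.openFace d = X.openFace e := by
  rcases h with rfl | rfl | rfl <;> simp

lemma Step.mem_face {x : V} {d e : X.Dart} (h : X.Step x d e) (hd : x ∈ X.face d) :
    x ∈ X.face e := by
  rcases h with rfl | ⟨rfl, hx⟩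
  · rwa [face_next]
  · rw [← X.edge_flip] at hx
    exact X.edge_subset_face _ hx

lemma Step.reflTransGen_symm {x : V} {d e : X.Dart} (h : X.Step x d e) :
    ReflTransGen (X.Step x) e d := by
  rcases h with rfl | ⟨rfl, hx⟩
  · exact .head (b := X.next (X.next d)) (.inl rfl) (.single (.inl (X.next_next_next d).symm))
  · exact .single (.inr ⟨(X.flip_flip d).symm, by rwa [X.edge_flip]⟩)

lemma reflTransGen_step_symm {x : V} {d e : X.Dart} (h : ReflTransGen (X.Step x) d e) :
    ReflTransGen (X.Step x) e d := by
  induction h with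
  | refl => exact .refl
  | tail _ h ih => exact h.reflTransGen_symm.trans ih

end Geometric

end TriMap

/-- A closed oriented surface glued from geometric triangles. The last field makes it a surface:
the triangles around a point are joined to one another across edges through that point. -/
structure TriSurface (V : Type*) [AddCommGroup V] [Module ℝ V] extends TriMap V where
  affineIndependent : ∀ d, AffineIndependent ℝ ![src d, src (next d), src (next (next d))]
  reflTransGen_step : ∀ {x : V} {d e : Dart},
    x ∈ toTriMap.face d → x ∈ toTriMap.face e → ReflTransGen (toTriMap.Step x) d e

namespace TriSurface

section Incidence

variable {V : Type*} [AddCommGroup V] [Module ℝ V] (S : TriSurface V)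

lemma bary_injective {d : S.Dart} {u v w u' v' w' : ℝ} (hs : u + v + w = 1)
    (hs' : u' + v' + w' = 1) (h : S.bary d u v w = S.bary d u' v' w') :
    u = u' ∧ v = v' ∧ w = w' := by
  have hzero := affineIndependent_triple_iff.1 (S.affineIndependent d) (u - u') (v - v') (w - w')
    (by linarith) (by rw [← sub_eq_zero.2 h, TriMap.bary, TriMap.bary]; module)
  simpa only [sub_eq_zero] using hzero

lemma src_next_ne (d : S.Dart) : S.src (S.next d) ≠ S.src d := fun h => by
  simpa using (S.affineIndependent d).injective.ne (a₁ := 1) (a₂ := 0) (by decide) h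

lemma src_next_next_ne (d : S.Dart) : S.src (S.next (S.next d)) ≠ S.src d := fun h => by
  simpa using (S.affineIndependent d).injective.ne (a₁ := 2) (a₂ := 0) (by decide) h

lemma flip_ne (d : S.Dart) : S.flip d ≠ d := fun h =>
  S.src_next_ne d (by rw [← S.src_flip, h])

lemma next_ne (d : S.Dart) : S.next d ≠ d := fun h => S.src_next_ne d (by rw [h])

lemma next_next_ne (d : S.Dart) : S.next (S.next d) ≠ d := fun h =>
  S.src_next_next_ne d (by rw [h])

variable {S} in
lemma eq_of_sameFace {d e : S.Dart} (h : S.SameFace d e) (hsrc : S.src d = S.src e) : d = e := by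
  rcases h with rfl | rfl | rfl
  · rfl
  · exact absurd hsrc (S.src_next_ne _)
  · exact absurd hsrc (S.src_next_next_ne _)

lemma eq_zero_of_bary_mem_edge {d : S.Dart} {u v w : ℝ} (hsum : u + v + w = 1)
    (h : S.bary d u v w ∈ S.edge d) : w = 0 := by
  obtain ⟨a, b, -, -, hab, h⟩ := h
  exact (S.bary_injective (u' := a) (v' := b) (w' := 0) hsum (by linarith)
    (by rw [← h]; simp [TriMap.bary])).2.2

lemma src_next_next_notMem_edge (d : S.Dart) : S.src (S.next (S.next d)) ∉ S.edge d := fun h =>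
  one_ne_zero (S.eq_zero_of_bary_mem_edge (d := d) (u := 0) (v := 0) (w := 1) (by norm_num)
    (by simpa [TriMap.bary] using h))

lemma notMem_edge_self_of_mem_openFace {x : V} {d : S.Dart} (h : x ∈ S.openFace d) :
    x ∉ S.edge d := by
  obtain ⟨u, v, w, -, -, hw, hsum, rfl⟩ := h
  exact fun hx => hw.ne' (S.eq_zero_of_bary_mem_edge hsum hx)

variable {S} in
lemma eq_of_sameFace_of_mem_openEdge {x : V} {d e : S.Dart} (h : S.SameFace e d)
    (hd : x ∈ S.openEdge d) (he : x ∈ S.edge e) : e = d := by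
  obtain ⟨a, b, ha, hb, hab, rfl⟩ := hd
  have hx : a • S.src d + b • S.src (S.next d) = S.bary d a b 0 := by simp [TriMap.bary]
  rcases h with rfl | rfl | rfl
  · rfl
  · rw [hx, show S.bary d a b 0 = S.bary (S.next d) b 0 a from (S.bary_next d b 0 a).symm] at he
    exact absurd (S.eq_zero_of_bary_mem_edge (by linarith) he) ha.ne'
  · rw [hx, show S.bary d a b 0 = S.bary (S.next (S.next d)) 0 a b by
      rw [S.bary_next, S.bary_next]] at he
    exact absurd (S.eq_zero_of_bary_mem_edge (by linarith) he) hb.ne'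

lemma exists_sameCycle_of_reflTransGen_step {d e : S.Dart}
    (h : ReflTransGen (S.Step (S.src d)) d e) :
    ∃ f, S.SameFace f e ∧ S.src f = S.src d ∧ S.rot.SameCycle d f := by
  induction h with
  | refl => exact ⟨d, .refl d, rfl, .refl _ _⟩
  | @tail b c _ hstep ih =>
    obtain ⟨f, hface, hsrc, hcycle⟩ := ih
    rcases hstep with rfl | ⟨rfl, hx⟩
    · exact ⟨f, hface.next_right, hsrc, hcycle⟩
    · rcases hface with rfl | rfl | rfl
      · refine ⟨S.next (S.flip f), .inr (.inl rfl), by simp [hsrc], hcycle.trans ⟨-1, ?_⟩⟩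
        simp [TriMap.rot, Equiv.Perm.inv_def]
      · refine ⟨S.flip b, .inl rfl, by simp [hsrc], hcycle.trans ⟨1, ?_⟩⟩
        simp [TriMap.rot_apply]
      · rw [← hsrc] at hx
        exact absurd hx (S.src_next_next_notMem_edge b)

lemma rot_sameCycle_of_src_eq {d e : S.Dart} (h : S.src d = S.src e) : S.rot.SameCycle d e := by
  obtain ⟨f, hface, hsrc, hcycle⟩ := S.exists_sameCycle_of_reflTransGen_step
    (S.reflTransGen_step (S.src_mem_face d) (h ▸ S.src_mem_face e))
  rwa [eq_of_sameFace hface (hsrc.trans h)] at hcycle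

variable {S} in
lemma sameFace_of_mem_openEdge {x : V} {d e : S.Dart} (hx : x ∈ S.openEdge d)
    (h : ReflTransGen (S.Step x) d e) : S.SameFace d e ∨ S.SameFace (S.flip d) e := by
  induction h with
  | refl => exact .inl (.refl d)
  | tail _ hstep ih =>
    rcases hstep with rfl | ⟨rfl, hedge⟩
    · exact ih.imp TriMap.SameFace.next_right TriMap.SameFace.next_right
    · rcases ih with hface | hface
      · rw [eq_of_sameFace_of_mem_openEdge hface.symm hx hedge]
        exact .inr (.refl _)
      · rw [eq_of_sameFace_of_mem_openEdge hface.symm (by rwa [S.openEdge_flip]) hedge]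
        exact .inl (by simp [TriMap.SameFace.refl])

lemma eq_or_eq_flip_of_mem_openEdge {x : V} {d e : S.Dart} (hd : x ∈ S.openEdge d)
    (he : x ∈ S.edge e) : e = d ∨ e = S.flip d := by
  refine (sameFace_of_mem_openEdge hd (S.reflTransGen_step
    (S.edge_subset_face d (S.openEdge_subset_edge d hd)) (S.edge_subset_face e he))).imp
    (fun h => eq_of_sameFace_of_mem_openEdge h.symm hd he)
    (fun h => eq_of_sameFace_of_mem_openEdge h.symm ?_ he)
  rwa [S.openEdge_flip]

variable {S} in
lemma sameFace_of_mem_openFace {x : V} {d e : S.Dart} (hx : x ∈ S.openFace d)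
    (h : ReflTransGen (S.Step x) d e) : S.SameFace d e := by
  induction h with
  | refl => exact .refl d
  | tail _ hstep ih =>
    rcases hstep with rfl | ⟨rfl, hedge⟩
    · exact ih.next_right
    · exact absurd hedge (S.notMem_edge_self_of_mem_openFace (ih.openFace_eq ▸ hx))

lemma dart_ext {d e : S.Dart} (hsrc : S.src d = S.src e)
    (htgt : S.src (S.next d) = S.src (S.next e)) : d = e := by
  have hmem : midpoint ℝ (S.src d) (S.src (S.next d)) ∈ S.openEdge e := by
    rw [hsrc, htgt]
    exact midpoint_mem_openSegment ..
  rcases S.eq_or_eq_flip_of_mem_openEdge hmem (midpoint_mem_segment ..) with h | rfl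
  · exact h
  · exact absurd (by simpa using hsrc) (S.src_next_ne e)

lemma eq_flip_of_src_eq {d e : S.Dart} (hsrc : S.src d = S.src (S.next e))
    (htgt : S.src (S.next d) = S.src e) : d = S.flip e :=
  S.dart_ext (by simp [hsrc]) (by simp [htgt])

variable {S} in
lemma ne_src_of_mem_openEdge {x : V} {d : S.Dart} (hx : x ∈ S.openEdge d) (e : S.Dart) :
    x ≠ S.src e := by
  rintro rfl
  rcases S.eq_or_eq_flip_of_mem_openEdge hx (S.src_mem_edge e) with rfl | rfl
  · exact S.src_next_ne _ (left_mem_openSegment_iff.1 hx).symm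
  · rw [S.src_flip] at hx
    exact S.src_next_ne _ (right_mem_openSegment_iff.1 hx).symm

lemma notMem_edge_of_mem_openFace {x : V} {d : S.Dart} (hx : x ∈ S.openFace d) (e : S.Dart) :
    x ∉ S.edge e := by
  intro he
  have hface : x ∈ S.face d := by
    obtain ⟨u, v, w, hu, hv, hw, hsum, rfl⟩ := hx
    exact S.mem_face.2 ⟨u, v, w, hu.le, hv.le, hw.le, hsum, rfl⟩
  have hsame := sameFace_of_mem_openFace hx (S.reflTransGen_step hface (S.edge_subset_face e he))
  exact S.notMem_edge_self_of_mem_openFace (hsame.openFace_eq ▸ hx) he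

end Incidence
end TriSurface

/-! ### Midpoint subdivision -/

namespace TriMap

section Subdivision

variable {V : Type*} [AddCommGroup V] [Module ℝ V] (X : TriMap V)

/-- The midpoint of the edge carrying a dart. -/
noncomputable def mid (d : X.Dart) : V := midpoint ℝ (X.src d) (X.src (X.next d))

lemma mid_eq (d : X.Dart) :
    X.mid d = (1 / 2 : ℝ) • X.src d + (1 / 2 : ℝ) • X.src (X.next d) := by
  rw [mid, midpoint_eq_smul_add, smul_add, invOf_eq_inv, one_div]

@[simp] lemma mid_flip (d : X.Dart) : X.mid (X.flip d) = X.mid d := by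
  simp [mid, midpoint_comm]

/-- The subdivision of every face into four by the midpoints of its edges. The dart `d` gives rise
to the darts `(d, 0)`, `(d, 1)`, `(d, 2)` around the small face at the source of `d`, in this order
and starting along `d`, and to the dart `(d, 3)` of the central face opposite to `(d, 1)`. -/
noncomputable def subdivide : TriMap V where
  Dart := X.Dart × Fin 4
  next
    | (d, 0) => (d, 1)
    | (d, 1) => (d, 2)
    | (d, 2) => (d, 0)
    | (d, 3) => (X.next d, 3)
  flip
    | (d, 0) => (X.next (X.flip d), 2)
    | (d, 1) => (d, 3)
    | (d, 2) => (X.flip (X.next (X.next d)), 0)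
    | (d, 3) => (d, 1)
  src
    | (d, 0) => X.src d
    | (d, 1) => X.mid d
    | (d, 2) => X.mid (X.next (X.next d))
    | (d, 3) => X.mid (X.next (X.next d))
  next_next_next := by
    rintro ⟨d, i⟩
    fin_cases i <;> simp
  flip_flip := by
    rintro ⟨d, i⟩
    fin_cases i <;> simp
  src_flip := by
    rintro ⟨d, i⟩
    fin_cases i <;> simp

/-- The `i`-th dart of the subdivision arising from `d`. -/
def subdart (d : X.Dart) (i : Fin 4) : X.subdivide.Dart := (d, i)

@[simp] lemma subdart_inj {d e : X.Dart} {i j : Fin 4} :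
    X.subdart d i = X.subdart e j ↔ d = e ∧ i = j := Prod.mk.injEq .. |>.to_iff

@[simp] lemma next_subdart_zero (d : X.Dart) :
    X.subdivide.next (X.subdart d 0) = X.subdart d 1 := rfl

@[simp] lemma next_subdart_one (d : X.Dart) :
    X.subdivide.next (X.subdart d 1) = X.subdart d 2 := rfl

@[simp] lemma next_subdart_two (d : X.Dart) :
    X.subdivide.next (X.subdart d 2) = X.subdart d 0 := rfl

@[simp] lemma next_subdart_three (d : X.Dart) :
    X.subdivide.next (X.subdart d 3) = X.subdart (X.next d) 3 := rfl

@[simp] lemma flip_subdart_zero (d : X.Dart) :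
    X.subdivide.flip (X.subdart d 0) = X.subdart (X.next (X.flip d)) 2 := rfl

@[simp] lemma flip_subdart_one (d : X.Dart) :
    X.subdivide.flip (X.subdart d 1) = X.subdart d 3 := rfl

@[simp] lemma flip_subdart_two (d : X.Dart) :
    X.subdivide.flip (X.subdart d 2) = X.subdart (X.flip (X.next (X.next d))) 0 := rfl

@[simp] lemma src_subdart_zero (d : X.Dart) : X.subdivide.src (X.subdart d 0) = X.src d := rfl

@[simp] lemma src_subdart_one (d : X.Dart) : X.subdivide.src (X.subdart d 1) = X.mid d := rfl

@[simp] lemma src_subdart_two (d : X.Dart) :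
    X.subdivide.src (X.subdart d 2) = X.mid (X.next (X.next d)) := rfl

@[simp] lemma src_subdart_three (d : X.Dart) :
    X.subdivide.src (X.subdart d 3) = X.mid (X.next (X.next d)) := rfl

/-- The part of a face cut off by the midpoints at the source of a dart. -/
def corner (d : X.Dart) : Set V :=
  {x | ∃ u v w : ℝ, 1 / 2 ≤ u ∧ 0 ≤ v ∧ 0 ≤ w ∧ u + v + w = 1 ∧ X.bary d u v w = x}

/-- The triangle spanned by the midpoints of the edges of a face. -/
def center (d : X.Dart) : Set V :=
  {x | ∃ u v w : ℝ, u ≤ 1 / 2 ∧ v ≤ 1 / 2 ∧ w ≤ 1 / 2 ∧ u + v + w = 1 ∧ X.bary d u v w = x}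

lemma face_subdart_zero (d : X.Dart) : X.subdivide.face (X.subdart d 0) = X.corner d := by
  ext x
  simp only [mem_face, corner, Set.mem_ofPred_eq, bary, next_subdart_zero, next_subdart_one,
    src_subdart_zero, src_subdart_one, src_subdart_two, mid_eq, X.next_next_next]
  constructor
  · rintro ⟨u, v, w, hu, hv, hw, hsum, rfl⟩
    exact ⟨u + v / 2 + w / 2, v / 2, w / 2, by linarith, by linarith, by linarith, by linarith,
      by module⟩
  · rintro ⟨u, v, w, hu, hv, hw, hsum, rfl⟩
    exact ⟨u - v - w, 2 * v, 2 * w, by linarith, by linarith, by linarith, by linarith, by module⟩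

lemma face_subdart_one (d : X.Dart) : X.subdivide.face (X.subdart d 1) = X.corner d := by
  rw [← next_subdart_zero, face_next, face_subdart_zero]

lemma face_subdart_two (d : X.Dart) : X.subdivide.face (X.subdart d 2) = X.corner d := by
  rw [← next_subdart_one, face_next, face_subdart_one]

lemma face_subdart_three (d : X.Dart) : X.subdivide.face (X.subdart d 3) = X.center d := by
  ext x
  simp only [mem_face, center, Set.mem_ofPred_eq, bary, next_subdart_three, src_subdart_three,
    mid_eq, X.next_next_next]
  constructor
  · rintro ⟨u, v, w, hu, hv, hw, hsum, rfl⟩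
    exact ⟨u / 2 + v / 2, v / 2 + w / 2, u / 2 + w / 2, by linarith, by linarith, by linarith,
      by linarith, by module⟩
  · rintro ⟨u, v, w, hu, hv, hw, hsum, rfl⟩
    refine ⟨1 - 2 * v, 1 - 2 * w, 1 - 2 * u, by linarith, by linarith, by linarith, by linarith,
      ?_⟩
    obtain rfl : v = 1 - u - w := by linarith
    module

lemma face_subdart_cases (d : X.Dart) (i : Fin 4) :
    (i = 3 ∧ X.subdivide.face (X.subdart d i) = X.center d) ∨
      (i ≠ 3 ∧ X.subdivide.face (X.subdart d i) = X.corner d) := by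
  fin_cases i
  · exact .inr ⟨by decide, X.face_subdart_zero d⟩
  · exact .inr ⟨by decide, X.face_subdart_one d⟩
  · exact .inr ⟨by decide, X.face_subdart_two d⟩
  · exact .inl ⟨rfl, X.face_subdart_three d⟩

lemma face_subdart_subset (d : X.Dart) (i : Fin 4) :
    X.subdivide.face (X.subdart d i) ⊆ X.face d := by
  intro x hx
  rw [mem_face]
  rcases X.face_subdart_cases d i with ⟨-, h⟩ | ⟨-, h⟩ <;> rw [h] at hx <;>
    obtain ⟨u, v, w, hu, hv, hw, hsum, rfl⟩ := hx <;>
    exact ⟨u, v, w, by linarith, by linarith, by linarith, hsum, rfl⟩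

lemma space_subdivide : X.subdivide.space = X.space := by
  refine Set.Subset.antisymm (Set.iUnion_subset fun ⟨d, i⟩ x hx =>
    X.mem_space.2 ⟨d, X.face_subdart_subset d i hx⟩) (Set.iUnion_subset fun d x hx => ?_)
  rw [mem_space]
  obtain ⟨u, v, w, hu, hv, hw, hsum, rfl⟩ := X.mem_face.1 hx
  by_cases hu' : 1 / 2 ≤ u
  · exact ⟨X.subdart d 0, X.face_subdart_zero d ▸ ⟨u, v, w, hu', hv, hw, hsum, rfl⟩⟩
  by_cases hv' : 1 / 2 ≤ v
  · exact ⟨X.subdart (X.next d) 0, X.face_subdart_zero _ ▸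
      ⟨v, w, u, hv', hw, hu, by linarith, X.bary_next ..⟩⟩
  by_cases hw' : 1 / 2 ≤ w
  · exact ⟨X.subdart (X.next (X.next d)) 0, X.face_subdart_zero _ ▸
      ⟨w, u, v, hw', hu, hv, by linarith, by simp only [bary_next]⟩⟩
  · exact ⟨X.subdart d 3, X.face_subdart_three d ▸
      ⟨u, v, w, by linarith, by linarith, by linarith, hsum, rfl⟩⟩

lemma range_src_subdivide : Set.range X.subdivide.src = Set.range X.src ∪ Set.range X.mid := by
  ext x
  constructor
  · rintro ⟨⟨d, i⟩, rfl⟩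
    fin_cases i
    · exact .inl ⟨d, rfl⟩
    all_goals exact .inr ⟨_, rfl⟩
  · rintro (⟨d, rfl⟩ | ⟨d, rfl⟩)
    · exact ⟨X.subdart d 0, rfl⟩
    · exact ⟨X.subdart d 1, rfl⟩

variable {X}

lemma SameFace.center_eq {d e : X.Dart} (h : X.SameFace d e) : X.center d = X.center e := by
  have hnext (d : X.Dart) : X.center (X.next d) = X.center d := by
    rw [← face_subdart_three, ← next_subdart_three, face_next, face_subdart_three]
  rcases h with rfl | rfl | rfl <;> simp only [hnext]

lemma reflTransGen_step_subdart_of_ne (x : V) (d : X.Dart) {i : Fin 4} (hi : i ≠ 3) :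
    ReflTransGen (X.subdivide.Step x) (X.subdart d 1) (X.subdart d i) := by
  fin_cases i
  · exact .head (b := X.subdart d 2) (.inl rfl) (.single (.inl rfl))
  · exact .refl
  · exact .single (.inl rfl)
  · exact absurd rfl hi

lemma SameFace.reflTransGen_step_subdart_three (x : V) {d e : X.Dart} (h : X.SameFace e d) :
    ReflTransGen (X.subdivide.Step x) (X.subdart d 3) (X.subdart e 3) := by
  rcases h with rfl | rfl | rfl
  · exact .refl
  · exact .single (.inl rfl)
  · exact .head (b := X.subdart (X.next d) 3) (.inl rfl) (.single (.inl rfl))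

end Subdivision

end TriMap

namespace TriSurface

section Subdivision

variable {V : Type*} [AddCommGroup V] [Module ℝ V] {S : TriSurface V} {x : V}

lemma step_subdart_one {d : S.Dart} (hcorner : x ∈ S.corner d) (hcenter : x ∈ S.center d) :
    S.subdivide.Step x (S.subdart d 1) (S.subdart d 3) := by
  refine .inr ⟨rfl, ?_⟩
  obtain ⟨u, v, w, hu, hv, hw, hsum, rfl⟩ := hcorner
  obtain ⟨u', v', w', hu', -, -, hsum', heq⟩ := hcenter
  obtain ⟨rfl, rfl, rfl⟩ := S.bary_injective hsum' hsum heq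
  obtain rfl : u' = 1 / 2 := le_antisymm hu' hu
  obtain rfl : v' = 1 / 2 - w' := by linarith
  refine ⟨2 * (1 / 2 - w'), 2 * w', by linarith, by linarith, by linarith, ?_⟩
  simp only [TriMap.next_subdart_one, TriMap.src_subdart_one, TriMap.src_subdart_two,
    TriMap.mid_eq, TriMap.bary, S.next_next_next]
  module

lemma mem_center_of_mem_corner_next {d : S.Dart} (h : x ∈ S.corner d)
    (hnext : x ∈ S.corner (S.next d)) : x ∈ S.center d := by
  obtain ⟨u, v, w, hu, hv, hw, hsum, rfl⟩ := h
  obtain ⟨u', v', w', hu', hv', -, hsum', heq⟩ := hnext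
  rw [S.bary_next] at heq
  obtain ⟨rfl, rfl, rfl⟩ := S.bary_injective (by linarith) hsum heq
  exact ⟨w', u', v', by linarith, by linarith, by linarith, hsum, rfl⟩

lemma mem_center_of_mem_corner_of_ne {d e f : S.Dart} (hd : S.SameFace d f)
    (he : S.SameFace e f) (hne : d ≠ e) (hxd : x ∈ S.corner d) (hxe : x ∈ S.corner e) :
    x ∈ S.center f := by
  have hnext : e = S.next d ∨ d = S.next e := by
    rcases hd with rfl | rfl | rfl <;> rcases he with rfl | rfl | rfl <;> simp_all
  rcases hnext with rfl | rfl
  · exact hd.center_eq ▸ mem_center_of_mem_corner_next hxd hxe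
  · exact he.center_eq ▸ mem_center_of_mem_corner_next hxe hxd

lemma reflTransGen_step_subdart_of_mem_center {d f : S.Dart} {i : Fin 4} (h : S.SameFace d f)
    (hx : x ∈ S.subdivide.face (S.subdart d i)) (hcenter : x ∈ S.center f) :
    ReflTransGen (S.subdivide.Step x) (S.subdart f 3) (S.subdart d i) := by
  refine (h.reflTransGen_step_subdart_three x).trans ?_
  rcases S.face_subdart_cases d i with ⟨rfl, -⟩ | ⟨hi, hface⟩
  · exact .refl
  · exact (step_subdart_one (hface ▸ hx) (h.center_eq ▸ hcenter)).reflTransGen_symm.trans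
      (TriMap.reflTransGen_step_subdart_of_ne x d hi)

lemma reflTransGen_step_subdart_of_sameFace {d e f : S.Dart} {i j : Fin 4}
    (hd : S.SameFace d f) (he : S.SameFace e f) (hxd : x ∈ S.subdivide.face (S.subdart d i))
    (hxe : x ∈ S.subdivide.face (S.subdart e j)) :
    ReflTransGen (S.subdivide.Step x) (S.subdart d i) (S.subdart e j) := by
  by_cases hcenter : x ∈ S.center f
  · exact (TriMap.reflTransGen_step_symm
      (reflTransGen_step_subdart_of_mem_center hd hxd hcenter)).trans
      (reflTransGen_step_subdart_of_mem_center he hxe hcenter)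
  · rcases S.face_subdart_cases d i with ⟨-, hface⟩ | ⟨hi, hface⟩
    · exact absurd (hd.center_eq ▸ hface ▸ hxd) hcenter
    rcases S.face_subdart_cases e j with ⟨-, hface'⟩ | ⟨hj, hface'⟩
    · exact absurd (he.center_eq ▸ hface' ▸ hxe) hcenter
    obtain rfl : d = e := by
      by_contra hne
      exact hcenter (mem_center_of_mem_corner_of_ne hd he hne (hface ▸ hxd) (hface' ▸ hxe))
    exact (TriMap.reflTransGen_step_symm (TriMap.reflTransGen_step_subdart_of_ne x d hi)).trans
      (TriMap.reflTransGen_step_subdart_of_ne x d hj)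

lemma exists_step_subdart_flip {d : S.Dart} (hx : x ∈ S.edge d) :
    ∃ e f i j, S.SameFace e d ∧ S.SameFace f (S.flip d) ∧
      x ∈ S.subdivide.face (S.subdart e i) ∧ x ∈ S.subdivide.face (S.subdart f j) ∧
      S.subdivide.Step x (S.subdart e i) (S.subdart f j) := by
  suffices hhalf : ∃ e f i j, S.SameFace e d ∧ S.SameFace f (S.flip d) ∧
      S.subdivide.flip (S.subdart e i) = S.subdart f j ∧
      x ∈ S.subdivide.edge (S.subdart e i) by
    obtain ⟨e, f, i, j, he, hf, hflip, hedge⟩ := hhalf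
    have hstep : S.subdivide.Step x (S.subdart e i) (S.subdart f j) := .inr ⟨hflip.symm, hedge⟩
    have hmem := S.subdivide.edge_subset_face _ hedge
    exact ⟨e, f, i, j, he, hf, hmem, hstep.mem_face hmem, hstep⟩
  obtain ⟨a, b, ha, hb, hab, rfl⟩ := hx
  rcases le_total b a with hle | hle
  · refine ⟨d, S.next (S.flip d), 0, 2, .refl _, .inr (.inl rfl), rfl,
      a - b, 2 * b, by linarith, by linarith, by linarith, ?_⟩
    simp only [TriMap.next_subdart_zero, TriMap.src_subdart_zero, TriMap.src_subdart_one,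
      TriMap.mid_eq]
    module
  · refine ⟨S.next d, S.flip d, 2, 0, .inr (.inl rfl), .refl _, by simp,
      2 * a, b - a, by linarith, by linarith, by linarith, ?_⟩
    simp only [TriMap.next_subdart_two, TriMap.src_subdart_zero, TriMap.src_subdart_two,
      TriMap.mid_eq, S.next_next_next]
    module

lemma reflTransGen_step_subdart {d e : S.Dart} (h : ReflTransGen (S.Step x) d e) {i : Fin 4}
    (hx : x ∈ S.subdivide.face (S.subdart d i)) : ∀ e' j, S.SameFace e' e →
      x ∈ S.subdivide.face (S.subdart e' j) →
      ReflTransGen (S.subdivide.Step x) (S.subdart d i) (S.subdart e' j) := by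
  induction h with
  | refl => exact fun e' j he' hxe' => reflTransGen_step_subdart_of_sameFace (.refl d) he' hx hxe'
  | @tail f c _ hstep ih =>
    intro e' j he' hxe'
    rcases hstep with rfl | ⟨rfl, hedge⟩
    · exact ih e' j (by simpa using he'.next_right.next_right) hxe'
    · obtain ⟨g, g', k, k', hg, hg', hxg, hxg', hstep⟩ := exists_step_subdart_flip hedge
      exact (ih g k hg hxg).trans
        (.head hstep (reflTransGen_step_subdart_of_sameFace hg' he' hxg' hxe'))

lemma affineIndependent_corner {a b c : V} (h : AffineIndependent ℝ ![a, b, c]) :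
    AffineIndependent ℝ ![a, midpoint ℝ a b, midpoint ℝ c a] := by
  rw [affineIndependent_triple_iff] at h ⊢
  intro u v w hsum hcomb
  simp only [midpoint_eq_smul_add, invOf_eq_inv] at hcomb
  have := h (u + v / 2 + w / 2) (v / 2) (w / 2) (by linarith) (by rw [← hcomb]; module)
  refine ⟨?_, ?_, ?_⟩ <;> linarith [this.1, this.2.1, this.2.2]

lemma affineIndependent_midpoints {a b c : V} (h : AffineIndependent ℝ ![a, b, c]) :
    AffineIndependent ℝ ![midpoint ℝ c a, midpoint ℝ a b, midpoint ℝ b c] := by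
  rw [affineIndependent_triple_iff] at h ⊢
  intro u v w hsum hcomb
  simp only [midpoint_eq_smul_add, invOf_eq_inv] at hcomb
  have := h (u / 2 + v / 2) (v / 2 + w / 2) (u / 2 + w / 2) (by linarith)
    (by rw [← hcomb]; module)
  refine ⟨?_, ?_, ?_⟩ <;> linarith [this.1, this.2.1, this.2.2]

variable (S)

/-- The midpoint subdivision of a triangulated surface. -/
noncomputable def subdivide : TriSurface V where
  toTriMap := S.toTriMap.subdivide
  affineIndependent := by
    rintro ⟨d, i⟩
    have hcorner := affineIndependent_corner (S.affineIndependent d)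
    have hcenter := affineIndependent_midpoints (S.affineIndependent d)
    fin_cases i
    · simpa [TriMap.subdivide, TriMap.mid] using hcorner
    · simpa [TriMap.subdivide, TriMap.mid] using affineIndependent_triple_rotate hcorner
    · simpa [TriMap.subdivide, TriMap.mid] using
        affineIndependent_triple_rotate (affineIndependent_triple_rotate hcorner)
    · simpa [TriMap.subdivide, TriMap.mid] using hcenter
  reflTransGen_step := by
    rintro x ⟨d, i⟩ ⟨e, j⟩ hd he
    exact reflTransGen_step_subdart (S.reflTransGen_step (S.face_subdart_subset d i hd)
      (S.face_subdart_subset e j he)) hd e j (.refl e) he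

lemma mid_mem_openEdge (d : S.Dart) : S.mid d ∈ S.openEdge d := midpoint_mem_openSegment ..

lemma mid_ne_src (d e : S.Dart) : S.mid d ≠ S.src e :=
  ne_src_of_mem_openEdge (S.mid_mem_openEdge d) e

lemma mid_eq_mid_iff {d e : S.Dart} : S.mid e = S.mid d ↔ e = d ∨ e = S.flip d := by
  refine ⟨fun h => S.eq_or_eq_flip_of_mem_openEdge (S.mid_mem_openEdge d)
    (h ▸ S.openEdge_subset_edge e (S.mid_mem_openEdge e)), ?_⟩
  rintro (rfl | rfl) <;> simp

lemma card_dart_eq_two_mul : Fintype.card S.Dart = 2 * (Set.range S.mid).ncard := by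
  classical
  have hfiber : ∀ y ∈ Finset.univ.image S.mid,
      (Finset.univ.filter fun e => S.mid e = y).card = 2 := by
    intro y hy
    obtain ⟨d, -, rfl⟩ := Finset.mem_image.1 hy
    have hpair : (Finset.univ.filter fun e => S.mid e = S.mid d) = {d, S.flip d} := by
      ext e
      simp [S.mid_eq_mid_iff]
    rw [hpair, Finset.card_pair (S.flip_ne d).symm]
  have hcard := Finset.card_eq_sum_card_image S.mid Finset.univ
  rw [Finset.sum_const_nat hfiber, Finset.card_univ] at hcard
  rw [hcard, ← Set.ncard_coe_finset, mul_comm, Finset.coe_image, Finset.coe_univ, Set.image_univ]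

lemma eulerDefect_subdivide : S.subdivide.eulerDefect = S.eulerDefect := by
  have hvertices : S.subdivide.numVertices = S.numVertices + (Set.range S.mid).ncard := by
    have hdisj : Disjoint (Set.range S.src) (Set.range S.mid) := by
      rw [Set.disjoint_left]
      rintro _ ⟨d, rfl⟩ ⟨e, h⟩
      exact S.mid_ne_src e d h
    exact (congrArg Set.ncard S.range_src_subdivide).trans
      (Set.ncard_union_eq hdisj (Set.toFinite _) (Set.toFinite _))
  have hdarts : Fintype.card S.subdivide.Dart = Fintype.card S.Dart * 4 := by
    change Fintype.card (S.Dart × Fin 4) = _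
    simp
  have hcard := S.card_dart_eq_two_mul
  unfold TriMap.eulerDefect
  rw [hvertices, hdarts]
  push_cast
  lia

end Subdivision

section Mesh

variable {V : Type*} [NormedAddCommGroup V] [NormedSpace ℝ V] (S : TriSurface V)

lemma isCompact_face (d : S.Dart) : IsCompact (S.face d) :=
  (Set.toFinite _).isCompact_convexHull ℝ

lemma isCompact_space : IsCompact S.space := isCompact_iUnion S.isCompact_face

/-- All edges have length at most `ε`. -/
def MeshLE (ε : ℝ) : Prop := ∀ d, dist (S.src d) (S.src (S.next d)) ≤ ε

variable {S} {ε : ℝ}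

lemma MeshLE.subdivide (h : S.MeshLE ε) : S.subdivide.MeshLE (ε / 2) := by
  have hmid (a b c : V) : dist (midpoint ℝ a b) (midpoint ℝ c a) = dist b c / 2 := by
    rw [midpoint_comm c a, dist_eq_norm_vsub V, midpoint_vsub_midpoint, vsub_self,
      midpoint_eq_smul_add, zero_add, vsub_eq_sub, norm_smul, dist_eq_norm, invOf_eq_inv,
      Real.norm_of_nonneg (by norm_num)]
    ring
  rintro ⟨d, i⟩
  have h₀ := h d
  have h₁ := h (S.next d)
  have h₂ := h (S.next (S.next d))
  rw [S.next_next_next] at h₂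
  fin_cases i
  · change dist (S.src d) (midpoint ℝ _ _) ≤ _
    rw [dist_left_midpoint, Real.norm_ofNat]
    linarith
  · change dist (midpoint ℝ _ _) (midpoint ℝ _ _) ≤ _
    rw [S.next_next_next, hmid]
    linarith
  · change dist (midpoint ℝ _ _) (S.src d) ≤ _
    rw [S.next_next_next, dist_midpoint_right, Real.norm_ofNat]
    linarith
  · change dist (midpoint ℝ _ _) (midpoint ℝ _ _) ≤ _
    simp only [S.next_next_next]
    rw [dist_comm, hmid]
    linarith

variable (S) in
lemma exists_meshLE (hε : 0 < ε) :
    ∃ S' : TriSurface V, S'.space = S.space ∧ S'.eulerDefect = S.eulerDefect ∧ S'.MeshLE ε := by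
  obtain ⟨B, hB⟩ := (Set.finite_range fun d => dist (S.src d) (S.src (S.next d))).bddAbove
  have hiter (k : ℕ) : ∃ S' : TriSurface V, S'.space = S.space ∧
      S'.eulerDefect = S.eulerDefect ∧ S'.MeshLE (B / 2 ^ k) := by
    induction k with
    | zero => exact ⟨S, rfl, rfl, fun d => by simpa using hB ⟨d, rfl⟩⟩
    | succ k ih =>
      obtain ⟨S', hspace, hdefect, hmesh⟩ := ih
      refine ⟨S'.subdivide, S'.space_subdivide.trans hspace,
        S'.eulerDefect_subdivide.trans hdefect, ?_⟩
      rw [pow_succ, ← div_div]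
      exact hmesh.subdivide
  have hlim : Filter.Tendsto (fun k : ℕ => B / 2 ^ k) Filter.atTop (nhds 0) :=
    tendsto_const_nhds.div_atTop (tendsto_pow_atTop_atTop_of_one_lt one_lt_two)
  obtain ⟨k, hk⟩ := (hlim.eventually_le_const hε).exists
  obtain ⟨S', hspace, hdefect, hmesh⟩ := hiter k
  exact ⟨S', hspace, hdefect, fun d => (hmesh d).trans hk⟩

lemma MeshLE.dist_le (h : S.MeshLE ε) {d : S.Dart} {x y : V} (hx : x ∈ S.face d)
    (hy : y ∈ S.face d) : dist x y ≤ ε := by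
  have h₀ := h d
  have h₁ := h (S.next d)
  have h₂ := h (S.next (S.next d))
  rw [S.next_next_next] at h₂
  have hε : 0 ≤ ε := dist_nonneg.trans h₀
  calc dist x y ≤ Metric.diam (S.face d) :=
        Metric.dist_le_diam_of_mem (S.isCompact_face d).isBounded hx hy
    _ = Metric.diam {S.src d, S.src (S.next d), S.src (S.next (S.next d))} := convexHull_diam _
    _ ≤ ε := Metric.diam_le_of_forall_dist_le hε (by
        simp [h₀, h₁, h₂, hε, dist_comm (S.src (S.next d)) (S.src d),
          dist_comm (S.src (S.next (S.next d))) (S.src (S.next d)),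
          dist_comm (S.src d) (S.src (S.next (S.next d)))])

end Mesh

end TriSurface

/-! ### Cocycles and coboundaries -/

namespace TriMap

section StepIn

variable {V : Type*} [AddCommGroup V] [Module ℝ V] (X : TriMap V)

/-- A step between darts around some point of `L` lying in their faces. -/
def StepIn (L : Set V) (d e : X.Dart) : Prop := ∃ x ∈ L, x ∈ X.face d ∧ X.Step x d e

end StepIn

section Connected

variable {V : Type*} (X : TriMap V)

/-- Any two darts are joined by a sequence of moves `next` and `flip`. -/
def Connected : Prop := ∀ d e : X.Dart, ReflTransGen (fun a b => b = X.next a ∨ b = X.flip a) d e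

variable {X}

lemma Connected.eq_of_forall {α : Type*} (hX : X.Connected) {f : X.Dart → α}
    (hnext : ∀ d, f (X.next d) = f d) (hflip : ∀ d, f (X.flip d) = f d) (d e : X.Dart) :
    f e = f d := by
  induction hX d e with
  | refl => rfl
  | tail _ h ih =>
    rcases h with rfl | rfl
    · rw [hnext, ih]
    · rw [hflip, ih]

end Connected

end TriMap

namespace TriSurface

section Connected

variable {V : Type*}

lemma reflTransGen_stepIn [AddCommGroup V] [Module ℝ V] (S : TriSurface V) {L : Set V} {x : V}
    (hx : x ∈ L) {d e : S.Dart} (hd : x ∈ S.face d) (he : x ∈ S.face e) :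
    ReflTransGen (S.StepIn L) d e := by
  suffices h : x ∈ S.face e ∧ ReflTransGen (S.StepIn L) d e from h.2
  have hsteps := S.reflTransGen_step hd he
  clear he
  induction hsteps with
  | refl => exact ⟨hd, .refl⟩
  | tail _ hstep ih => exact ⟨hstep.mem_face ih.1, ih.2.tail ⟨x, hx, ih.1, hstep⟩⟩

variable [NormedAddCommGroup V] [NormedSpace ℝ V] (S : TriSurface V)

lemma reflTransGen_stepIn_of_isPreconnected {L : Set V} (hL : IsPreconnected L)
    (hLS : L ⊆ S.space) {d e : S.Dart} (hd : (L ∩ S.face d).Nonempty)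
    (he : (L ∩ S.face e).Nonempty) : ReflTransGen (S.StepIn L) d e := by
  by_contra hne
  have hclosed (P : S.Dart → Prop) : IsClosed (⋃ a : {a // P a}, S.face a.1) :=
    (isCompact_iUnion fun a => S.isCompact_face _).isClosed
  obtain ⟨x, hx, hxA, hxB⟩ := isPreconnected_closed_iff.1 hL
    (⋃ a : {a // ReflTransGen (S.StepIn L) d a}, S.face a.1)
    (⋃ a : {a // ¬ ReflTransGen (S.StepIn L) d a}, S.face a.1) (hclosed _) (hclosed _)
    (fun x hx => by
      obtain ⟨a, ha⟩ := S.mem_space.1 (hLS hx)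
      by_cases h : ReflTransGen (S.StepIn L) d a
      · exact .inl (Set.mem_iUnion.2 ⟨⟨a, h⟩, ha⟩)
      · exact .inr (Set.mem_iUnion.2 ⟨⟨a, h⟩, ha⟩))
    (hd.mono (Set.inter_subset_inter_right _ (Set.subset_iUnion_of_subset ⟨d, .refl⟩ subset_rfl)))
    (he.mono (Set.inter_subset_inter_right _ (Set.subset_iUnion_of_subset ⟨e, hne⟩ subset_rfl)))
  obtain ⟨⟨a, ha⟩, hxa⟩ := Set.mem_iUnion.1 hxA
  obtain ⟨⟨b, hb⟩, hxb⟩ := Set.mem_iUnion.1 hxB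
  exact hb (ha.trans (S.reflTransGen_stepIn hx hxa hxb))

lemma connected_of_isPreconnected_space (h : IsPreconnected S.space) : S.Connected := by
  have hmem (d : S.Dart) : (S.space ∩ S.face d).Nonempty :=
    ⟨_, S.mem_space.2 ⟨d, S.src_mem_face d⟩, S.src_mem_face d⟩
  refine fun d e => ReflTransGen.mono ?_ _ _
    (S.reflTransGen_stepIn_of_isPreconnected h subset_rfl (hmem d) (hmem e))
  rintro a b ⟨x, -, -, hstep⟩
  exact hstep.imp_right And.left

end Connected

end TriSurface

namespace TriMap

section Cochains

variable {V : Type*} (X : TriMap V)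

/-- The `1`-cochains: functions on darts that change sign when a dart is reversed. -/
def antisymm : Submodule ℝ (X.Dart → ℝ) where
  carrier := {φ | ∀ d, φ (X.flip d) = -φ d}
  add_mem' ha hb d := by
    simp only [Pi.add_apply, ha d, hb d]
    ring
  zero_mem' := by simp
  smul_mem' c a ha d := by simp [ha d]

/-- The functions on darts whose sum around every face vanishes. -/
def faceClosed : Submodule ℝ (X.Dart → ℝ) where
  carrier := {φ | ∀ d, φ d + φ (X.next d) + φ (X.next (X.next d)) = 0}
  add_mem' ha hb d := by
    simp only [Pi.add_apply]
    linear_combination ha d + hb d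
  zero_mem' := by simp
  smul_mem' c a ha d := by
    simp only [Pi.smul_apply, smul_eq_mul]
    linear_combination c * ha d

/-- The simplicial `1`-cocycles. -/
def cocycles : Submodule ℝ (X.Dart → ℝ) := X.antisymm ⊓ X.faceClosed

/-- The coboundary of a function on the vertices. -/
def coboundary : (V → ℝ) →ₗ[ℝ] (X.Dart → ℝ) where
  toFun h d := h (X.src (X.next d)) - h (X.src d)
  map_add' a b := by
    ext d
    simp only [Pi.add_apply]
    ring
  map_smul' a b := by
    ext d
    simp only [Pi.smul_apply, smul_eq_mul, RingHom.id_apply]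
    ring

/-- The simplicial `1`-coboundaries. -/
def coboundaries : Submodule ℝ (X.Dart → ℝ) := LinearMap.range X.coboundary

variable {X}

@[simp] lemma coboundary_apply (h : V → ℝ) (d : X.Dart) :
    X.coboundary h d = h (X.src (X.next d)) - h (X.src d) := rfl

lemma mem_cocycles {φ : X.Dart → ℝ} : φ ∈ X.cocycles ↔ (∀ d, φ (X.flip d) = -φ d) ∧
    ∀ d, φ d + φ (X.next d) + φ (X.next (X.next d)) = 0 := Iff.rfl

lemma coboundary_mem_cocycles (h : V → ℝ) : X.coboundary h ∈ X.cocycles :=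
  mem_cocycles.2 ⟨fun d => by simp, fun d => by simp⟩

lemma single_sub_single_next_mem_faceClosed (d : X.Dart) :
    (Pi.single d 1 - Pi.single (X.next d) 1 : X.Dart → ℝ) ∈ X.faceClosed := by
  intro e
  have hshift (e : X.Dart) : (Pi.single (X.next d) (1 : ℝ) : X.Dart → ℝ) (X.next e) =
      (Pi.single d (1 : ℝ) : X.Dart → ℝ) e := by
    simp only [Pi.single_apply, X.next_bijective.injective.eq_iff]
  have hcyclic := hshift (X.next (X.next e))
  rw [X.next_next_next] at hcyclic
  simp only [Pi.sub_apply, hshift, hcyclic]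
  ring

lemma single_sub_single_flip_mem_antisymm (d : X.Dart) :
    (Pi.single d 1 - Pi.single (X.flip d) 1 : X.Dart → ℝ) ∈ X.antisymm := by
  intro e
  have hswap : X.flip e = d ↔ e = X.flip d :=
    ⟨fun h => by rw [← h, X.flip_flip], fun h => by rw [h, X.flip_flip]⟩
  simp [Pi.single_apply, X.flip_bijective.injective.eq_iff, hswap]

lemma Connected.single_sub_single_mem (hX : X.Connected) (d e : X.Dart) :
    (Pi.single d 1 - Pi.single e 1 : X.Dart → ℝ) ∈ X.antisymm ⊔ X.faceClosed := by
  induction hX d e with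
  | refl => simp
  | @tail b c _ h ih =>
    rw [← sub_add_sub_cancel _ (Pi.single b 1)]
    refine Submodule.add_mem _ ih ?_
    rcases h with rfl | rfl
    · exact Submodule.mem_sup_right (single_sub_single_next_mem_faceClosed b)
    · exact Submodule.mem_sup_left (single_sub_single_flip_mem_antisymm b)

variable (X)

/-- The sum of the values of a function on darts. -/
def dartSum : (X.Dart → ℝ) →ₗ[ℝ] ℝ := ∑ d, LinearMap.proj d

variable {X}

lemma dartSum_apply (φ : X.Dart → ℝ) : X.dartSum φ = ∑ d, φ d := by simp [dartSum]

lemma dartSum_eq_zero_of_mem_antisymm {φ : X.Dart → ℝ} (hφ : φ ∈ X.antisymm) :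
    X.dartSum φ = 0 := by
  have hflip := X.sum_flip φ
  rw [dartSum_apply]
  simp only [show ∀ d, φ (X.flip d) = -φ d from hφ, Finset.sum_neg_distrib] at hflip
  linarith

lemma dartSum_eq_zero_of_mem_faceClosed {φ : X.Dart → ℝ} (hφ : φ ∈ X.faceClosed) :
    X.dartSum φ = 0 := by
  have hsum : ∑ d, (φ d + φ (X.next d) + φ (X.next (X.next d))) = 0 :=
    Finset.sum_eq_zero fun d _ => hφ d
  rw [Finset.sum_add_distrib, Finset.sum_add_distrib, X.sum_next fun d => φ (X.next d),
    X.sum_next φ] at hsum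
  rw [dartSum_apply]
  linarith

lemma Connected.antisymm_sup_faceClosed (hX : X.Connected) :
    X.antisymm ⊔ X.faceClosed = LinearMap.ker X.dartSum := by
  refine le_antisymm (sup_le (fun φ hφ => dartSum_eq_zero_of_mem_antisymm hφ)
    fun φ hφ => dartSum_eq_zero_of_mem_faceClosed hφ) fun φ hφ => ?_
  rw [LinearMap.mem_ker, dartSum_apply] at hφ
  obtain ⟨d₀⟩ := X.nonemptyDart
  have hdecomp : φ = ∑ d, φ d • (Pi.single d 1 - Pi.single d₀ 1 : X.Dart → ℝ) := by
    simp only [smul_sub, Finset.sum_sub_distrib, ← Finset.sum_smul, hφ]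
    ext e
    simp [Finset.sum_apply, Pi.single_apply]
  rw [hdecomp]
  exact Submodule.sum_mem _ fun d _ => Submodule.smul_mem _ _ (hX.single_sub_single_mem d d₀)

lemma finrank_ker_dartSum :
    Module.finrank ℝ (LinearMap.ker X.dartSum) + 1 = Fintype.card X.Dart := by
  obtain ⟨d₀⟩ := X.nonemptyDart
  have hrange : LinearMap.range X.dartSum = ⊤ :=
    LinearMap.range_eq_top.2 fun r => ⟨Pi.single d₀ r, by simp [dartSum_apply]⟩
  have hrank := LinearMap.finrank_range_add_finrank_ker X.dartSum
  rw [hrange, finrank_top, Module.finrank_self, Module.finrank_fintype_fun_eq_card] at hrank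
  lia

variable (X) in
/-- The coboundary of functions on the set of vertices alone, which unlike `V → ℝ` form a
finite-dimensional space. -/
noncomputable def vertexCoboundary : (Set.range X.src → ℝ) →ₗ[ℝ] (X.Dart → ℝ) :=
  X.coboundary ∘ₗ Function.ExtendByZero.linearMap ℝ Subtype.val

lemma vertexCoboundary_apply (h : Set.range X.src → ℝ) (d : X.Dart) :
    X.vertexCoboundary h d = h ⟨X.src (X.next d), _, rfl⟩ - h ⟨X.src d, _, rfl⟩ :=
  congrArg₂ (· - ·) (Subtype.val_injective.extend_apply h 0 ⟨X.src (X.next d), _, rfl⟩)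
    (Subtype.val_injective.extend_apply h 0 ⟨X.src d, _, rfl⟩)

lemma range_vertexCoboundary : LinearMap.range X.vertexCoboundary = X.coboundaries := by
  refine le_antisymm (LinearMap.range_comp_le_range _ _) ?_
  rintro _ ⟨h, rfl⟩
  exact ⟨fun x => h x, funext fun d => X.vertexCoboundary_apply _ d⟩

lemma Connected.ker_vertexCoboundary (hX : X.Connected) :
    LinearMap.ker X.vertexCoboundary = Submodule.span ℝ {fun _ => (1 : ℝ)} := by
  ext h
  rw [LinearMap.mem_ker, Submodule.mem_span_singleton]
  constructor
  · intro hh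
    have hnext (d : X.Dart) : h ⟨X.src (X.next d), _, rfl⟩ = h ⟨X.src d, _, rfl⟩ :=
      sub_eq_zero.1 ((vertexCoboundary_apply h d).symm.trans (congrFun hh d))
    obtain ⟨d₀⟩ := X.nonemptyDart
    refine ⟨h ⟨X.src d₀, _, rfl⟩, funext fun ⟨_, e, he⟩ => ?_⟩
    subst he
    simpa using (hX.eq_of_forall (f := fun d => h ⟨X.src d, _, rfl⟩) hnext
      (fun d => by simp only [X.src_flip, hnext]) d₀ e).symm
  · rintro ⟨a, rfl⟩
    ext d
    simp [vertexCoboundary_apply]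

lemma Connected.finrank_coboundaries (hX : X.Connected) :
    Module.finrank ℝ X.coboundaries + 1 = X.numVertices := by
  have : Fintype (Set.range X.src) := Fintype.ofFinite _
  obtain ⟨d₀⟩ := X.nonemptyDart
  have hone : (fun _ => 1 : Set.range X.src → ℝ) ≠ 0 := fun h =>
    one_ne_zero (congrFun h ⟨_, d₀, rfl⟩)
  have hrank := LinearMap.finrank_range_add_finrank_ker X.vertexCoboundary
  rwa [range_vertexCoboundary, hX.ker_vertexCoboundary, finrank_span_singleton hone,
    Module.finrank_fintype_fun_eq_card, ← Nat.card_eq_fintype_card, Nat.card_coe_set_eq] at hrank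

end Cochains

end TriMap

lemma finrank_eq_sum_of_isProj {ι : Type*} [Fintype ι] [DecidableEq ι] {p : Submodule ℝ (ι → ℝ)}
    {f : (ι → ℝ) →ₗ[ℝ] (ι → ℝ)} (hf : LinearMap.IsProj p f) :
    (Module.finrank ℝ p : ℝ) = ∑ i, f (Pi.single i 1) i := by
  rw [← hf.trace, LinearMap.trace_eq_matrix_trace ℝ (Pi.basisFun ℝ ι)]
  simp [Matrix.trace]

namespace TriSurface

section Rank

variable {V : Type*} [AddCommGroup V] [Module ℝ V] (S : TriSurface V)

lemma finrank_antisymm : 2 * Module.finrank ℝ S.antisymm = Fintype.card S.Dart := by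
  let f : (S.Dart → ℝ) →ₗ[ℝ] (S.Dart → ℝ) :=
    (1 / 2 : ℝ) • (LinearMap.id - LinearMap.funLeft ℝ ℝ S.flip)
  have happly (φ : S.Dart → ℝ) (d : S.Dart) : f φ d = 1 / 2 * (φ d - φ (S.flip d)) := rfl
  have hf : LinearMap.IsProj S.antisymm f :=
    ⟨fun φ d => by simp only [happly, S.flip_flip]; ring,
      fun φ hφ => funext fun d => by rw [happly, hφ d]; ring⟩
  have hrank := finrank_eq_sum_of_isProj hf
  simp only [happly, Pi.single_eq_same, Pi.single_eq_of_ne (S.flip_ne _), Finset.sum_const,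
    Finset.card_univ, nsmul_eq_mul] at hrank
  have hrank' : (2 : ℝ) * Module.finrank ℝ S.antisymm = Fintype.card S.Dart := by
    rw [hrank]
    ring
  exact_mod_cast hrank'

lemma finrank_faceClosed : 3 * Module.finrank ℝ S.faceClosed = 2 * Fintype.card S.Dart := by
  let f : (S.Dart → ℝ) →ₗ[ℝ] (S.Dart → ℝ) := LinearMap.id - (1 / 3 : ℝ) •
    (LinearMap.id + LinearMap.funLeft ℝ ℝ S.next +
      LinearMap.funLeft ℝ ℝ fun d => S.next (S.next d))
  have happly (φ : S.Dart → ℝ) (d : S.Dart) :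
      f φ d = φ d - 1 / 3 * (φ d + φ (S.next d) + φ (S.next (S.next d))) := rfl
  have hf : LinearMap.IsProj S.faceClosed f :=
    ⟨fun φ d => by simp only [happly, S.next_next_next]; ring,
      fun φ hφ => funext fun d => by rw [happly, hφ d]; ring⟩
  have hrank := finrank_eq_sum_of_isProj hf
  simp only [happly, Pi.single_eq_same, Pi.single_eq_of_ne (S.next_ne _),
    Pi.single_eq_of_ne (S.next_next_ne _), Finset.sum_const, Finset.card_univ,
    nsmul_eq_mul] at hrank
  have hrank' : (3 : ℝ) * Module.finrank ℝ S.faceClosed = 2 * Fintype.card S.Dart := by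
    rw [hrank]
    ring
  exact_mod_cast hrank'

variable {S}

lemma finrank_cocycles (hS : S.Connected) :
    6 * Module.finrank ℝ S.cocycles = Fintype.card S.Dart + 6 := by
  have hsup := Submodule.finrank_sup_add_finrank_inf_eq S.antisymm S.faceClosed
  rw [hS.antisymm_sup_faceClosed, ← TriMap.cocycles] at hsup
  have hker := S.toTriMap.finrank_ker_dartSum
  have hantisymm := S.finrank_antisymm
  have hface := S.finrank_faceClosed
  lia

lemma finrank_cocycles_sub_finrank_coboundaries (hS : S.Connected) :
    6 * (Module.finrank ℝ S.cocycles : ℤ) - 6 * (Module.finrank ℝ S.coboundaries : ℤ) =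
      S.eulerDefect := by
  have hcocycles := finrank_cocycles hS
  have hcoboundaries := hS.finrank_coboundaries
  unfold TriMap.eulerDefect
  lia

end Rank

end TriSurface

/-! ### Flows and the cup product -/

lemma two_mul_card_add_finrank_ker_le {K W ι : Type*} [Field K] [AddCommGroup W] [Module K W]
    [FiniteDimensional K W] [Fintype ι] {B : LinearMap.BilinForm K W} (hB : B.IsRefl) {v : ι → W}
    (hv : ∀ i j, B (v i) (v j) = 0)
    (hker : ∀ c : ι → K, ∑ i, c i • v i ∈ LinearMap.ker B → c = 0) :
    2 * Fintype.card ι + Module.finrank K (LinearMap.ker B) ≤ Module.finrank K W := by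
  have hli : LinearIndependent K v := Fintype.linearIndependent_iff.2 fun c hc i =>
    congrFun (hker c (hc ▸ Submodule.zero_mem _)) i
  have hdisj : Disjoint (Submodule.span K (Set.range v)) (LinearMap.ker B) := by
    refine Submodule.disjoint_def.2 fun x hx hxB => ?_
    obtain ⟨c, rfl⟩ := (Submodule.mem_span_range_iff_exists_fun K).1 hx
    simp [hker c hxB]
  have hrank := Submodule.finrank_sup_add_finrank_inf_eq (Submodule.span K (Set.range v))
    (LinearMap.ker B)
  rw [hdisj.eq_bot, finrank_bot, finrank_span_eq_card hli] at hrank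
  have horth := LinearMap.BilinForm.finrank_add_finrank_orthogonal' (B := B)
    (Submodule.span K (Set.range v) ⊔ LinearMap.ker B)
  rw [inf_eq_right.2 le_sup_right] at horth
  have hle : Submodule.span K (Set.range v) ⊔ LinearMap.ker B ≤
      B.orthogonal (Submodule.span K (Set.range v) ⊔ LinearMap.ker B) := by
    have hright (x : W) (hx : x ∈ LinearMap.ker B) (y : W) : B y x = 0 :=
      hB _ _ (LinearMap.congr_fun hx y)
    have hspan : Submodule.span K (Set.range v) ≤
        B.orthogonal (Submodule.span K (Set.range v)) := by
      refine Submodule.span_le.2 ?_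
      rintro _ ⟨j, rfl⟩ x hx
      obtain ⟨c, rfl⟩ := (Submodule.mem_span_range_iff_exists_fun K).1 hx
      simp [hv]
    refine sup_le (fun x hx n hn => ?_) fun x hx y _ => hright x hx y
    obtain ⟨y, hy, z, hz, rfl⟩ := Submodule.mem_sup.1 hn
    have hyx : B y x = 0 := hspan hx y hy
    simp [hyx, LinearMap.mem_ker.1 hz]
  have := Submodule.finrank_mono hle
  lia

namespace TriMap

section Flow

variable {V : Type*} (X : TriMap V)

/-- A flow from the dart `a` to the dart `b` inside `A`: the signed numbers `s d` of moves from
`d` to `next d` and `q d` of moves from `d` to `flip d` made by a chain of darts of `A`. -/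
structure IsFlow (A : Set X.Dart) (a b : X.Dart) (s q : X.Dart → ℝ) : Prop where
  conservation (d : X.Dart) : s (X.next (X.next d)) - s d - (q d - q (X.flip d)) =
    (Pi.single b 1 : X.Dart → ℝ) d - (Pi.single a 1 : X.Dart → ℝ) d
  next_mem (d : X.Dart) : s d ≠ 0 → d ∈ A
  flip_mem (d : X.Dart) : q d ≠ 0 → d ∈ A

variable {X} {A : Set X.Dart} {a b c : X.Dart} {s q s' q' : X.Dart → ℝ}

namespace IsFlow

lemma trans (h : X.IsFlow A a b s q) (h' : X.IsFlow A b c s' q') :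
    X.IsFlow A a c (s + s') (q + q') where
  conservation d := by
    simp only [Pi.add_apply]
    linear_combination h.conservation d + h'.conservation d
  next_mem d hd := (Function.support_add s s' hd).elim (h.next_mem d) (h'.next_mem d)
  flip_mem d hd := (Function.support_add q q' hd).elim (h.flip_mem d) (h'.flip_mem d)

lemma symm (h : X.IsFlow A a b s q) : X.IsFlow A b a (-s) (-q) where
  conservation d := by
    simp only [Pi.neg_apply]
    linear_combination -h.conservation d
  next_mem d hd := h.next_mem d (by simpa using hd)
  flip_mem d hd := h.flip_mem d (by simpa using hd)

variable (X A a) in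
lemma zero : X.IsFlow A a a 0 0 := ⟨by simp, by simp, by simp⟩

lemma next (ha : a ∈ A) : X.IsFlow A a (X.next a) (Pi.single a 1) 0 where
  conservation d := by
    have hd : X.next (X.next d) = a ↔ d = X.next a :=
      ⟨fun h => by rw [← h, X.next_next_next], fun h => by rw [h, X.next_next_next]⟩
    simp [Pi.single_apply, hd]
  next_mem d hd := by rwa [of_not_not fun h => hd (Pi.single_eq_of_ne h _)]
  flip_mem d hd := (hd rfl).elim

lemma flip (ha : a ∈ A) : X.IsFlow A a (X.flip a) 0 (Pi.single a 1) where
  conservation d := by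
    have hd : X.flip d = a ↔ d = X.flip a :=
      ⟨fun h => by rw [← h, X.flip_flip], fun h => by rw [h, X.flip_flip]⟩
    simp [Pi.single_apply, hd]
  next_mem d hd := (hd rfl).elim
  flip_mem d hd := by rwa [of_not_not fun h => hd (Pi.single_eq_of_ne h _)]

lemma mono {B : Set X.Dart} (hAB : A ⊆ B) (h : X.IsFlow A a b s q) : X.IsFlow B a b s q :=
  ⟨h.conservation, fun d hd => hAB (h.next_mem d hd), fun d hd => hAB (h.flip_mem d hd)⟩

lemma sum_range {a : ℕ → X.Dart} {s q : ℕ → X.Dart → ℝ}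
    (h : ∀ j, X.IsFlow A (a j) (a (j + 1)) (s j) (q j)) (N : ℕ) :
    X.IsFlow A (a 0) (a N) (∑ j ∈ Finset.range N, s j) (∑ j ∈ Finset.range N, q j) := by
  induction N with
  | zero => exact .zero X A (a 0)
  | succ N ih =>
    rw [Finset.sum_range_succ, Finset.sum_range_succ]
    exact ih.trans (h N)

lemma sum_mul_sub (h : X.IsFlow A a b s q) {H : X.Dart → ℝ} (hH : ∀ d ∈ A, H (X.flip d) = H d) :
    ∑ d, s d * (H (X.next d) - H d) = H b - H a := by
  have hshift := X.sum_next fun d => s (X.next (X.next d)) * H d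
  have hswap := X.sum_flip fun d => q (X.flip d) * H d
  have hq : ∑ d, q d * H (X.flip d) = ∑ d, q d * H d := by
    refine Finset.sum_congr rfl fun d _ => ?_
    by_cases hd : q d = 0
    · simp only [hd, zero_mul]
    · rw [hH d (h.flip_mem d hd)]
  have hpair : ∑ d, (s (X.next (X.next d)) - s d - (q d - q (X.flip d))) * H d = H b - H a := by
    simp [h.conservation, sub_mul, Finset.sum_sub_distrib, Pi.single_apply]
  simp only [X.next_next_next, X.flip_flip] at hshift hswap
  simp only [sub_mul, Finset.sum_sub_distrib] at hpair
  simp only [mul_sub, Finset.sum_sub_distrib]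
  linarith

end IsFlow

lemma exists_isFlow
    (h : ReflTransGen (fun d e => d ∈ A ∧ (e = X.next d ∨ e = X.flip d)) a b) :
    ∃ s q, X.IsFlow A a b s q := by
  induction h with
  | refl => exact ⟨0, 0, .zero X A a⟩
  | tail _ hmove ih =>
    obtain ⟨s, q, h⟩ := ih
    obtain ⟨hmem, rfl | rfl⟩ := hmove
    · exact ⟨_, _, h.trans (.next hmem)⟩
    · exact ⟨_, _, h.trans (.flip hmem)⟩

lemma Connected.exists_potential (hX : X.Connected) {θ : X.Dart → ℝ}
    (hθ : ∀ a s q, X.IsFlow Set.univ a a s q → ∑ d, s d * θ d = 0) :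
    ∃ H : X.Dart → ℝ, (∀ d, H (X.next d) = H d + θ d) ∧ ∀ d, H (X.flip d) = H d := by
  obtain ⟨d₀⟩ := X.nonemptyDart
  have hex (d : X.Dart) : ∃ s q, X.IsFlow Set.univ d₀ d s q :=
    exists_isFlow (ReflTransGen.mono (fun _ _ h => ⟨trivial, h⟩) _ _ (hX d₀ d))
  choose s q hflow using hex
  refine ⟨fun d => ∑ e, s d e * θ e, fun d => ?_, fun d => ?_⟩
  · have hloop := hθ _ _ _ (((hflow d).trans (.next trivial)).trans (hflow (X.next d)).symm)
    simp only [Pi.add_apply, Pi.neg_apply, Pi.single_apply, add_mul, Finset.sum_add_distrib,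
      neg_mul, Finset.sum_neg_distrib, ite_mul, one_mul, zero_mul, Finset.sum_ite_eq',
      Finset.mem_univ, if_true] at hloop
    linarith
  · have hloop := hθ _ _ _ (((hflow d).trans (.flip trivial)).trans (hflow (X.flip d)).symm)
    simp only [add_zero, Pi.add_apply, Pi.neg_apply, add_mul, Finset.sum_add_distrib, neg_mul,
      Finset.sum_neg_distrib] at hloop
    linarith

end Flow

section CupForm

variable {V : Type*} (X : TriMap V)

/-- The intersection form on cochains: on cocycles it is three times the cup product evaluated
on the fundamental class. -/
def cupForm : LinearMap.BilinForm ℝ (X.Dart → ℝ) :=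
  LinearMap.mk₂ ℝ (fun φ ψ => ∑ d, ψ d * (φ (X.next (X.next d)) - φ (X.next d)))
    (fun φ φ' ψ => by
      rw [← Finset.sum_add_distrib]
      exact Finset.sum_congr rfl fun d _ => by simp only [Pi.add_apply]; ring)
    (fun r φ ψ => by
      rw [smul_eq_mul, Finset.mul_sum]
      exact Finset.sum_congr rfl fun d _ => by simp only [Pi.smul_apply, smul_eq_mul]; ring)
    (fun φ ψ ψ' => by
      rw [← Finset.sum_add_distrib]
      exact Finset.sum_congr rfl fun d _ => by simp only [Pi.add_apply]; ring)
    (fun r φ ψ => by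
      rw [smul_eq_mul, Finset.mul_sum]
      exact Finset.sum_congr rfl fun d _ => by simp only [Pi.smul_apply, smul_eq_mul]; ring)

/-- The cochain Poincaré dual to a closed flow, given by the function `s` counting its moves
inside faces. -/
def flowCochain (s : X.Dart → ℝ) (d : X.Dart) : ℝ := s (X.next (X.next d)) - s d

variable {X}

lemma cupForm_apply (φ ψ : X.Dart → ℝ) :
    X.cupForm φ ψ = ∑ d, ψ d * (φ (X.next (X.next d)) - φ (X.next d)) := rfl

lemma cupForm_swap (φ ψ : X.Dart → ℝ) : X.cupForm φ ψ = -X.cupForm ψ φ := by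
  have hφ := X.sum_next fun d => ψ d * φ (X.next (X.next d))
  have hψ := X.sum_next fun d => φ d * ψ (X.next (X.next d))
  simp only [X.next_next_next] at hφ hψ
  simp only [cupForm_apply, mul_sub, Finset.sum_sub_distrib]
  rw [← hφ, ← hψ, neg_sub]
  simp only [mul_comm]

lemma cupForm_self (φ : X.Dart → ℝ) : X.cupForm φ φ = 0 := by
  linarith [cupForm_swap φ φ]

lemma flowCochain_mem_cocycles {A : Set X.Dart} {a : X.Dart} {s q : X.Dart → ℝ}
    (h : X.IsFlow A a a s q) : X.flowCochain s ∈ X.cocycles := by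
  refine mem_cocycles.2 ⟨fun d => ?_, fun d => ?_⟩
  · have hd := h.conservation d
    have hflip := h.conservation (X.flip d)
    rw [X.flip_flip] at hflip
    simp only [flowCochain]
    linarith
  · simp only [flowCochain, X.next_next_next]
    ring

lemma cupForm_flowCochain {φ s : X.Dart → ℝ}
    (hφ : ∀ d, s d ≠ 0 → φ d + φ (X.next d) + φ (X.next (X.next d)) = 0) :
    X.cupForm φ (X.flowCochain s) = 3 * ∑ d, s d * (φ d + φ (X.next d)) := by
  have hshift := X.sum_next fun d =>
    s (X.next (X.next d)) * (φ (X.next (X.next d)) - φ (X.next d))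
  simp only [X.next_next_next] at hshift
  simp only [cupForm_apply, flowCochain, sub_mul, Finset.sum_sub_distrib]
  rw [← hshift, Finset.mul_sum, ← Finset.sum_sub_distrib]
  refine Finset.sum_congr rfl fun d _ => ?_
  by_cases hs : s d = 0
  · simp only [hs, zero_mul, mul_zero, sub_zero]
  · linear_combination (-2 * s d) * hφ d hs

lemma cupForm_coboundary {φ : X.Dart → ℝ} {h : V → ℝ}
    (hflip : ∀ d, h (X.src d) ≠ 0 → φ (X.rot d) = -φ (X.next (X.next d)))
    (hface : ∀ d, h (X.src d) ≠ 0 → φ d + φ (X.next d) + φ (X.next (X.next d)) = 0) :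
    X.cupForm φ (X.coboundary h) = 0 := by
  have hshift := X.sum_next fun d => h (X.src d) * (φ (X.next d) - φ d)
  have hrot : ∑ d, h (X.src d) * φ d = -∑ d, h (X.src d) * φ (X.next (X.next d)) := by
    rw [← Equiv.sum_comp X.rot, ← Finset.sum_neg_distrib]
    refine Finset.sum_congr rfl fun d _ => ?_
    rw [X.src_rot]
    by_cases hd : h (X.src d) = 0
    · simp only [hd, zero_mul, neg_zero]
    · rw [hflip d hd, mul_neg]
  calc X.cupForm φ (X.coboundary h)
      = ∑ d, h (X.src d) * (2 * φ (X.next d) - φ d - φ (X.next (X.next d))) := by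
        simp only [cupForm_apply, coboundary_apply, sub_mul, Finset.sum_sub_distrib, hshift]
        rw [← Finset.sum_sub_distrib]
        exact Finset.sum_congr rfl fun d _ => by ring
    _ = -3 * (∑ d, h (X.src d) * φ d + ∑ d, h (X.src d) * φ (X.next (X.next d))) := by
        rw [← Finset.sum_add_distrib, Finset.mul_sum]
        refine Finset.sum_congr rfl fun d _ => ?_
        by_cases hd : h (X.src d) = 0
        · simp only [hd, zero_mul, add_zero, mul_zero]
        · linear_combination (2 * h (X.src d)) * hface d hd
    _ = 0 := by rw [hrot]; ring

lemma cupForm_eq_zero_of_mem_coboundaries {φ ψ : X.Dart → ℝ} (hφ : φ ∈ X.cocycles)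
    (hψ : ψ ∈ X.coboundaries) : X.cupForm φ ψ = 0 := by
  obtain ⟨h, rfl⟩ := hψ
  exact cupForm_coboundary (fun d _ => (mem_cocycles.1 hφ).1 _)
    fun d _ => (mem_cocycles.1 hφ).2 d

end CupForm

end TriMap

namespace TriSurface

section CupForm

variable {V : Type*} [AddCommGroup V] [Module ℝ V] {S : TriSurface V}

lemma exists_comp_src_eq {α : Type*} [Nonempty α] {f : S.Dart → α}
    (hf : ∀ d, f (S.rot d) = f d) : ∃ h : V → α, ∀ d, h (S.src d) = f d := by
  have hcycle {d e : S.Dart} (hde : S.rot.SameCycle d e) : f d = f e := by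
    obtain ⟨i, rfl⟩ := hde
    induction i with
    | zero => rfl
    | succ i ih => rw [ih, add_comm, zpow_add, Equiv.Perm.mul_apply, zpow_one, hf]
    | pred i ih =>
      rw [ih, sub_eq_add_neg, add_comm, zpow_add, Equiv.Perm.mul_apply, zpow_neg_one,
        ← hf (S.rot⁻¹ _), ← Equiv.Perm.mul_apply, mul_inv_cancel, Equiv.Perm.one_apply]
  have hfactors : Function.FactorsThrough f S.src := fun d e h =>
    hcycle (S.rot_sameCycle_of_src_eq h)
  exact ⟨Function.extend S.src f fun _ => Classical.arbitrary α,
    fun d => hfactors.extend_apply _ d⟩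

/-- Poincaré duality: pairing with dual cocycles of closed flows detects the periods of `φ`. -/
lemma mem_coboundaries_of_cupForm_eq_zero (hS : S.Connected) {φ : S.Dart → ℝ}
    (hφ : φ ∈ S.cocycles) (hzero : ∀ ψ ∈ S.cocycles, S.cupForm φ ψ = 0) :
    φ ∈ S.coboundaries := by
  obtain ⟨hanti, hface⟩ := TriMap.mem_cocycles.1 hφ
  obtain ⟨H, hnext, hflip⟩ := hS.exists_potential (θ := fun d => (φ d + φ (S.next d)) / 2) <| by
    intro a s q hflow
    have hpair := hzero _ (TriMap.flowCochain_mem_cocycles hflow)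
    rw [TriMap.cupForm_flowCochain fun d _ => hface d] at hpair
    simp only [mul_div_assoc', ← Finset.sum_div]
    linarith
  -- `H` is the value of a primitive of `φ` at the midpoint of the edge of a dart.
  obtain ⟨h, hh⟩ := exists_comp_src_eq (f := fun d => H d - φ d / 2) fun d => by
    have hd := hnext (S.next (S.next d))
    rw [S.next_next_next] at hd
    simp only [S.rot_apply, hflip, hanti]
    linarith
  refine ⟨h, funext fun d => ?_⟩
  rw [TriMap.coboundary_apply, ← S.src_flip, hh, hh, hflip, hanti]
  ring

theorem twelve_mul_card_le_eulerDefect (hS : S.Connected) {ι : Type*} [Fintype ι]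
    {ψ : ι → S.Dart → ℝ} (hψ : ∀ i, ψ i ∈ S.cocycles) (hcup : ∀ i j, S.cupForm (ψ i) (ψ j) = 0)
    (hind : ∀ c : ι → ℝ, ∑ i, c i • ψ i ∈ S.coboundaries → c = 0) :
    12 * (Fintype.card ι : ℤ) ≤ S.eulerDefect := by
  let B : LinearMap.BilinForm ℝ S.cocycles := S.cupForm.restrict S.cocycles
  have hker : LinearMap.ker B = S.coboundaries.comap S.cocycles.subtype := by
    ext φ
    refine ⟨fun h => mem_coboundaries_of_cupForm_eq_zero hS φ.2 fun ψ hψ =>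
      LinearMap.congr_fun (LinearMap.mem_ker.1 h) ⟨ψ, hψ⟩, fun h => LinearMap.ext fun ψ => ?_⟩
    exact (TriMap.cupForm_swap _ _).trans
      (neg_eq_zero.2 (TriMap.cupForm_eq_zero_of_mem_coboundaries ψ.2 h))
  have hle : S.coboundaries ≤ S.cocycles := by
    rintro _ ⟨h, rfl⟩
    exact TriMap.coboundary_mem_cocycles h
  have hbound := two_mul_card_add_finrank_ker_le (B := B) (v := fun i => ⟨ψ i, hψ i⟩)
    (fun φ ψ h => (TriMap.cupForm_swap _ _).trans (neg_eq_zero.2 h)) hcup fun c hc => by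
      rw [hker] at hc
      exact hind c (by simpa using hc)
  rw [hker, (Submodule.comapSubtypeEquivOfLe hle).finrank_eq] at hbound
  have := finrank_cocycles_sub_finrank_coboundaries hS
  lia

end CupForm

end TriSurface

/-! ### Winding numbers -/

section Arg

open Complex Metric

variable {a b ζ : ℂ}

lemma re_div_pos_of_mem_ball (ha : a ∈ ball ζ ‖ζ‖) : 0 < (a / ζ).re := by
  have hζ : 0 < ‖ζ‖ := pos_of_mem_ball ha
  have hlt : ‖a / ζ - 1‖ < 1 := by
    rwa [div_sub_one (norm_pos_iff.1 hζ), norm_div, div_lt_one hζ, ← dist_eq_norm]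
  have hre := (abs_lt.1 ((abs_re_le_norm _).trans_lt hlt)).1
  rw [sub_re, one_re] at hre
  linarith

lemma arg_div_of_re_pos (ha : 0 < a.re) (hb : 0 < b.re) : (a / b).arg = a.arg - b.arg := by
  have harga := abs_lt.1 (abs_arg_lt_pi_div_two_iff.2 (Or.inl ha))
  have hargb := abs_lt.1 (abs_arg_lt_pi_div_two_iff.2 (Or.inl hb))
  have hne {z : ℂ} (hz : 0 < z.re) : z ≠ 0 := by
    rintro rfl
    exact hz.ne rfl
  have hinv : (b⁻¹).arg = -b.arg := by
    rw [arg_inv, if_neg]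
    linarith [Real.pi_pos]
  rw [div_eq_mul_inv, arg_mul (hne ha) (inv_ne_zero (hne hb)), hinv, sub_eq_add_neg]
  rw [hinv]
  constructor <;> linarith

lemma arg_div_eq_sub_of_mem_ball (ha : a ∈ ball ζ ‖ζ‖) (hb : b ∈ ball ζ ‖ζ‖) :
    (a / b).arg = (a / ζ).arg - (b / ζ).arg := by
  rw [← arg_div_of_re_pos (re_div_pos_of_mem_ball ha) (re_div_pos_of_mem_ball hb),
    div_div_div_cancel_right₀ (norm_pos_iff.1 (pos_of_mem_ball ha))]

lemma arg_div_sub_arg_div_of_mem_ball {η : ℂ} (hζ : a ∈ ball ζ ‖ζ‖) (hη : a ∈ ball η ‖η‖) :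
    (a / ζ).arg - (a / η).arg = (η / ζ).arg := by
  have ha : a ≠ 0 := by
    rintro rfl
    simp at hζ
  rw [← arg_div_of_re_pos (re_div_pos_of_mem_ball hζ) (re_div_pos_of_mem_ball hη),
    div_div_div_cancel_left' _ _ ha]

lemma dist_exp_mul_I_le (s t : ℝ) : dist (exp (s * I)) (exp (t * I)) ≤ |s - t| := by
  have hfactor : exp (s * I) - exp (t * I) = exp (t * I) * (exp (I * (s - t : ℝ)) - 1) := by
    rw [mul_sub, ← exp_add, mul_one]
    congr 2
    push_cast
    ring
  rw [dist_eq_norm, hfactor, norm_mul, norm_exp_ofReal_mul_I, one_mul]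
  exact Real.norm_exp_I_mul_ofReal_sub_one_le

end Arg

namespace TriMap

section Arg

variable {V : Type*} (X : TriMap V)

/-- The cochain measuring the variation of the argument of `F` along each dart. -/
noncomputable def argCochain (F : V → ℂ) (d : X.Dart) : ℝ :=
  (F (X.src (X.next d)) / F (X.src d)).arg

/-- The mean argument of `F` over the two endpoints of a dart, measured from `ζ`. -/
noncomputable def edgeArg (F : V → ℂ) (ζ : ℂ) (d : X.Dart) : ℝ :=
  ((F (X.src d) / ζ).arg + (F (X.src (X.next d)) / ζ).arg) / 2

variable {X}

lemma edgeArg_flip (F : V → ℂ) (ζ : ℂ) (d : X.Dart) :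
    X.edgeArg F ζ (X.flip d) = X.edgeArg F ζ d := by
  rw [edgeArg, edgeArg, X.src_flip, X.src_next_flip, add_comm]

variable [AddCommGroup V] [Module ℝ V] {F : V → ℂ} {ζ : ℂ} {d : X.Dart}

lemma src_next_mem_face (d : X.Dart) : X.src (X.next d) ∈ X.face d := by
  rw [← X.face_next]
  exact X.src_mem_face _

lemma argCochain_eq (h : Set.MapsTo F (X.face d) (Metric.ball ζ ‖ζ‖)) :
    X.argCochain F d = (F (X.src (X.next d)) / ζ).arg - (F (X.src d) / ζ).arg :=
  arg_div_eq_sub_of_mem_ball (h (src_next_mem_face d)) (h (X.src_mem_face d))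

lemma argCochain_flip (h : Set.MapsTo F (X.face d) (Metric.ball ζ ‖ζ‖)) :
    X.argCochain F (X.flip d) = -X.argCochain F d := by
  rw [argCochain_eq h, argCochain, X.src_flip, X.src_next_flip,
    arg_div_eq_sub_of_mem_ball (h (X.src_mem_face d)) (h (src_next_mem_face d)), neg_sub]

lemma argCochain_face (h : Set.MapsTo F (X.face d) (Metric.ball ζ ‖ζ‖)) :
    X.argCochain F d + X.argCochain F (X.next d) + X.argCochain F (X.next (X.next d)) = 0 := by
  rw [argCochain_eq h, argCochain_eq (d := X.next d) (by rwa [X.face_next]),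
    argCochain_eq (d := X.next (X.next d)) (by rwa [X.face_next, X.face_next]), X.next_next_next]
  ring

lemma edgeArg_next_sub (h : Set.MapsTo F (X.face d) (Metric.ball ζ ‖ζ‖)) :
    X.edgeArg F ζ (X.next d) - X.edgeArg F ζ d =
      (X.argCochain F d + X.argCochain F (X.next d)) / 2 := by
  rw [argCochain_eq h, argCochain_eq (d := X.next d) (by rwa [X.face_next]), edgeArg, edgeArg]
  ring

lemma edgeArg_sub_edgeArg {η : ℂ} (hζ : Set.MapsTo F (X.face d) (Metric.ball ζ ‖ζ‖))
    (hη : Set.MapsTo F (X.face d) (Metric.ball η ‖η‖)) :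
    X.edgeArg F ζ d - X.edgeArg F η d = (η / ζ).arg := by
  have hsrc := arg_div_sub_arg_div_of_mem_ball (hζ (X.src_mem_face d)) (hη (X.src_mem_face d))
  have htgt := arg_div_sub_arg_div_of_mem_ball (hζ (src_next_mem_face d))
    (hη (src_next_mem_face d))
  rw [edgeArg, edgeArg]
  linarith

lemma IsFlow.sum_mul_argCochain {A : Set X.Dart} {a b : X.Dart} {s q : X.Dart → ℝ}
    (h : X.IsFlow A a b s q) (hF : ∀ d ∈ A, Set.MapsTo F (X.face d) (Metric.ball ζ ‖ζ‖)) :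
    ∑ d, s d * (X.argCochain F d + X.argCochain F (X.next d)) =
      2 * (X.edgeArg F ζ b - X.edgeArg F ζ a) := by
  rw [← h.sum_mul_sub fun d _ => edgeArg_flip F ζ d, Finset.mul_sum]
  refine Finset.sum_congr rfl fun d _ => ?_
  by_cases hs : s d = 0
  · simp only [hs, zero_mul, mul_zero]
  · rw [edgeArg_next_sub (hF d (h.next_mem d hs))]
    ring

end Arg

section Meeting

variable {V : Type*} [AddCommGroup V] [Module ℝ V] (X : TriMap V)

/-- The darts whose faces meet `L`. -/
def dartsMeeting (L : Set V) : Set X.Dart := {d | (L ∩ X.face d).Nonempty}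

variable {X} {L L' : Set V}

lemma mem_dartsMeeting {d : X.Dart} : d ∈ X.dartsMeeting L ↔ (L ∩ X.face d).Nonempty := Iff.rfl

lemma dartsMeeting_mono (h : L ⊆ L') : X.dartsMeeting L ⊆ X.dartsMeeting L' :=
  fun _ hd => hd.mono (Set.inter_subset_inter_left _ h)

lemma next_mem_dartsMeeting {d : X.Dart} : X.next d ∈ X.dartsMeeting L ↔ d ∈ X.dartsMeeting L := by
  rw [mem_dartsMeeting, X.face_next, mem_dartsMeeting]

lemma IsFlow.mem_dartsMeeting_of_flowCochain_ne_zero {a b : X.Dart} {s q : X.Dart → ℝ}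
    (h : X.IsFlow (X.dartsMeeting L) a b s q) {d : X.Dart} (hd : X.flowCochain s d ≠ 0) :
    d ∈ X.dartsMeeting L := by
  by_cases hs : s d = 0
  · rw [flowCochain, hs, sub_zero] at hd
    exact next_mem_dartsMeeting.1 (next_mem_dartsMeeting.1 (h.next_mem _ hd))
  · exact h.next_mem _ hs

end Meeting

end TriMap

namespace TriSurface

section LoopCocycle

variable {V : Type*} [NormedAddCommGroup V] [NormedSpace ℝ V] {S : TriSurface V}

lemma exists_isFlow_of_isPreconnected {L : Set V} (hL : IsPreconnected L) (hLS : L ⊆ S.space)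
    {d e : S.Dart} (hd : d ∈ S.dartsMeeting L) (he : e ∈ S.dartsMeeting L) :
    ∃ s q, S.IsFlow (S.dartsMeeting L) d e s q := by
  refine TriMap.exists_isFlow (ReflTransGen.mono ?_ _ _
    (S.reflTransGen_stepIn_of_isPreconnected hL hLS hd he))
  rintro a b ⟨x, hx, hxa, hstep⟩
  exact ⟨⟨x, hx, hxa⟩, hstep.imp_right And.left⟩

/-- The image under `u` of the `j`-th interval of length `π / 4`. -/
def arc (u : ℝ → V) (j : ℕ) : Set V :=
  u '' Set.Icc (j * (Real.pi / 4)) ((j + 1 : ℕ) * (Real.pi / 4))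

/-- The eighth roots of unity, which cut the unit circle into eight arcs. -/
noncomputable def octant (j : ℕ) : ℂ := Complex.exp ((j * (Real.pi / 4) : ℝ) * Complex.I)

lemma norm_octant (j : ℕ) : ‖octant j‖ = 1 := Complex.norm_exp_ofReal_mul_I _

lemma octant_eight : octant 8 = octant 0 := by
  rw [octant, octant, Nat.cast_zero, zero_mul, Complex.ofReal_zero, zero_mul, Complex.exp_zero,
    ← Complex.exp_two_pi_mul_I]
  push_cast
  ring_nf

lemma arg_octant_succ_div (j : ℕ) : (octant (j + 1) / octant j).arg = Real.pi / 4 := by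
  rw [octant, octant, ← Complex.exp_sub, ← sub_mul, ← Complex.ofReal_sub, ← sub_mul,
    Nat.cast_add_one, add_sub_cancel_left, one_mul, Complex.arg_exp_mul_I, toIocMod_eq_self]
  constructor <;> linarith [Real.pi_pos]

variable {u : ℝ → V} {F : V → ℂ}

lemma mapsTo_ball_octant (hF : ∀ t : ℝ, F (u t) = Complex.exp (t * Complex.I))
    (hosc : ∀ d, ∀ x ∈ S.face d, ∀ y ∈ S.face d, dist (F x) (F y) < 1 / 8) {d : S.Dart}
    {j : ℕ} (hd : d ∈ S.dartsMeeting (arc u j)) :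
    Set.MapsTo F (S.face d) (Metric.ball (octant j) ‖octant j‖) := by
  obtain ⟨_, ⟨t, ht, rfl⟩, htd⟩ := hd
  intro x hx
  have hut : dist (F (u t)) (octant j) ≤ Real.pi / 4 := by
    rw [hF]
    refine (dist_exp_mul_I_le t _).trans ?_
    rw [abs_of_nonneg (sub_nonneg.2 ht.1), sub_le_iff_le_add']
    refine ht.2.trans_eq ?_
    push_cast
    ring
  rw [norm_octant, Metric.mem_ball]
  linarith [dist_triangle (F x) (F (u t)) (octant j), hosc d x hx _ htd, Real.pi_lt_d2]

lemma exists_isFlow_arc (hu : Continuous u) (huS : ∀ t, u t ∈ S.space)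
    (hper : u (2 * Real.pi) = u 0) :
    ∃ (a : ℕ → S.Dart) (s q : ℕ → S.Dart → ℝ), a 8 = a 0 ∧
      (∀ j, a j ∈ S.dartsMeeting (arc u j)) ∧ (∀ j, a (j + 1) ∈ S.dartsMeeting (arc u j)) ∧
      ∀ j, S.IsFlow (S.dartsMeeting (arc u j)) (a j) (a (j + 1)) (s j) (q j) := by
  choose pick hpick using fun x : S.space => S.mem_space.1 x.2
  let a (j : ℕ) : S.Dart := pick ⟨u (j * (Real.pi / 4)), huS _⟩
  have ha (j : ℕ) : u (j * (Real.pi / 4)) ∈ S.face (a j) := hpick ⟨_, huS _⟩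
  have hperiod : a 8 = a 0 := by
    simp only [a]
    congr 2
    convert hper using 2 <;> push_cast <;> ring
  have hle (j : ℕ) : j * (Real.pi / 4) ≤ (j + 1 : ℕ) * (Real.pi / 4) := by
    gcongr
    exact j.le_succ
  have hleft (j : ℕ) : a j ∈ S.dartsMeeting (arc u j) :=
    ⟨_, Set.mem_image_of_mem u ⟨le_rfl, hle j⟩, ha j⟩
  have hright (j : ℕ) : a (j + 1) ∈ S.dartsMeeting (arc u j) :=
    ⟨_, Set.mem_image_of_mem u ⟨hle j, le_rfl⟩, ha (j + 1)⟩
  have hflow (j : ℕ) := exists_isFlow_of_isPreconnected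
    (isPreconnected_Icc.image u hu.continuousOn) (Set.image_subset_iff.2 fun t _ => huS t)
    (hleft j) (hright j)
  choose s q hsq using hflow
  exact ⟨a, s, q, hperiod, hleft, hright, hsq⟩

/-- A loop around which `F` winds once is dual to a cocycle supported near it that detects this
winding. On each of the eight arcs of the loop `F` has a continuous argument, and the jumps
between consecutive determinations of the argument add up to `2π`. -/
lemma exists_mem_cocycles_cupForm_argCochain (hu : Continuous u) (huS : ∀ t, u t ∈ S.space)
    (hper : u (2 * Real.pi) = u 0) (hF : ∀ t : ℝ, F (u t) = Complex.exp (t * Complex.I))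
    (hosc : ∀ d, ∀ x ∈ S.face d, ∀ y ∈ S.face d, dist (F x) (F y) < 1 / 8) :
    ∃ ψ ∈ S.cocycles, (∀ d, ψ d ≠ 0 → d ∈ S.dartsMeeting (Set.range u)) ∧
      S.cupForm (S.argCochain F) ψ = 12 * Real.pi := by
  obtain ⟨a, s, q, hperiod, hleft, hright, hflow⟩ := exists_isFlow_arc hu huS hper
  have hloop := TriMap.IsFlow.sum_range (fun j => (hflow j).mono
    (TriMap.dartsMeeting_mono (Set.image_subset_range _ _))) 8
  rw [hperiod] at hloop
  refine ⟨_, TriMap.flowCochain_mem_cocycles hloop,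
    fun d hd => hloop.mem_dartsMeeting_of_flowCochain_ne_zero hd, ?_⟩
  have hclosed (d : S.Dart) (hd : (∑ j ∈ Finset.range 8, s j) d ≠ 0) :
      S.argCochain F d + S.argCochain F (S.next d) + S.argCochain F (S.next (S.next d)) = 0 := by
    rw [Finset.sum_apply] at hd
    obtain ⟨j, -, hj⟩ := Finset.exists_ne_zero_of_sum_ne_zero hd
    exact TriMap.argCochain_face (mapsTo_ball_octant hF hosc ((hflow j).next_mem d hj))
  have harc (j : ℕ) : ∑ d, s j d * (S.argCochain F d + S.argCochain F (S.next d)) =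
      2 * (S.edgeArg F (octant (j + 1)) (a (j + 1)) - S.edgeArg F (octant j) (a j) +
        Real.pi / 4) := by
    rw [(hflow j).sum_mul_argCochain fun d hd => mapsTo_ball_octant hF hosc hd]
    linarith [TriMap.edgeArg_sub_edgeArg (mapsTo_ball_octant hF hosc (hright j))
      (mapsTo_ball_octant hF hosc (hleft (j + 1))), arg_octant_succ_div j]
  have htelescope := Finset.sum_range_sub (fun j => S.edgeArg F (octant j) (a j)) 8
  rw [hperiod, octant_eight, sub_self] at htelescope
  simp only [TriMap.cupForm_flowCochain hclosed, Finset.sum_apply, Finset.sum_mul]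
  rw [Finset.sum_comm]
  simp only [harc, ← Finset.mul_sum, Finset.sum_add_distrib, htelescope, Finset.sum_const,
    Finset.card_range, nsmul_eq_mul]
  push_cast
  ring

end LoopCocycle

end TriSurface

/-! ### Disjoint circles on a surface -/

section Circle

lemma nonempty_sphere_homeomorph_circle :
    Nonempty (Metric.sphere (0 : EuclideanSpace ℝ (Fin 2)) 1 ≃ₜ Circle) := by
  refine ⟨Complex.orthonormalBasisOneI.repr.symm.toHomeomorph.subtype fun x => ?_⟩
  rw [mem_sphere_zero_iff_norm,
    ← LinearIsometryEquiv.norm_map Complex.orthonormalBasisOneI.repr.symm]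
  exact mem_sphere_zero_iff_norm.symm

lemma exists_loop_of_homeomorph {X : Type*} [TopologicalSpace X] [NormalSpace X] [T2Space X]
    {K : Set X} (h : Nonempty (K ≃ₜ Metric.sphere (0 : EuclideanSpace ℝ (Fin 2)) 1)) :
    ∃ (u : ℝ → X) (F : X → ℂ), Continuous u ∧ Continuous F ∧ Set.range u = K ∧
      u (2 * Real.pi) = u 0 ∧ ∀ t : ℝ, F (u t) = Complex.exp (t * Complex.I) := by
  obtain ⟨φ⟩ : Nonempty (K ≃ₜ Circle) :=
    h.elim fun φ => nonempty_sphere_homeomorph_circle.map φ.trans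
  have : CompactSpace K := φ.symm.compactSpace
  obtain ⟨F, hF⟩ := ContinuousMap.exists_restrict_eq
    (isCompact_iff_compactSpace.2 this).isClosed ⟨fun x => (φ x : ℂ), by fun_prop⟩
  refine ⟨fun t => φ.symm (Circle.exp t), F, by fun_prop, F.continuous, ?_, by simp, fun t => ?_⟩
  · have hsurj : Function.Surjective fun t => φ.symm (Circle.exp t) :=
      φ.symm.surjective.comp Circle.leftInverse_exp_arg.surjective
    exact (Set.range_comp _ _).trans (by rw [hsurj.range_eq, Set.image_univ, Subtype.range_coe])
  · simpa using DFunLike.congr_fun hF (φ.symm (Circle.exp t))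

end Circle

section Separation

variable {ι X : Type*}

lemma exists_isOpen_superset_pairwise_disjoint [Finite ι] [TopologicalSpace X] [NormalSpace X]
    {K W : ι → Set X} (hK : ∀ i, IsClosed (K i)) (hdisj : Pairwise (Function.onFun Disjoint K))
    (hW : ∀ i, IsOpen (W i)) (hKW : ∀ i, K i ⊆ W i) :
    ∃ Z : ι → Set X, (∀ i, IsOpen (Z i)) ∧ (∀ i, K i ⊆ Z i) ∧ (∀ i, Z i ⊆ W i) ∧
      Pairwise (Function.onFun Disjoint Z) := by
  obtain ⟨U, hU, hUdisj⟩ := Pairwise.exists_mem_filter_of_disjoint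
    (l := fun i => nhdsSet (K i)) fun i j hij =>
      disjoint_nhdsSet_nhdsSet (hK i) (hK j) (hdisj hij)
  exact ⟨fun i => interior (U i) ∩ W i, fun i => isOpen_interior.inter (hW i),
    fun i => Set.subset_inter (subset_interior_iff_mem_nhdsSet.2 (hU i)) (hKW i),
    fun i => Set.inter_subset_right, fun i j hij => (hUdisj hij).mono
      (Set.inter_subset_left.trans interior_subset) (Set.inter_subset_left.trans interior_subset)⟩

lemma exists_subset_of_isPreconnected_subset_iUnion [TopologicalSpace X] {Z : ι → Set X}
    (hZo : ∀ i, IsOpen (Z i)) (hZ : Pairwise (Function.onFun Disjoint Z)) {T : Set X}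
    (hT : IsPreconnected T) (hne : T.Nonempty) (hTZ : T ⊆ ⋃ i, Z i) : ∃ i, T ⊆ Z i := by
  obtain ⟨x, hx⟩ := hne
  obtain ⟨i, hi⟩ := Set.mem_iUnion.1 (hTZ hx)
  refine ⟨i, hT.subset_left_of_subset_union (hZo i) (isOpen_biUnion fun j (_ : j ≠ i) => hZo j)
    (Set.disjoint_iUnion₂_right.2 fun j hj => hZ (Ne.symm hj)) (fun y hy => ?_) ⟨x, hx, hi⟩⟩
  obtain ⟨j, hj⟩ := Set.mem_iUnion.1 (hTZ hy)
  by_cases hji : j = i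
  · exact .inl (hji ▸ hj)
  · exact .inr (Set.mem_iUnion₂.2 ⟨j, hji, hj⟩)

lemma exists_pos_forall_dist_lt_of_isCompact [Finite ι] {Y : Type*} [PseudoMetricSpace X]
    [PseudoMetricSpace Y] {C : Set X} (hC : IsCompact C) {F : ι → X → Y}
    (hF : ∀ i, Continuous (F i)) {η : ℝ} (hη : 0 < η) :
    ∃ δ > 0, ∀ i, ∀ x ∈ C, ∀ y ∈ C, dist x y < δ → dist (F i x) (F i y) < η := by
  have := Fintype.ofFinite ι
  obtain ⟨δ, hδ, h⟩ := Metric.uniformContinuousOn_iff.1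
    (hC.uniformContinuousOn_of_continuous (continuous_pi hF).continuousOn) η hη
  exact ⟨δ, hδ, fun i x hx y hy hxy => (dist_pi_lt_iff hη).1 (h x hx y hy hxy) i⟩

end Separation

namespace TriSurface

section Exhaustion

variable {V : Type*} [NormedAddCommGroup V] [NormedSpace ℝ V] (S : TriSurface V)

lemma locallyPathConnectedSpace_space : LocallyPathConnectedSpace S.space := by
  have (d : S.Dart) : LocallyPathConnectedSpace (S.face d) :=
    (S.convex_face d).locallyPathConnectedSpace
  have (d : S.Dart) : CompactSpace (S.face d) := isCompact_iff_compactSpace.1 (S.isCompact_face d)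
  let f : (Σ d, S.face d) → S.space := fun x => ⟨x.2.1, S.mem_space.2 ⟨x.1, x.2.2⟩⟩
  have hf : Continuous f :=
    continuous_sigma fun d => continuous_subtype_val.subtype_mk _
  have hsurj : Function.Surjective f := by
    rintro ⟨x, hx⟩
    obtain ⟨d, hd⟩ := S.mem_space.1 hx
    exact ⟨⟨d, x, hd⟩, rfl⟩
  exact (hf.isClosedMap.isQuotientMap hf hsurj).locallyPathConnectedSpace

variable {S} {K C L : Set V} {ε δ : ℝ}

lemma isPathConnected_space_diff (hK : IsClosed K) (hconn : IsConnected (S.space \ K)) :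
    IsPathConnected (S.space \ K) := by
  have := S.locallyPathConnectedSpace_space
  have hopen : IsOpen ((↑) ⁻¹' Kᶜ : Set S.space) :=
    hK.isOpen_compl.preimage continuous_subtype_val
  rw [Set.sdiff_eq, ← Subtype.image_preimage_coe] at hconn ⊢
  have hpre : IsConnected ((↑) ⁻¹' Kᶜ : Set S.space) :=
    ⟨hconn.1.of_image, Topology.IsInducing.subtypeVal.isPreconnected_image.1 hconn.2⟩
  exact (hopen.isConnected_iff_isPathConnected.1 hpre).image continuous_subtype_val

lemma MeshLE.face_subset_thickening (hmesh : S.MeshLE ε) (hε : ε < δ) {d : S.Dart}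
    (hd : d ∈ S.dartsMeeting L) : S.face d ⊆ Metric.thickening δ L := by
  obtain ⟨y, hyL, hyd⟩ := hd
  exact fun x hx => Metric.mem_thickening_iff.2 ⟨y, hyL, (hmesh.dist_le hx hyd).trans_lt hε⟩

lemma exists_isCompact_isPreconnected_subset_diff (hK : IsClosed K)
    (hconn : IsConnected (S.space \ K)) (hC : IsCompact C) (hCK : C ⊆ S.space \ K) :
    ∃ L, IsCompact L ∧ IsPreconnected L ∧ C ⊆ L ∧ L ⊆ S.space \ K := by
  have hpath := isPathConnected_space_diff hK hconn
  obtain ⟨x₀, hx₀⟩ := hconn.1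
  obtain ⟨δ, hδ, hthick⟩ := hC.exists_thickening_subset_open hK.isOpen_compl
    fun x hx => (hCK hx).2
  obtain ⟨S', hspace, -, hmesh⟩ := S.exists_meshLE (half_pos hδ)
  have hface (d : S'.dartsMeeting C) : S'.face d ⊆ S.space \ K := fun x hx =>
    ⟨hspace ▸ S'.mem_space.2 ⟨d, hx⟩,
      hthick (hmesh.face_subset_thickening (half_lt_self hδ) d.2 hx)⟩
  let γ (d : S'.dartsMeeting C) : Path x₀ (S'.src d) :=
    (hpath.joinedIn x₀ hx₀ _ (hface d (S'.src_mem_face d))).somePath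
  refine ⟨⋃ d : S'.dartsMeeting C, Set.range (γ d) ∪ S'.face d, ?_, ?_, fun x hx => ?_, ?_⟩
  · exact isCompact_iUnion fun d => (isCompact_range (γ d).continuous).union (S'.isCompact_face d)
  · exact isPreconnected_iUnion ⟨x₀, Set.mem_iInter.2 fun d => .inl (γ d).source_mem_range⟩
      fun d => (isPreconnected_range (γ d).continuous).union (S'.src d) (γ d).target_mem_range
        (S'.src_mem_face d) (S'.convex_face d).isPreconnected
  · obtain ⟨d, hd⟩ := S'.mem_space.1 (hspace ▸ (hCK hx).1)
    exact Set.mem_iUnion.2 ⟨⟨d, x, hx, hd⟩, .inr hd⟩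
  · exact Set.iUnion_subset fun d => Set.union_subset
      (Set.range_subset_iff.2 (JoinedIn.somePath_mem _)) (hface d)

end Exhaustion

section DisjointCircles

variable {V : Type*} [NormedAddCommGroup V] [NormedSpace ℝ V] {S : TriSurface V} {L : Set V}

lemma exists_forall_dartsMeeting_eq (hL : IsPreconnected L) (hLS : L ⊆ S.space) {h : V → ℝ}
    (hh : ∀ d ∈ S.dartsMeeting L, S.coboundary h d = 0) :
    ∃ c, ∀ d ∈ S.dartsMeeting L, h (S.src d) = c := by
  rcases (S.dartsMeeting L).eq_empty_or_nonempty with hempty | ⟨d₀, hd₀⟩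
  · exact ⟨0, by simp [hempty]⟩
  refine ⟨h (S.src d₀), fun d hd => ?_⟩
  have hsteps := S.reflTransGen_stepIn_of_isPreconnected hL hLS hd₀ hd
  clear hd
  induction hsteps with
  | refl => rfl
  | @tail a b _ hstep ih =>
    obtain ⟨x, hx, hxa, hstep⟩ := hstep
    have hzero := hh a ⟨x, hx, hxa⟩
    rw [TriMap.coboundary_apply, sub_eq_zero] at hzero
    rcases hstep with rfl | ⟨rfl, -⟩
    · rw [hzero, ih]
    · rw [S.src_flip, hzero, ih]

variable {ι : Type*} [Fintype ι] {Z : ι → Set V}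

/-- The potential of the sum is constant away from the supports, so it can be cut off outside
`Z i`. -/
lemma exists_coboundary_eq_smul (hL : IsPreconnected L) (hLS : L ⊆ S.space)
    (hZ : Pairwise (Function.onFun Disjoint Z))
    (hcover : ∀ d ∉ S.dartsMeeting L, ∃ j, S.face d ⊆ Z j) {ψ : ι → S.Dart → ℝ}
    (hψL : ∀ i, ∀ d ∈ S.dartsMeeting L, ψ i d = 0) (hψZ : ∀ i d, ψ i d ≠ 0 → S.face d ⊆ Z i)
    {c : ι → ℝ} (hc : ∑ i, c i • ψ i ∈ S.coboundaries) (i : ι) :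
    ∃ g : V → ℝ, S.coboundary g = c i • ψ i ∧ ∀ v, g v ≠ 0 → v ∈ Z i := by
  obtain ⟨h, hh⟩ := hc
  have hsum (d : S.Dart) : S.coboundary h d = ∑ j, c j * ψ j d := by
    simp only [hh, Finset.sum_apply, Pi.smul_apply, smul_eq_mul]
  obtain ⟨a, ha⟩ := exists_forall_dartsMeeting_eq hL hLS fun d hd =>
    (hsum d).trans (Finset.sum_eq_zero fun j _ => by rw [hψL j d hd, mul_zero])
  refine ⟨(Z i).indicator fun v => h v - a, funext fun d => ?_, fun v hv =>
    Set.mem_of_indicator_ne_zero hv⟩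
  have hoff (j : ι) (hj : S.face d ⊆ Z j) (k : ι) (hk : k ≠ j) : ψ k d = 0 := by
    by_contra hne
    exact Set.disjoint_left.1 (hZ hk) (hψZ k d hne (S.src_mem_face d)) (hj (S.src_mem_face d))
  rw [TriMap.coboundary_apply, Pi.smul_apply, smul_eq_mul]
  by_cases hd : d ∈ S.dartsMeeting L
  · have hvanish {e : S.Dart} (he : e ∈ S.dartsMeeting L) :
        (Z i).indicator (fun v => h v - a) (S.src e) = 0 := by
      rw [Set.indicator_apply_eq_zero, ha e he]
      exact fun _ => sub_self a
    rw [hvanish hd, hvanish (TriMap.next_mem_dartsMeeting.2 hd), hψL i d hd, mul_zero, sub_self]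
  · obtain ⟨j, hj⟩ := hcover d hd
    have hsrc := hj (S.src_mem_face d)
    have htgt := hj (TriMap.src_next_mem_face d)
    by_cases hij : i = j
    · subst hij
      rw [Set.indicator_of_mem hsrc, Set.indicator_of_mem htgt, sub_sub_sub_cancel_right,
        ← TriMap.coboundary_apply, hsum, Finset.sum_eq_single i
          (fun k _ hk => by rw [hoff i hj k hk, mul_zero])
          (fun hi => absurd (Finset.mem_univ i) hi)]
    · rw [Set.indicator_of_notMem (Set.disjoint_right.1 (hZ hij) hsrc),
        Set.indicator_of_notMem (Set.disjoint_right.1 (hZ hij) htgt), hoff j hj i hij, mul_zero,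
        sub_self]

/-- The inequality for a complex so fine that the circles `range (u i)` have pairwise disjoint
neighbourhoods `Z i` whose complement is filled by the faces meeting a connected set `L`. -/
lemma twelve_mul_card_le_eulerDefect_of_collars (hS : S.Connected) (hL : IsPreconnected L)
    (hLS : L ⊆ S.space) (hZ : Pairwise (Function.onFun Disjoint Z))
    (hcover : ∀ d ∉ S.dartsMeeting L, ∃ j, S.face d ⊆ Z j) {u : ι → ℝ → V} {F : ι → V → ℂ}
    (hu : ∀ i, Continuous (u i)) (huS : ∀ i t, u i t ∈ S.space)
    (hper : ∀ i, u i (2 * Real.pi) = u i 0)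
    (hF : ∀ i, ∀ t : ℝ, F i (u i t) = Complex.exp (t * Complex.I))
    (hosc : ∀ i d, ∀ x ∈ S.face d, ∀ y ∈ S.face d, dist (F i x) (F i y) < 1 / 8)
    (huL : ∀ i, ∀ d ∈ S.dartsMeeting (Set.range (u i)), d ∉ S.dartsMeeting L)
    (huZ : ∀ i t, u i t ∈ Z i) (hFZ : ∀ i, ∀ x ∈ Z i, 1 / 8 < ‖F i x‖) :
    12 * (Fintype.card ι : ℤ) ≤ S.eulerDefect := by
  choose ψ hψ hsupp hdual using fun i =>
    exists_mem_cocycles_cupForm_argCochain (hu i) (huS i) (hper i) (hF i) (hosc i)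
  have hψZ (i : ι) (d : S.Dart) (hd : ψ i d ≠ 0) : S.face d ⊆ Z i := by
    obtain ⟨_, ⟨t, rfl⟩, htd⟩ := hsupp i d hd
    obtain ⟨j, hj⟩ := hcover d (huL i d (hsupp i d hd))
    rwa [← hZ.eq (Set.not_disjoint_iff.2 ⟨_, huZ i t, hj htd⟩)] at hj
  refine twelve_mul_card_le_eulerDefect hS hψ (fun i j => ?_) fun c hc => funext fun i => ?_
  · rcases eq_or_ne i j with rfl | hij
    · exact TriMap.cupForm_self _
    have hzero {d : S.Dart} (hd : ψ j d ≠ 0) {e : S.Dart} (he : S.face e = S.face d) :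
        ψ i e = 0 := by
      by_contra hne
      exact Set.disjoint_left.1 (hZ hij) (hψZ i e hne (he ▸ S.src_mem_face d))
        (hψZ j d hd (S.src_mem_face d))
    refine Finset.sum_eq_zero fun d _ => mul_eq_zero.2 (or_iff_not_imp_left.2 fun hd => ?_)
    rw [hzero hd (e := S.next d) (by rw [S.face_next]),
      hzero hd (e := S.next (S.next d)) (by rw [S.face_next, S.face_next]), sub_zero]
  · obtain ⟨g, hg, hgZ⟩ := exists_coboundary_eq_smul hL hLS hZ hcover
      (fun i d hd => by_contra fun hne => huL i d (hsupp i d hne) hd) hψZ hc i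
    have hball {d : S.Dart} (hd : g (S.src d) ≠ 0) :
        Set.MapsTo (F i) (S.face d) (Metric.ball (F i (S.src d)) ‖F i (S.src d)‖) := fun x hx =>
      (hosc i d x hx _ (S.src_mem_face d)).trans (hFZ i _ (hgZ _ hd))
    have hcup : S.cupForm (S.argCochain (F i)) (S.coboundary g) = 0 :=
      TriMap.cupForm_coboundary
        (fun d hd => TriMap.argCochain_flip (by simpa only [S.face_next] using hball hd))
        fun d hd => TriMap.argCochain_face (hball hd)
    rw [hg, map_smul, hdual, smul_eq_mul] at hcup
    simpa [Real.pi_ne_zero] using hcup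

theorem twelve_mul_card_le_eulerDefect_of_disjoint_circles (hS : IsPreconnected S.space)
    {K : ι → Set V} (hKS : ∀ i, K i ⊆ S.space) (hdisj : Pairwise (Function.onFun Disjoint K))
    (hcircle : ∀ i, Nonempty (K i ≃ₜ Metric.sphere (0 : EuclideanSpace ℝ (Fin 2)) 1))
    (hconn : IsConnected (S.space \ ⋃ i, K i)) : 12 * (Fintype.card ι : ℤ) ≤ S.eulerDefect := by
  choose u F hu hF hrange hper hFu using fun i => exists_loop_of_homeomorph (hcircle i)
  have hK (i : ι) : IsCompact (K i) := by
    have := (hcircle i).some.symm.compactSpace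
    exact isCompact_iff_compactSpace.2 this
  have huK (i : ι) (t : ℝ) : u i t ∈ K i := hrange i ▸ Set.mem_range_self t
  have hFK (i : ι) (x : V) (hx : x ∈ K i) : 1 / 8 < ‖F i x‖ := by
    rw [← hrange i] at hx
    obtain ⟨t, rfl⟩ := hx
    rw [hFu, Complex.norm_exp_ofReal_mul_I]
    norm_num
  obtain ⟨Z, hZo, hKZ, hFZ, hZ⟩ := exists_isOpen_superset_pairwise_disjoint
    (fun i => (hK i).isClosed) hdisj (fun i => isOpen_lt continuous_const (hF i).norm) hFK
  have hKclosed : IsClosed (⋃ i, K i) := (isCompact_iUnion hK).isClosed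
  obtain ⟨L, hLc, hL, hCL, hLK⟩ := exists_isCompact_isPreconnected_subset_diff hKclosed hconn
    (S.isCompact_space.diff (isOpen_iUnion hZo))
    (Set.sdiff_subset_sdiff_right (Set.iUnion_mono hKZ))
  obtain ⟨δ, hδ, hthick⟩ := hLc.exists_thickening_subset_open hKclosed.isOpen_compl
    fun x hx => (hLK hx).2
  obtain ⟨η, hη, hosc⟩ := exists_pos_forall_dist_lt_of_isCompact S.isCompact_space hF
    (by norm_num : (0 : ℝ) < 1 / 8)
  obtain ⟨ε, hε, hεmin⟩ := exists_between (lt_min hδ hη)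
  obtain ⟨S', hspace, hdefect, hmesh⟩ := S.exists_meshLE hε
  rw [← hspace] at hS hKS hosc hLK hCL
  rw [← hdefect]
  have hface (d : S'.Dart) : S'.face d ⊆ S'.space := Set.subset_iUnion S'.face d
  refine twelve_mul_card_le_eulerDefect_of_collars (S'.connected_of_isPreconnected_space hS) hL
    (fun x hx => (hLK hx).1) hZ (fun d hd => exists_subset_of_isPreconnected_subset_iUnion hZo hZ
      (S'.convex_face d).isPreconnected ⟨_, S'.src_mem_face d⟩ fun x hx => ?_) hu
    (fun i t => hKS i (huK i t)) hper hFu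
    (fun i d x hx y hy => hosc i x (hface d hx) y (hface d hy)
      ((hmesh.dist_le hx hy).trans_lt (hεmin.trans_le (min_le_right _ _)))) ?_
    (fun i t => hKZ i (huK i t)) hFZ
  · by_contra hxZ
    exact hd ⟨x, hCL ⟨hface d hx, hxZ⟩, hx⟩
  · rintro i d ⟨_, ⟨t, rfl⟩, htd⟩ hdL
    exact hthick (hmesh.face_subset_thickening (hεmin.trans_le (min_le_left _ _)) hdL htd)
      (Set.mem_iUnion.2 ⟨i, huK i t⟩)

end DisjointCircles

end TriSurface

/-! ### Cycles of edges -/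

namespace TriMap

section Cycles

variable {V : Type*} (X : TriMap V)

/-- A closed path of darts, as a periodic sequence. -/
structure ClosedPath where
  dart : ℕ → X.Dart
  length : ℕ
  dart_add_length : ∀ t, dart (t + length) = dart t
  src_next_dart : ∀ t, X.src (X.next (dart t)) = X.src (dart (t + 1))

/-- A closed path visiting no vertex twice in a period and never following two sides of the same
face, neither of a face on its left nor of one on its right. -/
structure SimpleCycle extends X.ClosedPath where
  three_le_length : 3 ≤ length
  modEq_of_src_eq : ∀ {s t}, X.src (dart s) = X.src (dart t) → s ≡ t [MOD length]
  dart_succ_ne : ∀ t, dart (t + 1) ≠ X.next (dart t)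
  next_flip_dart_succ_ne : ∀ t, X.next (X.flip (dart (t + 1))) ≠ X.flip (dart t)

/-- The step to the next dart of the face, or across an edge whose dart is not in `T`. -/
def DualStep (T : Set X.Dart) (d e : X.Dart) : Prop := e = X.next d ∨ (e = X.flip d ∧ d ∉ T)

/-- Any two darts are joined without crossing an edge from a dart in `T`. -/
def DualConnected (T : Set X.Dart) : Prop := ∀ d e, ReflTransGen (X.DualStep T) d e

variable {X}

lemma DualStep.next {T : Set X.Dart} (d : X.Dart) : X.DualStep T d (X.next d) := .inl rfl

namespace ClosedPath

variable (c : X.ClosedPath)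

lemma dart_mod (t : ℕ) : c.dart (t % c.length) = c.dart t :=
  Function.Periodic.map_mod_nat c.dart_add_length t

lemma dart_eq_of_modEq {s t : ℕ} (h : s ≡ t [MOD c.length]) : c.dart s = c.dart t := by
  rw [← c.dart_mod s, h, c.dart_mod]

/-- The sum of a function on darts over one period. -/
def sum (φ : X.Dart → ℝ) : ℝ := ∑ t ∈ Finset.range c.length, φ (c.dart t)

lemma sum_shift (φ : X.Dart → ℝ) (i : ℕ) :
    ∑ u ∈ Finset.range c.length, φ (c.dart (i + u)) = c.sum φ := by
  induction i with
  | zero => simp only [zero_add, sum]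
  | succ i ih =>
    have hlast := Finset.sum_range_succ (fun u => φ (c.dart (i + u))) c.length
    rw [Finset.sum_range_succ', c.dart_add_length, add_zero] at hlast
    rw [← ih, ← add_right_cancel hlast]
    exact Finset.sum_congr rfl fun u _ => by rw [add_right_comm, add_assoc]

end ClosedPath

namespace SimpleCycle

variable (γ : X.SimpleCycle)

/-- The darts of a cycle, in both directions. -/
def darts : Set X.Dart := {d | ∃ t, d = γ.dart t ∨ d = X.flip (γ.dart t)}

/-- The vertices visited by a cycle. -/
def vertices : Set V := Set.range fun t => X.src (γ.dart t)

lemma dart_mem_darts (t : ℕ) : γ.dart t ∈ γ.darts := ⟨t, .inl rfl⟩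

lemma src_dart_mem_vertices (t : ℕ) : X.src (γ.dart t) ∈ γ.vertices := ⟨t, rfl⟩

lemma flip_mem_darts {d : X.Dart} (h : d ∈ γ.darts) : X.flip d ∈ γ.darts := by
  obtain ⟨t, rfl | rfl⟩ := h
  · exact ⟨t, .inr rfl⟩
  · exact ⟨t, .inl (X.flip_flip _)⟩

lemma flip_dart_mem_darts (t : ℕ) : X.flip (γ.dart t) ∈ γ.darts :=
  γ.flip_mem_darts (γ.dart_mem_darts t)

lemma src_mem_vertices {d : X.Dart} (h : d ∈ γ.darts) : X.src d ∈ γ.vertices := by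
  obtain ⟨t, rfl | rfl⟩ := h
  · exact ⟨t, rfl⟩
  · exact ⟨t + 1, by simp [γ.src_next_dart]⟩

lemma src_next_mem_vertices {d : X.Dart} (h : d ∈ γ.darts) : X.src (X.next d) ∈ γ.vertices := by
  rw [← X.src_flip]
  exact γ.src_mem_vertices (γ.flip_mem_darts h)

lemma exists_dart_succ_eq (t : ℕ) : ∃ s, γ.dart (s + 1) = γ.dart t := by
  have := γ.three_le_length
  exact ⟨t + (γ.length - 1), by rw [← γ.dart_add_length t]; congr 1; lia⟩

lemma dart_eq_of_src_eq {s t : ℕ} (h : X.src (γ.dart s) = X.src (γ.dart t)) :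
    γ.dart s = γ.dart t :=
  γ.dart_eq_of_modEq (γ.modEq_of_src_eq h)

lemma dart_eq_of_src_succ_eq {s t : ℕ} (h : X.src (γ.dart (s + 1)) = X.src (γ.dart (t + 1))) :
    γ.dart s = γ.dart t :=
  γ.dart_eq_of_modEq (Nat.ModEq.add_right_cancel' 1 (γ.modEq_of_src_eq h))

lemma dart_ne_flip_dart (s t : ℕ) : γ.dart s ≠ X.flip (γ.dart t) := by
  intro h
  have hsrc : X.src (γ.dart s) = X.src (γ.dart (t + 1)) := by
    rw [h, X.src_flip, γ.src_next_dart]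
  have htgt : X.src (γ.dart (s + 1)) = X.src (γ.dart t) := by
    rw [← γ.src_next_dart, h, X.src_next_flip]
  have hmod : t + 2 ≡ t + 0 [MOD γ.length] :=
    ((γ.modEq_of_src_eq hsrc).add_right 1).symm.trans (γ.modEq_of_src_eq htgt)
  have hdvd := Nat.modEq_zero_iff_dvd.1 (Nat.ModEq.add_left_cancel' t hmod)
  exact absurd (Nat.le_of_dvd two_pos hdvd) (not_le.2 γ.three_le_length)

lemma eq_or_eq_of_src_eq {d : X.Dart} (hd : d ∈ γ.darts) {t : ℕ}
    (h : X.src d = X.src (γ.dart (t + 1))) :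
    d = γ.dart (t + 1) ∨ d = X.flip (γ.dart t) := by
  obtain ⟨s, rfl | rfl⟩ := hd
  · exact .inl (γ.dart_eq_of_src_eq h)
  · rw [X.src_flip, γ.src_next_dart] at h
    exact .inr (by rw [γ.dart_eq_of_src_succ_eq h])

end SimpleCycle

end Cycles

namespace SimpleCycle

section Cycles

variable {V : Type*} [AddCommGroup V] [Module ℝ V] {S : TriSurface V} (γ : S.SimpleCycle)

lemma next_notMem_darts {d : S.Dart} (hd : d ∈ γ.darts) : S.next d ∉ γ.darts := by
  intro hnext
  obtain ⟨t, rfl | rfl⟩ := hd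
  · rcases γ.eq_or_eq_of_src_eq hnext (γ.src_next_dart t) with h | h
    · exact γ.dart_succ_ne t h.symm
    · exact S.src_next_next_ne (γ.dart t) (by rw [h, S.src_next_flip])
  · obtain ⟨s, hs⟩ := γ.exists_dart_succ_eq t
    rw [← hs] at hnext
    rcases γ.eq_or_eq_of_src_eq hnext (S.src_next_flip _) with h | h
    · exact S.src_next_next_ne (S.flip (γ.dart (s + 1))) (by rw [h, S.src_flip])
    · exact γ.next_flip_dart_succ_ne s h

/-- The darts followed by a cycle after subdivision. -/
noncomputable def subdivideDart (t : ℕ) : S.toTriMap.subdivide.Dart :=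
  if Even t then S.subdart (γ.dart (t / 2)) 0 else S.subdart (S.next (γ.dart (t / 2))) 2

lemma subdivideDart_two_mul (t : ℕ) : γ.subdivideDart (2 * t) = S.subdart (γ.dart t) 0 := by
  simp [subdivideDart]

lemma subdivideDart_two_mul_add_one (t : ℕ) :
    γ.subdivideDart (2 * t + 1) = S.subdart (S.next (γ.dart t)) 2 := by
  rw [subdivideDart, if_neg (by simp), show (2 * t + 1) / 2 = t by lia]

lemma modEq_of_src_subdivideDart_eq {s t : ℕ}
    (h : S.toTriMap.subdivide.src (γ.subdivideDart s) =
      S.toTriMap.subdivide.src (γ.subdivideDart t)) : s ≡ t [MOD 2 * γ.length] := by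
  obtain ⟨s, rfl | rfl⟩ := Nat.even_or_odd' s <;> obtain ⟨t, rfl | rfl⟩ := Nat.even_or_odd' t <;>
    simp only [γ.subdivideDart_two_mul, γ.subdivideDart_two_mul_add_one, src_subdart_zero,
      src_subdart_two, S.next_next_next] at h
  · exact (γ.modEq_of_src_eq h).mul_left' 2
  · exact absurd h.symm (S.mid_ne_src _ _)
  · exact absurd h (S.mid_ne_src _ _)
  · rcases S.mid_eq_mid_iff.1 h with h | h
    · exact ((γ.modEq_of_src_eq (congrArg S.src h)).mul_left' 2).add_right 1
    · exact absurd h (γ.dart_ne_flip_dart _ _)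

/-- A cycle as a cycle of the subdivision. -/
noncomputable def subdivide : S.toTriMap.subdivide.SimpleCycle where
  dart := γ.subdivideDart
  length := 2 * γ.length
  dart_add_length t := by
    obtain ⟨t, rfl | rfl⟩ := Nat.even_or_odd' t
    · rw [← mul_add, γ.subdivideDart_two_mul, γ.subdivideDart_two_mul, γ.dart_add_length]
    · rw [add_right_comm, ← mul_add, γ.subdivideDart_two_mul_add_one,
        γ.subdivideDart_two_mul_add_one, γ.dart_add_length]
  src_next_dart t := by
    obtain ⟨t, rfl | rfl⟩ := Nat.even_or_odd' t
    · simp [γ.subdivideDart_two_mul, γ.subdivideDart_two_mul_add_one]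
    · simp [show 2 * t + 1 + 1 = 2 * (t + 1) by ring, γ.subdivideDart_two_mul,
        γ.subdivideDart_two_mul_add_one, γ.src_next_dart]
  three_le_length := by
    have := γ.three_le_length
    lia
  modEq_of_src_eq := γ.modEq_of_src_subdivideDart_eq
  dart_succ_ne t := by
    obtain ⟨t, rfl | rfl⟩ := Nat.even_or_odd' t
    · simp [γ.subdivideDart_two_mul, γ.subdivideDart_two_mul_add_one]
    · have := γ.dart_succ_ne t
      simpa [show 2 * t + 1 + 1 = 2 * (t + 1) by ring, γ.subdivideDart_two_mul,
        γ.subdivideDart_two_mul_add_one]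
  next_flip_dart_succ_ne t := by
    obtain ⟨t, rfl | rfl⟩ := Nat.even_or_odd' t
    · simp [γ.subdivideDart_two_mul, γ.subdivideDart_two_mul_add_one]
    · have := γ.next_flip_dart_succ_ne t
      simpa [show 2 * t + 1 + 1 = 2 * (t + 1) by ring, γ.subdivideDart_two_mul,
        γ.subdivideDart_two_mul_add_one]

lemma subdivide_dart_two_mul (t : ℕ) : γ.subdivide.dart (2 * t) = S.subdart (γ.dart t) 0 :=
  γ.subdivideDart_two_mul t

lemma subdivide_dart_two_mul_add_one (t : ℕ) :
    γ.subdivide.dart (2 * t + 1) = S.subdart (S.next (γ.dart t)) 2 :=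
  γ.subdivideDart_two_mul_add_one t

lemma subdart_mem_darts_subdivide {d : S.Dart} {i : Fin 4} :
    S.subdart d i ∈ γ.subdivide.darts ↔
      i = 0 ∧ d ∈ γ.darts ∨ i = 2 ∧ S.next (S.next d) ∈ γ.darts := by
  have hzero {d : S.Dart} (hd : d ∈ γ.darts) : S.subdart d 0 ∈ γ.subdivide.darts := by
    obtain ⟨t, rfl | rfl⟩ := hd
    · exact ⟨2 * t, .inl (γ.subdivide_dart_two_mul t).symm⟩
    · exact ⟨2 * t + 1, .inr (by simp [γ.subdivide_dart_two_mul_add_one])⟩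
  constructor
  · rintro ⟨s, h⟩
    obtain ⟨t, rfl | rfl⟩ := Nat.even_or_odd' s <;>
      simp only [γ.subdivide_dart_two_mul, γ.subdivide_dart_two_mul_add_one, flip_subdart_zero,
        flip_subdart_two, subdart_inj, S.next_next_next] at h
    · obtain ⟨rfl, rfl⟩ | ⟨rfl, rfl⟩ := h
      · exact .inl ⟨rfl, γ.dart_mem_darts t⟩
      · exact .inr ⟨rfl, by simpa using γ.flip_dart_mem_darts t⟩
    · obtain ⟨rfl, rfl⟩ | ⟨rfl, rfl⟩ := h
      · exact .inr ⟨rfl, by simpa using γ.dart_mem_darts t⟩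
      · exact .inl ⟨rfl, γ.flip_dart_mem_darts t⟩
  · rintro (⟨rfl, hd⟩ | ⟨rfl, hd⟩)
    · exact hzero hd
    · simpa using γ.subdivide.flip_mem_darts (hzero (γ.flip_mem_darts hd))

lemma mem_darts_of_mid_mem_vertices {d : S.Dart} (h : S.mid d ∈ γ.subdivide.vertices) :
    d ∈ γ.darts := by
  obtain ⟨s, h : S.toTriMap.subdivide.src (γ.subdivide.dart s) = S.mid d⟩ := h
  obtain ⟨t, rfl | rfl⟩ := Nat.even_or_odd' s
  · rw [γ.subdivide_dart_two_mul, src_subdart_zero] at h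
    exact absurd h.symm (S.mid_ne_src _ _)
  · rw [γ.subdivide_dart_two_mul_add_one, src_subdart_two, S.next_next_next,
      S.mid_eq_mid_iff] at h
    obtain h | h := h
    · exact h ▸ γ.dart_mem_darts t
    · exact ⟨t, .inr (by rw [h, S.flip_flip])⟩

end Cycles

end SimpleCycle

section DualConnected

variable {V : Type*} [AddCommGroup V] [Module ℝ V] {X : TriMap V} {T : Set X.Dart}
  {T' : Set X.subdivide.Dart}

lemma reflTransGen_dualStep_subdart_three (d : X.Dart) (i : Fin 4) (h : X.subdart d 1 ∉ T') :
    ReflTransGen (X.subdivide.DualStep T') (X.subdart d i) (X.subdart d 3) := by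
  have hone : X.subdivide.DualStep T' (X.subdart d 1) (X.subdart d 3) := .inr ⟨rfl, h⟩
  fin_cases i
  · exact .head (.next (X.subdart d 0)) (.single hone)
  · exact .single hone
  · exact .head (.next (X.subdart d 2)) (.head (.next (X.subdart d 0)) (.single hone))
  · exact .refl

lemma reflTransGen_dualStep_subdart (d : X.Dart) (i : Fin 4) (h : X.subdart d 3 ∉ T') :
    ReflTransGen (X.subdivide.DualStep T') (X.subdart d 3) (X.subdart d i) := by
  have hthree : X.subdivide.DualStep T' (X.subdart d 3) (X.subdart d 1) := .inr ⟨rfl, h⟩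
  fin_cases i
  · exact .head hthree (.head (.next (X.subdart d 1)) (.single (.next (X.subdart d 2))))
  · exact .single hthree
  · exact .head hthree (.single (.next (X.subdart d 1)))
  · exact .refl

lemma DualConnected.subdivide (h : X.DualConnected T)
    (hT : ∀ d i, X.subdart d i ∈ T' → i = 0 ∧ d ∈ T ∨ i = 2 ∧ X.next (X.next d) ∈ T) :
    X.subdivide.DualConnected T' := by
  have hone (d : X.Dart) : X.subdart d 1 ∉ T' := fun hd => by simpa using hT d 1 hd
  have hthree (d : X.Dart) : X.subdart d 3 ∉ T' := fun hd => by simpa using hT d 3 hd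
  have hcenter (d e : X.Dart) :
      ReflTransGen (X.subdivide.DualStep T') (X.subdart d 3) (X.subdart e 3) := by
    induction h d e with
    | refl => exact .refl
    | @tail b _ _ hstep ih =>
      refine ih.trans ?_
      obtain rfl | ⟨rfl, hb⟩ := hstep
      · exact .single (.next (X.subdart b 3))
      · have hcross : X.subdivide.DualStep T' (X.subdart b 0)
            (X.subdart (X.next (X.flip b)) 2) :=
          .inr ⟨rfl, fun hb' => by simpa [hb] using hT b 0 hb'⟩
        have hturn : ReflTransGen (X.subdivide.DualStep T')
            (X.subdart (X.next (X.flip b)) 3) (X.subdart (X.flip b) 3) :=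
          .head (.next _) (.single (.inl (by simp)))
        exact ((reflTransGen_dualStep_subdart b 0 (hthree b)).tail hcross).trans
          ((reflTransGen_dualStep_subdart_three _ 2 (hone _)).trans hturn)
  rintro ⟨d, i⟩ ⟨e, j⟩
  exact ((reflTransGen_dualStep_subdart_three d i (hone d)).trans (hcenter d e)).trans
    (reflTransGen_dualStep_subdart e j (hthree e))

end DualConnected

section CycleSystem

variable {V : Type*}

/-- Cycles with pairwise disjoint vertices that do not separate the faces. -/
structure CycleSystem (X : TriMap V) (ι : Type*) where
  cycle : ι → X.SimpleCycle
  disjoint_vertices : Pairwise (Function.onFun Disjoint fun i => (cycle i).vertices)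
  dualConnected : X.DualConnected (⋃ i, (cycle i).darts)

/-- The darts with both ends in `U`. -/
def dartsIn (X : TriMap V) (U : Set V) : Set X.Dart := {d | X.src d ∈ U ∧ X.src (X.next d) ∈ U}

lemma flip_mem_dartsIn {X : TriMap V} {U : Set V} {d : X.Dart} (h : d ∈ X.dartsIn U) :
    X.flip d ∈ X.dartsIn U := by
  simpa [dartsIn, and_comm] using h

end CycleSystem

namespace CycleSystem

section CycleSystem

variable {V ι : Type*} {X : TriMap V} (F : X.CycleSystem ι)

/-- The darts of all the cycles, in both directions. -/
def darts : Set X.Dart := ⋃ i, (F.cycle i).darts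

/-- The vertices of all the cycles. -/
def vertices : Set V := ⋃ i, (F.cycle i).vertices

/-- Every edge joining two vertices of the cycles belongs to one of them. -/
def IsInduced : Prop := X.dartsIn F.vertices ⊆ F.darts

lemma mem_darts {d : X.Dart} : d ∈ F.darts ↔ ∃ i, d ∈ (F.cycle i).darts := Set.mem_iUnion

lemma mem_vertices {x : V} : x ∈ F.vertices ↔ ∃ i, x ∈ (F.cycle i).vertices := Set.mem_iUnion

lemma dart_mem_darts (i : ι) (t : ℕ) : (F.cycle i).dart t ∈ F.darts :=
  F.mem_darts.2 ⟨i, (F.cycle i).dart_mem_darts t⟩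

lemma flip_mem_darts {d : X.Dart} (h : d ∈ F.darts) : X.flip d ∈ F.darts := by
  obtain ⟨i, hi⟩ := F.mem_darts.1 h
  exact F.mem_darts.2 ⟨i, (F.cycle i).flip_mem_darts hi⟩

lemma src_mem_vertices {d : X.Dart} (h : d ∈ F.darts) : X.src d ∈ F.vertices := by
  obtain ⟨i, hi⟩ := F.mem_darts.1 h
  exact F.mem_vertices.2 ⟨i, (F.cycle i).src_mem_vertices hi⟩

lemma index_eq {x : V} {i j : ι} (hi : x ∈ (F.cycle i).vertices)
    (hj : x ∈ (F.cycle j).vertices) : i = j := by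
  by_contra h
  exact Set.disjoint_left.1 (F.disjoint_vertices h) hi hj

lemma mem_darts_cycle {d : X.Dart} (h : d ∈ F.darts) {i : ι}
    (hi : X.src d ∈ (F.cycle i).vertices) : d ∈ (F.cycle i).darts := by
  obtain ⟨j, hj⟩ := F.mem_darts.1 h
  rwa [F.index_eq hi ((F.cycle j).src_mem_vertices hj)]

end CycleSystem

section Subdivision

variable {V ι : Type*} [AddCommGroup V] [Module ℝ V] {S : TriSurface V} (F : S.CycleSystem ι)

lemma next_notMem_darts {d : S.Dart} (hd : d ∈ F.darts) : S.next d ∉ F.darts := by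
  intro hnext
  obtain ⟨i, hi⟩ := F.mem_darts.1 hd
  exact (F.cycle i).next_notMem_darts hi
    (F.mem_darts_cycle hnext ((F.cycle i).src_next_mem_vertices hi))

lemma disjoint_vertices_subdivide {i j : ι} (hij : i ≠ j) :
    Disjoint (F.cycle i).subdivide.vertices (F.cycle j).subdivide.vertices := by
  rw [Set.disjoint_left]
  rintro _ ⟨s, rfl⟩ hj
  refine hij ?_
  obtain ⟨s, rfl | rfl⟩ := Nat.even_or_odd' s
  · obtain ⟨t, ht⟩ := hj
    obtain ⟨t, rfl | rfl⟩ := Nat.even_or_odd' t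
    · simp only [SimpleCycle.subdivide_dart_two_mul, src_subdart_zero] at ht
      exact F.index_eq ⟨s, rfl⟩ ⟨t, ht⟩
    · simp only [SimpleCycle.subdivide_dart_two_mul, SimpleCycle.subdivide_dart_two_mul_add_one,
        src_subdart_zero, src_subdart_two] at ht
      exact absurd ht (S.mid_ne_src _ _)
  · simp only [SimpleCycle.subdivide_dart_two_mul_add_one, src_subdart_two,
      S.next_next_next] at hj
    have hmem := (F.cycle j).mem_darts_of_mid_mem_vertices hj
    exact F.index_eq ⟨s, rfl⟩ ((F.cycle j).src_mem_vertices hmem)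

/-- The cycles of a system as cycles of the subdivision. -/
noncomputable def subdivide : S.toTriMap.subdivide.CycleSystem ι where
  cycle i := (F.cycle i).subdivide
  disjoint_vertices _ _ hij := F.disjoint_vertices_subdivide hij
  dualConnected := F.dualConnected.subdivide fun d i h => by
    obtain ⟨j, hj⟩ := Set.mem_iUnion.1 h
    exact ((F.cycle j).subdart_mem_darts_subdivide.1 hj).imp
      (And.imp_right fun h => Set.mem_iUnion.2 ⟨j, h⟩)
      (And.imp_right fun h => Set.mem_iUnion.2 ⟨j, h⟩)

lemma isInduced_subdivide : F.subdivide.IsInduced := by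
  have hmid {d : S.Dart} (h : S.mid d ∈ F.subdivide.vertices) :
      ∃ i, d ∈ (F.cycle i).darts := by
    obtain ⟨i, hi⟩ := F.subdivide.mem_vertices.1 h
    exact ⟨i, (F.cycle i).mem_darts_of_mid_mem_vertices hi⟩
  have hcorner {d : S.Dart} (h : S.mid d ∈ F.subdivide.vertices)
      (h' : S.mid (S.next (S.next d)) ∈ F.subdivide.vertices) : False := by
    refine F.next_notMem_darts (F.mem_darts.2 (hmid h')) ?_
    rw [S.next_next_next]
    exact F.mem_darts.2 (hmid h)
  rintro ⟨d, j⟩ ⟨hsrc, htgt⟩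
  change S.subdart d j ∈ _
  fin_cases j
  · obtain ⟨i, hi⟩ := hmid (d := d) htgt
    exact F.subdivide.mem_darts.2 ⟨i, (F.cycle i).subdart_mem_darts_subdivide.2 (.inl ⟨rfl, hi⟩)⟩
  · exact (hcorner hsrc htgt).elim
  · obtain ⟨i, hi⟩ := hmid hsrc
    exact F.subdivide.mem_darts.2 ⟨i, (F.cycle i).subdart_mem_darts_subdivide.2 (.inr ⟨rfl, hi⟩)⟩
  · refine (hcorner (d := d) ?_ hsrc).elim
    change S.mid (S.next (S.next (S.next d))) ∈ _ at htgt
    rwa [S.next_next_next] at htgt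

end Subdivision

end CycleSystem

end TriMap

/-! ### Shortest closed walks -/

namespace TriMap

section Walk

variable {V : Type*} (X : TriMap V)

/-- `X.WalkSum U φ x y s k` means that some walk from `x` to `y` along `k` darts with both ends
in `U` has `φ`-sum `s`. -/
inductive WalkSum (U : Set V) (φ : X.Dart → ℝ) : V → V → ℝ → ℕ → Prop
  | nil (x : V) : WalkSum U φ x x 0 0
  | cons (d : X.Dart) {y : V} {s : ℝ} {k : ℕ} (hd : d ∈ X.dartsIn U)
      (h : WalkSum U φ (X.src (X.next d)) y s k) : WalkSum U φ (X.src d) y (φ d + s) (k + 1)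

variable {X} {U : Set V} {φ : X.Dart → ℝ}

lemma WalkSum.single {d : X.Dart} (hd : d ∈ X.dartsIn U) :
    X.WalkSum U φ (X.src d) (X.src (X.next d)) (φ d) 1 := by
  simpa using WalkSum.cons d hd (.nil _)

lemma WalkSum.trans {x y z : V} {s t : ℝ} {k l : ℕ} (h : X.WalkSum U φ x y s k)
    (h' : X.WalkSum U φ y z t l) : X.WalkSum U φ x z (s + t) (k + l) := by
  induction h with
  | nil x => simpa using h'
  | @cons d _ _ k hd _ ih =>
    rw [add_assoc, Nat.add_right_comm k 1 l]
    exact .cons d hd (ih h')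

lemma WalkSum.symm (hφ : φ ∈ X.antisymm) {x y : V} {s : ℝ} {k : ℕ} (h : X.WalkSum U φ x y s k) :
    X.WalkSum U φ y x (-s) k := by
  induction h with
  | nil x => simpa using WalkSum.nil x
  | cons d hd _ ih =>
    have hback := WalkSum.single (φ := φ) (flip_mem_dartsIn hd)
    rw [X.src_flip, X.src_next_flip, hφ d] at hback
    simpa only [neg_add_rev] using ih.trans hback

lemma exists_coboundary_eqOn_dartsIn (hφ : φ ∈ X.antisymm)
    (hclosed : ∀ x s k, X.WalkSum U φ x x s k → s = 0) :
    ∃ h : V → ℝ, Set.EqOn (X.coboundary h) φ (X.dartsIn U) := by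
  let joined : Setoid V :=
    ⟨fun x y => ∃ s k, X.WalkSum U φ x y s k, fun x => ⟨0, 0, .nil x⟩,
      fun ⟨s, k, h⟩ => ⟨-s, k, h.symm hφ⟩,
      fun ⟨s, k, h⟩ ⟨t, l, h'⟩ => ⟨s + t, k + l, h.trans h'⟩⟩
  let base (x : V) : V := (Quotient.mk joined x).out
  have hbase (x : V) : ∃ s k, X.WalkSum U φ (base x) x s k := Quotient.mk_out (s := joined) x
  choose h k hk using hbase
  refine ⟨h, fun d hd => ?_⟩
  have hstep := WalkSum.single (φ := φ) hd
  have heq : base (X.src d) = base (X.src (X.next d)) :=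
    congrArg Quotient.out (Quotient.sound (s := joined) ⟨_, _, hstep⟩)
  have hloop := ((hk (X.src d)).trans hstep).trans ((hk (X.src (X.next d))).symm hφ)
  rw [heq] at hloop
  linarith [hclosed _ _ _ hloop, X.coboundary_apply h d]

lemma WalkSum.exists_seq {x y : V} {s : ℝ} {k : ℕ} (h : X.WalkSum U φ x y s k) :
    ∃ (c : ℕ → X.Dart) (v : ℕ → V), v 0 = x ∧ v k = y ∧ s = ∑ t ∈ Finset.range k, φ (c t) ∧
      ∀ t < k, c t ∈ X.dartsIn U ∧ X.src (c t) = v t ∧ X.src (X.next (c t)) = v (t + 1) := by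
  induction h with
  | nil x => exact ⟨fun _ => X.nonemptyDart.some, fun _ => x, rfl, rfl, by simp, by simp⟩
  | cons d hd _ ih =>
    obtain ⟨c, v, hfirst, hlast, hsum, hc⟩ := ih
    refine ⟨fun t => Nat.casesOn t d c, fun t => Nat.casesOn t (X.src d) v, rfl, hlast, ?_, ?_⟩
    · rw [hsum, Finset.sum_range_succ', add_comm]
      rfl
    · rintro (_ | t) ht
      · exact ⟨hd, rfl, hfirst.symm⟩
      · exact hc t (Nat.lt_of_succ_lt_succ ht)

lemma WalkSum.exists_closedPath {x : V} {s : ℝ} {k : ℕ} (h : X.WalkSum U φ x x s k)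
    (hk : 0 < k) :
    ∃ c : X.ClosedPath, c.length = k ∧ (∀ t, c.dart t ∈ X.dartsIn U) ∧ c.sum φ = s := by
  obtain ⟨c, v, hfirst, hlast, hsum, hc⟩ := h.exists_seq
  have hlt (t : ℕ) : t % k < k := Nat.mod_lt t hk
  have hnext (t : ℕ) : X.src (X.next (c (t % k))) = X.src (c ((t + 1) % k)) := by
    rw [(hc _ (hlt t)).2.2, (hc _ (hlt (t + 1))).2.1, ← Nat.mod_add_mod]
    obtain heq | hne := eq_or_ne (t % k + 1) k
    · rw [heq, Nat.mod_self, hfirst, hlast]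
    · rw [Nat.mod_eq_of_lt (lt_of_le_of_ne (hlt t) hne)]
  refine ⟨⟨fun t => c (t % k), k, fun t => by simp, hnext⟩, rfl, fun t => (hc _ (hlt t)).1, ?_⟩
  rw [hsum]
  exact Finset.sum_congr rfl fun t ht =>
    congrArg (φ ∘ c) (Nat.mod_eq_of_lt (Finset.mem_range.1 ht))

end Walk

namespace ClosedPath

section Shortest

variable {V : Type*} {X : TriMap V} {U : Set V} {φ : X.Dart → ℝ} {c : X.ClosedPath}

lemma walkSum (hc : ∀ t, c.dart t ∈ X.dartsIn U) (i j : ℕ) :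
    X.WalkSum U φ (X.src (c.dart i)) (X.src (c.dart (i + j)))
      (∑ u ∈ Finset.range j, φ (c.dart (i + u))) j := by
  induction j with
  | zero => simpa using WalkSum.nil (X.src (c.dart i))
  | succ j ih =>
    rw [Finset.sum_range_succ, ← add_assoc, ← c.src_next_dart]
    exact ih.trans (.single (hc _))

lemma sum_eq_add (φ : X.Dart → ℝ) (i : ℕ) {j k : ℕ} (h : j + k = c.length) :
    c.sum φ = ∑ u ∈ Finset.range j, φ (c.dart (i + u)) +
      ∑ u ∈ Finset.range k, φ (c.dart (i + j + u)) := by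
  simp only [← c.sum_shift φ i, ← h, Finset.sum_range_add, add_assoc]

/-- A shortest closed path in `U` with nonzero `φ`-sum. -/
structure IsShortest (U : Set V) (φ : X.Dart → ℝ) (c : X.ClosedPath) : Prop where
  dart_mem_dartsIn : ∀ t, c.dart t ∈ X.dartsIn U
  sum_ne_zero : c.sum φ ≠ 0
  eq_zero_of_walkSum : ∀ x s k, X.WalkSum U φ x x s k → k < c.length → s = 0

lemma exists_isShortest {x : V} {s : ℝ} {k : ℕ} (hw : X.WalkSum U φ x x s k) (hs : s ≠ 0) :
    ∃ c : X.ClosedPath, c.IsShortest U φ := by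
  classical
  have hex : ∃ k x s, X.WalkSum U φ x x s k ∧ s ≠ 0 := ⟨k, x, s, hw, hs⟩
  obtain ⟨y, r, hr, hne⟩ := Nat.find_spec hex
  have hpos : 0 < Nat.find hex := by
    refine Nat.pos_of_ne_zero fun h => hne ?_
    rw [h] at hr
    cases hr
    rfl
  obtain ⟨c, hlength, hmem, hsum⟩ := hr.exists_closedPath hpos
  refine ⟨c, hmem, hsum ▸ hne, fun z t l hz hl => ?_⟩
  by_contra ht
  exact Nat.find_min hex (hlength ▸ hl) ⟨z, t, hz, ht⟩

namespace IsShortest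

lemma length_pos (h : c.IsShortest U φ) : 0 < c.length :=
  Nat.pos_of_ne_zero fun hzero => h.sum_ne_zero (by simp [sum, hzero])

lemma src_ne (h : c.IsShortest U φ) {i j : ℕ} (hij : i < j) (hj : j < c.length) :
    X.src (c.dart i) ≠ X.src (c.dart j) := by
  intro hsrc
  have hfirst := walkSum (φ := φ) h.dart_mem_dartsIn i (j - i)
  rw [show i + (j - i) = j by lia, ← hsrc] at hfirst
  have hsecond := walkSum (φ := φ) h.dart_mem_dartsIn j (c.length - (j - i))
  rw [show j + (c.length - (j - i)) = i + c.length by lia, c.dart_add_length, ← hsrc] at hsecond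
  apply h.sum_ne_zero
  rw [c.sum_eq_add φ i (show (j - i) + (c.length - (j - i)) = c.length by lia),
    h.eq_zero_of_walkSum _ _ _ hfirst (by lia), zero_add, show i + (j - i) = j by lia,
    h.eq_zero_of_walkSum _ _ _ hsecond (by lia)]

lemma modEq_of_src_eq (h : c.IsShortest U φ) {s t : ℕ}
    (hst : X.src (c.dart s) = X.src (c.dart t)) : s ≡ t [MOD c.length] := by
  rw [← c.dart_mod s, ← c.dart_mod t] at hst
  obtain hlt | heq | hlt := lt_trichotomy (s % c.length) (t % c.length)
  · exact absurd hst (h.src_ne hlt (Nat.mod_lt _ h.length_pos))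
  · exact heq
  · exact absurd hst.symm (h.src_ne hlt (Nat.mod_lt _ h.length_pos))

lemma apply_ne_add_of_shortcut (h : c.IsShortest U φ) (hlength : 2 ≤ c.length) {t : ℕ}
    {e : X.Dart} (hsrc : X.src e = X.src (c.dart t))
    (htgt : X.src (X.next e) = X.src (c.dart (t + 2))) :
    φ e ≠ φ (c.dart t) + φ (c.dart (t + 1)) := by
  intro he
  have hmem : e ∈ X.dartsIn U :=
    ⟨hsrc ▸ (h.dart_mem_dartsIn t).1, htgt ▸ (h.dart_mem_dartsIn (t + 2)).1⟩
  have hrest := walkSum (φ := φ) h.dart_mem_dartsIn (t + 2) (c.length - 2)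
  rw [show t + 2 + (c.length - 2) = t + c.length by lia, c.dart_add_length, ← hsrc,
    ← htgt] at hrest
  apply h.sum_ne_zero
  rw [c.sum_eq_add φ t (show 2 + (c.length - 2) = c.length by lia), Finset.sum_range_succ,
    Finset.sum_range_one, add_zero, ← he]
  exact h.eq_zero_of_walkSum _ _ _ (.cons e hmem hrest) (by lia)

end IsShortest

end Shortest

section SimpleCycle

variable {V : Type*} [AddCommGroup V] [Module ℝ V] {S : TriSurface V} {U : Set V}
  {φ : S.Dart → ℝ} {c : S.ClosedPath}

namespace IsShortest

lemma three_le_length (h : c.IsShortest U φ) (hφ : φ ∈ S.antisymm) : 3 ≤ c.length := by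
  by_contra hlt
  have hpos := h.length_pos
  obtain hone | htwo : c.length = 1 ∨ c.length = 2 := by lia
  · exact S.src_next_ne (c.dart 0) (by rw [c.src_next_dart, ← hone, c.dart_add_length])
  · have hsrc : S.src (c.dart 1) = S.src (S.next (c.dart 0)) := (c.src_next_dart 0).symm
    have htgt : S.src (S.next (c.dart 1)) = S.src (c.dart 0) := by
      rw [c.src_next_dart, ← c.dart_add_length 0, htwo]
    apply h.sum_ne_zero
    simp [sum, htwo, Finset.sum_range_succ, S.eq_flip_of_src_eq hsrc htgt, hφ (c.dart 0)]

lemma dart_succ_ne (h : c.IsShortest U φ) (hφ : φ ∈ S.cocycles) (t : ℕ) :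
    c.dart (t + 1) ≠ S.next (c.dart t) := by
  obtain ⟨hanti, hface⟩ := mem_cocycles.1 hφ
  intro hnext
  have htgt : S.src (S.next (S.next (c.dart t))) = S.src (c.dart (t + 2)) := by
    rw [← hnext, c.src_next_dart]
  refine h.apply_ne_add_of_shortcut (t := t) (e := S.flip (S.next (S.next (c.dart t))))
    (by have := h.three_le_length hφ.1; lia) (by simp) (by rw [S.src_next_flip, htgt]) ?_
  rw [hanti, hnext]
  linarith [hface (c.dart t)]

lemma next_flip_dart_succ_ne (h : c.IsShortest U φ) (hφ : φ ∈ S.cocycles) (t : ℕ) :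
    S.next (S.flip (c.dart (t + 1))) ≠ S.flip (c.dart t) := by
  obtain ⟨hanti, hface⟩ := mem_cocycles.1 hφ
  intro hnext
  refine h.apply_ne_add_of_shortcut (t := t) (e := S.next (S.next (S.flip (c.dart (t + 1)))))
    (by have := h.three_le_length hφ.1; lia) (by rw [hnext, S.src_next_flip])
    (by rw [S.next_next_next, S.src_flip, c.src_next_dart]) ?_
  have hsum := hface (S.flip (c.dart (t + 1)))
  rw [hanti, hnext, hanti] at hsum
  rw [hnext]
  linarith

end IsShortest

lemma exists_simpleCycle (hφ : φ ∈ S.cocycles) {x : V} {s : ℝ} {k : ℕ}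
    (hw : S.WalkSum U φ x x s k) (hs : s ≠ 0) :
    ∃ γ : S.SimpleCycle, γ.vertices ⊆ U ∧ γ.sum φ ≠ 0 := by
  obtain ⟨c, hc⟩ := exists_isShortest hw hs
  refine ⟨⟨c, hc.three_le_length hφ.1, hc.modEq_of_src_eq, hc.dart_succ_ne hφ,
    hc.next_flip_dart_succ_ne hφ⟩, ?_, hc.sum_ne_zero⟩
  rintro _ ⟨t, rfl⟩
  exact (hc.dart_mem_dartsIn t).1

end SimpleCycle

end ClosedPath

end TriMap

/-! ### Cocycles relative to a system of cycles -/

section Arc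

variable {α β : Type*} {ρ : Equiv.Perm α} {o i : α} {f : α → β}

lemma sameCycle_induction [Finite α] {P : α → Prop} (ho : P o)
    (hstep : ∀ e, ρ.SameCycle o e → P e → P (ρ e)) {e : α} (he : ρ.SameCycle o e) : P e := by
  obtain ⟨j, rfl⟩ := he.exists_nat_pow_eq
  clear he
  induction j with
  | zero => exact ho
  | succ j ih =>
    rw [pow_succ', Equiv.Perm.mul_apply]
    exact hstep _ ⟨j, by simp⟩ ih

lemma apply_symm_eq_of_sameCycle [Finite α] (hoi : ρ.SameCycle o i) (hne : o ≠ i) (hoi' : ρ o ≠ i)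
    (hf : ∀ e, ρ.SameCycle o e → e ≠ o → e ≠ i → ρ e ≠ o → ρ e ≠ i → f (ρ e) = f e) :
    f (ρ.symm i) = f (ρ o) := by
  by_contra hfi
  have hlast (e : α) (he : f e = f (ρ o)) : ρ e ≠ i := by
    rintro rfl
    rw [ρ.symm_apply_apply] at hfi
    exact hfi he
  suffices h : i = o ∨ i ≠ i ∧ f i = f (ρ o) by
    rcases h with h | h
    · exact hne h.symm
    · exact h.1 rfl
  refine sameCycle_induction (P := fun e => e = o ∨ e ≠ i ∧ f e = f (ρ o)) (.inl rfl) ?_ hoi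
  rintro e he (rfl | ⟨hei, hfe⟩)
  · exact .inr ⟨hoi', rfl⟩
  · by_cases heo : e = o
    · exact .inr ⟨heo ▸ hoi', by rw [heo]⟩
    · by_cases hρ : ρ e = o
      · exact .inl hρ
      · exact .inr ⟨hlast e hfe, (hf e he heo hei hρ (hlast e hfe)).trans hfe⟩

lemma eq_or_eq_or_apply_eq_of_sameCycle [Finite α] {b : β} (ho : f (ρ o) = b) (hi : f (ρ i) = b)
    (hf : ∀ e, ρ.SameCycle o e → e ≠ o → e ≠ i → ρ e ≠ o → ρ e ≠ i → f (ρ e) = f e)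
    {e : α} (he : ρ.SameCycle o e) : e = o ∨ e = i ∨ f e = b := by
  refine sameCycle_induction (P := fun e => e = o ∨ e = i ∨ f e = b) (.inl rfl) ?_ he
  rintro e he hP
  by_cases heo : e = o
  · exact .inr (.inr (heo ▸ ho))
  by_cases hei : e = i
  · exact .inr (.inr (hei ▸ hi))
  by_cases hρo : ρ e = o
  · exact .inl hρo
  by_cases hρi : ρ e = i
  · exact .inr (.inl hρi)
  · exact .inr (.inr ((hf e he heo hei hρo hρi).trans ((hP.resolve_left heo).resolve_left hei)))

end Arc

namespace TriMap.CycleSystem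

section NormalizedCocycles

variable {V ι : Type*} [AddCommGroup V] [Module ℝ V] {S : TriSurface V} (F : S.CycleSystem ι)

variable {F} in
lemma IsInduced.src_next_notMem_vertices (hF : F.IsInduced) {d : S.Dart} (hd : d ∉ F.darts)
    (hsrc : S.src d ∈ F.vertices) : S.src (S.next d) ∉ F.vertices :=
  fun htgt => hd (hF ⟨hsrc, htgt⟩)

lemma rot_notMem_darts {d : S.Dart} (hd : d ∈ F.darts) : S.rot d ∉ F.darts := by
  intro hrot
  have hmem := F.flip_mem_darts hrot
  rw [rot_apply, S.flip_flip] at hmem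
  exact F.next_notMem_darts hmem (by rwa [S.next_next_next])

lemma eq_or_eq_of_src_eq {o i e : S.Dart} (ho : o ∈ F.darts) (hi : i ∈ F.darts) (he : e ∈ F.darts)
    (hne : o ≠ i) (hoi : S.src o = S.src i) (heo : S.src e = S.src o) : e = o ∨ e = i := by
  obtain ⟨j, hj⟩ := F.mem_vertices.1 (F.src_mem_vertices ho)
  obtain ⟨t, ht⟩ := id hj
  obtain ⟨s, hs⟩ := (F.cycle j).exists_dart_succ_eq t
  have hsrc : S.src o = S.src ((F.cycle j).dart (s + 1)) := by rw [hs, ← ht]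
  have hcases {d : S.Dart} (hd : d ∈ F.darts) (hdo : S.src d = S.src o) :=
    (F.cycle j).eq_or_eq_of_src_eq (F.mem_darts_cycle hd (hdo ▸ hj)) (hdo.trans hsrc)
  rcases hcases ho rfl with ho' | ho' <;> rcases hcases hi hoi.symm with hi' | hi' <;>
    rcases hcases he heo with he' | he' <;> simp_all

/-- The cocycles vanishing along the cycles and away from them. -/
def relCocycles : Submodule ℝ (S.Dart → ℝ) :=
  S.cocycles ⊓ Submodule.pi (F.darts ∪ S.dartsIn F.verticesᶜ) fun _ => ⊥

/-- The relative cocycles vanishing on some edge leaving each cycle on its right. -/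
def normalizedCocycles : Submodule ℝ (S.Dart → ℝ) :=
  F.relCocycles ⊓
    Submodule.pi (Set.range fun i => S.rot (S.flip ((F.cycle i).dart 0))) fun _ => ⊥

variable {F} {φ : S.Dart → ℝ}

lemma mem_relCocycles : φ ∈ F.relCocycles ↔ φ ∈ S.cocycles ∧ (∀ d ∈ F.darts, φ d = 0) ∧
    ∀ d ∈ S.dartsIn F.verticesᶜ, φ d = 0 := by
  simp [relCocycles, Submodule.mem_pi, or_imp, forall_and]

lemma mem_normalizedCocycles : φ ∈ F.normalizedCocycles ↔ φ ∈ F.relCocycles ∧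
    ∀ i, φ (S.rot (S.flip ((F.cycle i).dart 0))) = 0 := by
  simp [normalizedCocycles, Submodule.mem_pi]

lemma apply_rot_eq_neg (hφ : φ ∈ S.antisymm) (d : S.Dart) :
    φ (S.rot d) = -φ (S.next (S.next d)) := hφ _

lemma apply_rot_eq_apply (hF : F.IsInduced) (hφ : φ ∈ F.relCocycles) {e : S.Dart}
    (hsrc : S.src e ∈ F.vertices) (he : e ∉ F.darts) (hrot : S.rot e ∉ F.darts) :
    φ (S.rot e) = φ e := by
  obtain ⟨hcocycle, -, haway⟩ := mem_relCocycles.1 hφ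
  have hright := hF.src_next_notMem_vertices hrot (by rwa [S.src_rot])
  rw [rot_apply, S.src_next_flip] at hright
  have hopp := haway (S.next e) ⟨hF.src_next_notMem_vertices he hsrc, hright⟩
  linarith [(mem_cocycles.1 hcocycle).2 e, apply_rot_eq_neg hcocycle.1 e]

/-- The cycles leave and enter a vertex by two darts, between which the rotation meets no other
dart of the cycles. -/
lemma apply_rot_eq_apply_of_sameCycle (hF : F.IsInduced) (hφ : φ ∈ F.relCocycles) {o i e : S.Dart}
    (ho : o ∈ F.darts) (hi : i ∈ F.darts) (hne : o ≠ i) (hoi : S.src o = S.src i)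
    (he : S.rot.SameCycle o e) (heo : e ≠ o) (hei : e ≠ i) (hro : S.rot e ≠ o)
    (hri : S.rot e ≠ i) : φ (S.rot e) = φ e := by
  have hsrc : S.src e = S.src o :=
    sameCycle_induction (P := fun e => S.src e = S.src o) rfl (fun _ _ h => by simpa using h) he
  have hnot {d : S.Dart} (hd : S.src d = S.src o) (hdo : d ≠ o) (hdi : d ≠ i) : d ∉ F.darts :=
    fun h => (F.eq_or_eq_of_src_eq ho hi h hne hoi hd).elim hdo hdi
  exact apply_rot_eq_apply hF hφ (hsrc ▸ F.src_mem_vertices ho) (hnot hsrc heo hei)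
    (hnot (by rw [S.src_rot, hsrc]) hro hri)

lemma apply_rot_eq_apply_rot_flip (hF : F.IsInduced) (hφ : φ ∈ F.relCocycles) {o i : S.Dart}
    (ho : o ∈ F.darts) (hi : i ∈ F.darts) (hne : o ≠ i) (hoi : S.src o = S.src i) :
    φ (S.rot o) = φ (S.rot (S.flip i)) := by
  obtain ⟨hcocycle, hzero, -⟩ := mem_relCocycles.1 hφ
  have hsymm : S.rot.symm i = S.next (S.flip i) := by
    rw [Equiv.symm_apply_eq, rot_apply, S.next_next_next, S.flip_flip]
  rw [← apply_symm_eq_of_sameCycle (S.rot_sameCycle_of_src_eq hoi) hne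
    (fun h => F.rot_notMem_darts ho (h ▸ hi))
    fun e => apply_rot_eq_apply_of_sameCycle hF hφ ho hi hne hoi, hsymm]
  linarith [(mem_cocycles.1 hcocycle).2 (S.flip i), hzero _ (F.flip_mem_darts hi),
    apply_rot_eq_neg hcocycle.1 (S.flip i)]

lemma apply_eq_zero_of_mem_normalizedCocycles (hF : F.IsInduced) (hφ : φ ∈ F.normalizedCocycles)
    (hleft : ∀ i, φ (S.rot ((F.cycle i).dart 0)) = 0) {d : S.Dart}
    (hd : S.src d ∈ F.vertices) : φ d = 0 := by
  obtain ⟨hrel, hright⟩ := mem_normalizedCocycles.1 hφ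
  have hmem (i : ι) (t : ℕ) : (F.cycle i).dart t ∈ F.darts := F.dart_mem_darts i t
  have hsrc (i : ι) (t : ℕ) :
      S.src ((F.cycle i).dart (t + 1)) = S.src (S.flip ((F.cycle i).dart t)) := by
    rw [S.src_flip, (F.cycle i).src_next_dart]
  have hleft' (i : ι) (t : ℕ) : φ (S.rot ((F.cycle i).dart t)) = 0 := by
    induction t with
    | zero => exact hleft i
    | succ t ih =>
      rw [apply_rot_eq_apply_rot_flip hF hrel (hmem i (t + 1)) (F.flip_mem_darts (hmem i t))
        ((F.cycle i).dart_ne_flip_dart _ _) (hsrc i t), S.flip_flip, ih]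
  have hright' (i : ι) (t : ℕ) : φ (S.rot (S.flip ((F.cycle i).dart t))) = 0 := by
    induction t with
    | zero => exact hright i
    | succ t ih =>
      rw [← apply_rot_eq_apply_rot_flip hF hrel (F.flip_mem_darts (hmem i t)) (hmem i (t + 1))
        ((F.cycle i).dart_ne_flip_dart _ _).symm (hsrc i t).symm, ih]
  obtain ⟨i, t, ht⟩ := F.mem_vertices.1 hd
  obtain ⟨s, hs⟩ := (F.cycle i).exists_dart_succ_eq t
  have hzero := (mem_relCocycles.1 hrel).2.1
  rcases eq_or_eq_or_apply_eq_of_sameCycle (hleft' i (s + 1)) (hright' i s)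
    (fun e => apply_rot_eq_apply_of_sameCycle hF hrel (hmem i (s + 1))
      (F.flip_mem_darts (hmem i s)) ((F.cycle i).dart_ne_flip_dart _ _) (hsrc i s))
    (S.rot_sameCycle_of_src_eq (d := (F.cycle i).dart (s + 1)) (e := d)
      (by rw [hs]; exact ht)) with h | h | h
  · exact h ▸ hzero _ (hmem i (s + 1))
  · exact h ▸ hzero _ (F.flip_mem_darts (hmem i s))
  · exact h

lemma eq_zero_of_mem_normalizedCocycles (hF : F.IsInduced) (hφ : φ ∈ F.normalizedCocycles)
    (hleft : ∀ i, φ (S.rot ((F.cycle i).dart 0)) = 0) : φ = 0 := by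
  have hnear {d : S.Dart} := apply_eq_zero_of_mem_normalizedCocycles hF hφ hleft (d := d)
  obtain ⟨hcocycle, -, haway⟩ := mem_relCocycles.1 (mem_normalizedCocycles.1 hφ).1
  ext d
  by_cases hsrc : S.src d ∈ F.vertices
  · exact hnear hsrc
  by_cases htgt : S.src (S.next d) ∈ F.vertices
  · rw [← S.flip_flip d, (mem_cocycles.1 hcocycle).1, hnear (by rwa [S.src_flip]), neg_zero,
      Pi.zero_apply]
  · exact haway d ⟨hsrc, htgt⟩

lemma finrank_normalizedCocycles_le [Fintype ι] (hF : F.IsInduced) :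
    Module.finrank ℝ F.normalizedCocycles ≤ Fintype.card ι := by
  let leftValues : (S.Dart → ℝ) →ₗ[ℝ] (ι → ℝ) :=
    LinearMap.pi fun i => LinearMap.proj (S.rot ((F.cycle i).dart 0))
  have hinj : Function.Injective (leftValues.domRestrict F.normalizedCocycles) := by
    rw [← LinearMap.ker_eq_bot, LinearMap.ker_eq_bot']
    exact fun φ hφ => Subtype.ext (eq_zero_of_mem_normalizedCocycles hF φ.2 (congrFun hφ))
  simpa using LinearMap.finrank_le_finrank_of_injective hinj

end NormalizedCocycles

end TriMap.CycleSystem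

namespace TriMap.CycleSystem

section Extension

variable {V ι : Type*} {X : TriMap V} (F : X.CycleSystem ι)

lemma exists_extend {g : ι → ℕ → ℝ} (hg : ∀ i, Function.Periodic (g i) (F.cycle i).length)
    (h' : V → ℝ) :
    ∃ h : V → ℝ, (∀ i t, h (X.src ((F.cycle i).dart t)) = g i t) ∧ Set.EqOn h h' F.verticesᶜ := by
  let vertex : ι × ℕ → V := fun p => X.src ((F.cycle p.1).dart p.2)
  have hfactor : Function.FactorsThrough (fun p : ι × ℕ => g p.1 p.2) vertex := by
    rintro ⟨i, s⟩ ⟨j, t⟩ h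
    obtain rfl : i = j := F.index_eq ⟨s, h⟩ ((F.cycle j).src_dart_mem_vertices t)
    have hmod : s % _ = t % _ := (F.cycle i).modEq_of_src_eq h
    simp only [← (hg i).map_mod_nat s, hmod, (hg i).map_mod_nat t]
  refine ⟨Function.extend vertex (fun p => g p.1 p.2) h',
    fun i t => hfactor.extend_apply h' (i, t), fun x hx => Function.extend_apply' _ _ _ ?_⟩
  rintro ⟨⟨i, t⟩, rfl⟩
  exact hx (F.mem_vertices.2 ⟨i, (F.cycle i).src_dart_mem_vertices t⟩)

variable {F} in
lemma eqOn_darts {φ ψ : X.Dart → ℝ} (hφ : φ ∈ X.antisymm) (hψ : ψ ∈ X.antisymm)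
    (h : ∀ i t, φ ((F.cycle i).dart t) = ψ ((F.cycle i).dart t)) : Set.EqOn φ ψ F.darts := by
  intro d hd
  obtain ⟨i, t, rfl | rfl⟩ := F.mem_darts.1 hd
  · exact h i t
  · rw [hφ, hψ, h i t]

lemma exists_coboundary_eqOn_darts {φ : X.Dart → ℝ} (hφ : φ ∈ X.antisymm)
    (hsum : ∀ i, (F.cycle i).sum φ = 0) : ∃ h, Set.EqOn (X.coboundary h) φ F.darts := by
  have hperiodic (i : ι) : Function.Periodic
      (fun t => ∑ u ∈ Finset.range t, φ ((F.cycle i).dart u)) (F.cycle i).length := fun t => by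
    beta_reduce
    rw [Finset.sum_range_add, (F.cycle i).sum_shift, hsum, add_zero]
  obtain ⟨h, hh, -⟩ := F.exists_extend hperiodic 0
  refine ⟨h, eqOn_darts (mem_cocycles.1 (coboundary_mem_cocycles h)).1 hφ fun i t => ?_⟩
  rw [coboundary_apply, (F.cycle i).src_next_dart, hh, hh, Finset.sum_range_succ]
  ring

end Extension

section Rank

variable {V ι : Type*} [AddCommGroup V] [Module ℝ V] {S : TriSurface V} (F : S.CycleSystem ι)
  {φ : S.Dart → ℝ}

lemma exists_sub_coboundary_mem_normalizedCocycles (hF : F.IsInduced) (hφ : φ ∈ S.cocycles)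
    (hzero : ∀ d ∈ F.darts, φ d = 0) {h' : V → ℝ}
    (hh' : Set.EqOn (S.coboundary h') φ (S.dartsIn F.verticesᶜ)) :
    ∃ h, φ - S.coboundary h ∈ F.normalizedCocycles := by
  let right (i : ι) : S.Dart := S.rot (S.flip ((F.cycle i).dart 0))
  obtain ⟨h, hcycle, haway⟩ := F.exists_extend
    (g := fun i _ => h' (S.src (S.next (right i))) - φ (right i)) (fun _ _ => rfl) h'
  refine ⟨h, mem_normalizedCocycles.2 ⟨mem_relCocycles.2
    ⟨sub_mem hφ (coboundary_mem_cocycles h), fun d hd => ?_, fun d hd => ?_⟩, fun i => ?_⟩⟩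
  · have hconst : Set.EqOn (S.coboundary h) 0 F.darts :=
      eqOn_darts (mem_cocycles.1 (coboundary_mem_cocycles h)).1 (zero_mem _) fun i t => by
        rw [coboundary_apply, (F.cycle i).src_next_dart, hcycle, hcycle, sub_self, Pi.zero_apply]
    rw [Pi.sub_apply, hzero d hd, hconst hd, Pi.zero_apply, sub_zero]
  · rw [Pi.sub_apply, coboundary_apply, haway hd.1, haway hd.2, ← coboundary_apply, hh' hd,
      sub_self]
  · have hsrc : S.src (right i) = S.src ((F.cycle i).dart 1) := by
      rw [S.src_rot, S.src_flip, (F.cycle i).src_next_dart]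
    have hnot : S.src (S.next (right i)) ∉ F.vertices :=
      hF.src_next_notMem_vertices (F.rot_notMem_darts (F.flip_mem_darts (F.dart_mem_darts i 0)))
        (hsrc ▸ F.src_mem_vertices (F.dart_mem_darts i 1))
    change φ (right i) - S.coboundary h (right i) = 0
    rw [coboundary_apply, haway hnot, hsrc, hcycle]
    ring

/-- Every cocycle vanishing on the cycles integrates to zero over the closed walks that avoid
them. -/
def IsSpanning : Prop :=
  ∀ φ ∈ S.cocycles, (∀ d ∈ F.darts, φ d = 0) →
    ∀ x s k, S.WalkSum F.verticesᶜ φ x x s k → s = 0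

variable {F}

lemma IsSpanning.mem_normalizedCocycles_sup_coboundaries (hspan : F.IsSpanning) (hF : F.IsInduced)
    (hφ : φ ∈ S.cocycles) (hsum : ∀ i, (F.cycle i).sum φ = 0) :
    φ ∈ F.normalizedCocycles ⊔ S.coboundaries := by
  obtain ⟨h₀, hh₀⟩ := F.exists_coboundary_eqOn_darts (mem_cocycles.1 hφ).1 hsum
  have hcocycle : φ - S.coboundary h₀ ∈ S.cocycles := sub_mem hφ (coboundary_mem_cocycles h₀)
  have hzero (d : S.Dart) (hd : d ∈ F.darts) : (φ - S.coboundary h₀) d = 0 := by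
    rw [Pi.sub_apply, hh₀ hd, sub_self]
  obtain ⟨h', hh'⟩ := exists_coboundary_eqOn_dartsIn (mem_cocycles.1 hcocycle).1
    (hspan _ hcocycle hzero)
  obtain ⟨h₁, hh₁⟩ := F.exists_sub_coboundary_mem_normalizedCocycles hF hcocycle hzero hh'
  refine Submodule.mem_sup.2 ⟨_, hh₁, S.coboundary (h₀ + h₁), ⟨_, rfl⟩, ?_⟩
  rw [map_add]
  abel

lemma IsSpanning.finrank_cocycles_le [Fintype ι] (hspan : F.IsSpanning) (hF : F.IsInduced) :
    Module.finrank ℝ S.cocycles ≤ 2 * Fintype.card ι + Module.finrank ℝ S.coboundaries := by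
  let periods : (S.Dart → ℝ) →ₗ[ℝ] (ι → ℝ) := LinearMap.pi fun i =>
    ∑ t ∈ Finset.range (F.cycle i).length, LinearMap.proj ((F.cycle i).dart t)
  let P := periods.domRestrict S.cocycles
  have hker : (LinearMap.ker P).map S.cocycles.subtype ≤
      F.normalizedCocycles ⊔ S.coboundaries := by
    rintro _ ⟨⟨φ, hφ⟩, hP, rfl⟩
    refine hspan.mem_normalizedCocycles_sup_coboundaries hF hφ fun i => ?_
    simpa [P, periods, ClosedPath.sum] using congrFun hP i
  have hrange : Module.finrank ℝ (LinearMap.range P) ≤ Fintype.card ι := by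
    simpa using (LinearMap.range P).finrank_le
  linarith [P.finrank_range_add_finrank_ker, Submodule.finrank_mono hker,
    Submodule.finrank_map_subtype_eq S.cocycles (LinearMap.ker P),
    Submodule.finrank_add_le_finrank_add_finrank F.normalizedCocycles S.coboundaries,
    finrank_normalizedCocycles_le hF]

lemma IsSpanning.eulerDefect_le [Fintype ι] (hspan : F.IsSpanning) (hF : F.IsInduced)
    (hS : S.Connected) : S.eulerDefect ≤ 12 * (Fintype.card ι : ℤ) := by
  have := hspan.finrank_cocycles_le hF
  have := TriSurface.finrank_cocycles_sub_finrank_coboundaries hS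
  lia

end Rank

end TriMap.CycleSystem

/-! ### Enlarging a system of cycles -/

namespace TriMap

section Duality

variable {V : Type*} {X : TriMap V} {T : Set X.Dart} {φ τ : X.Dart → ℝ}

lemma DualConnected.eq_of_forall {α : Type*} (hT : X.DualConnected T) {f : X.Dart → α}
    (hnext : ∀ d, f (X.next d) = f d) (hflip : ∀ d ∉ T, f (X.flip d) = f d) (d e : X.Dart) :
    f e = f d := by
  induction hT d e with
  | refl => rfl
  | tail _ h ih =>
    rcases h with rfl | ⟨rfl, h⟩
    · exact (hnext _).trans ih
    · exact (hflip _ h).trans ih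

lemma dualConnected_of_forall (hT : ∀ d ∈ T, X.flip d ∈ T)
    (h : ∀ τ : X.Dart → ℝ, (∀ d, τ (X.next d) = τ d) → (∀ d ∉ T, τ (X.flip d) = τ d) →
      ∀ d e, τ e = τ d) : X.DualConnected T := by
  classical
  intro a e
  let reached : Set X.Dart := {e | ReflTransGen (X.DualStep T) a e}
  have hnext {d : X.Dart} (hd : d ∈ reached) : X.next d ∈ reached := hd.tail (.next d)
  have hflip {d : X.Dart} (hdT : d ∉ T) (hd : d ∈ reached) : X.flip d ∈ reached :=
    hd.tail (.inr ⟨rfl, hdT⟩)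
  have hindicator : reached.indicator (fun _ => (1 : ℝ)) e = reached.indicator (fun _ => 1) a := by
    refine h _ (fun d => ?_) (fun d hd => ?_) a e
    · refine Set.indicator_eq_indicator ⟨fun hd => ?_, hnext⟩ rfl
      simpa using hnext (hnext hd)
    · refine Set.indicator_eq_indicator ⟨fun hd' => ?_, hflip hd⟩ rfl
      simpa using hflip (fun hT' => hd (by simpa using hT _ hT')) hd'
  have ha : a ∈ reached := .refl
  by_contra he
  change e ∉ reached at he
  rw [Set.indicator_of_mem ha, Set.indicator_of_notMem he] at hindicator
  exact zero_ne_one hindicator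

lemma sum_mul_sub_flip_eq_zero (hφ : φ ∈ X.cocycles) (hτ : ∀ d, τ (X.next d) = τ d) :
    ∑ d, φ d * (τ d - τ (X.flip d)) = 0 := by
  obtain ⟨hflip, hface⟩ := mem_cocycles.1 hφ
  have hsum_flip : ∑ d, φ d * τ (X.flip d) = -∑ d, φ d * τ d := by
    rw [← X.sum_flip, ← Finset.sum_neg_distrib]
    exact Finset.sum_congr rfl fun d _ => by rw [X.flip_flip, hflip, neg_mul]
  have hsum_next : ∑ d, φ (X.next d) * τ d = ∑ d, φ d * τ d := by
    rw [← X.sum_next fun d => φ d * τ d]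
    exact Finset.sum_congr rfl fun d _ => by rw [hτ]
  have hsum_next_next : ∑ d, φ (X.next (X.next d)) * τ d = ∑ d, φ d * τ d := by
    rw [← hsum_next, ← X.sum_next fun d => φ (X.next d) * τ d]
    exact Finset.sum_congr rfl fun d _ => by rw [hτ]
  have hsum_face : ∑ d, φ d * τ d + ∑ d, φ (X.next d) * τ d +
      ∑ d, φ (X.next (X.next d)) * τ d = 0 := by
    rw [← Finset.sum_add_distrib, ← Finset.sum_add_distrib]
    exact Finset.sum_eq_zero fun d _ => by rw [← add_mul, ← add_mul, hface, zero_mul]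
  simp only [mul_sub, Finset.sum_sub_distrib, hsum_flip]
  linarith

lemma sum_sub_flip_eq_zero_of_src [DecidableEq V] (hτ : ∀ d, τ (X.next d) = τ d) (x : V) :
    ∑ d with X.src d = x, (τ d - τ (X.flip d)) = 0 := by
  rw [Finset.sum_sub_distrib, sub_eq_zero]
  refine Finset.sum_equiv X.rot (fun d => by simp) fun d _ => ?_
  rw [X.rot_apply, X.flip_flip, hτ, hτ]

namespace SimpleCycle

variable {γ : X.SimpleCycle}

lemma sum_eq_two_mul_sum {f : X.Dart → ℝ} (hflip : ∀ d, f (X.flip d) = f d)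
    (hoff : ∀ d ∉ γ.darts, f d = 0) : ∑ d, f d = 2 * γ.sum f := by
  let J : Finset X.Dart := (Finset.range γ.length).image γ.dart
  have hmem (t : ℕ) : γ.dart t ∈ J := Finset.mem_image.2
    ⟨t % γ.length, Finset.mem_range.2 (Nat.mod_lt _ (by have := γ.three_le_length; lia)),
      γ.dart_mod t⟩
  have hinj : Set.InjOn γ.dart (Finset.range γ.length) := fun s hs t ht h =>
    (γ.modEq_of_src_eq (congrArg X.src h)).eq_of_lt_of_lt (Finset.mem_range.1 hs)
      (Finset.mem_range.1 ht)
  have hdisj : Disjoint J (J.image X.flip) := by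
    simp only [J, Finset.disjoint_left, Finset.mem_image]
    rintro _ ⟨s, -, rfl⟩ ⟨_, ⟨t, -, rfl⟩, h⟩
    exact γ.dart_ne_flip_dart s t h.symm
  have hsub : ∑ d ∈ J ∪ J.image X.flip, f d = ∑ d, f d := by
    refine Finset.sum_subset (Finset.subset_univ _) fun d _ hd => hoff d ?_
    rintro ⟨t, rfl | rfl⟩
    · exact hd (Finset.mem_union_left _ (hmem t))
    · exact hd (Finset.mem_union_right _ (Finset.mem_image_of_mem _ (hmem t)))
  rw [← hsub, Finset.sum_union hdisj, Finset.sum_image X.flip_bijective.injective.injOn,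
    Finset.sum_congr rfl fun d _ => hflip d, Finset.sum_image hinj, two_mul]
  rfl

lemma sub_flip_dart_eq_sub_flip_dart_zero (hτ : ∀ d, τ (X.next d) = τ d)
    (hoff : ∀ d ∉ γ.darts, X.src d ∈ γ.vertices → τ (X.flip d) = τ d) (t : ℕ) :
    τ (γ.dart t) - τ (X.flip (γ.dart t)) = τ (γ.dart 0) - τ (X.flip (γ.dart 0)) := by
  classical
  induction t with
  | zero => rfl
  | succ t ih =>
    have hsum := X.sum_sub_flip_eq_zero_of_src hτ (X.src (γ.dart (t + 1)))
    rw [← Finset.sum_subset (s₁ := {γ.dart (t + 1), X.flip (γ.dart t)}),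
      Finset.sum_pair (γ.dart_ne_flip_dart _ _), X.flip_flip] at hsum
    · linarith
    · simp [Finset.insert_subset_iff, γ.src_next_dart]
    · intro d hd hne
      have hsrc : X.src d = X.src (γ.dart (t + 1)) := by simpa using hd
      rw [Finset.mem_insert, Finset.mem_singleton] at hne
      rw [hoff d (fun h => hne (γ.eq_or_eq_of_src_eq h hsrc))
        (hsrc ▸ γ.src_dart_mem_vertices _), sub_self]

lemma apply_flip_eq_of_mem_darts (hφ : φ ∈ X.cocycles) (hsum : γ.sum φ ≠ 0)
    (hτ : ∀ d, τ (X.next d) = τ d)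
    (hoff : ∀ d ∉ γ.darts, X.src d ∈ γ.vertices → τ (X.flip d) = τ d)
    (hφτ : ∀ d ∉ γ.darts, φ d * (τ d - τ (X.flip d)) = 0) {d : X.Dart} (hd : d ∈ γ.darts) :
    τ (X.flip d) = τ d := by
  have hjump := sub_flip_dart_eq_sub_flip_dart_zero hτ hoff
  have hpairing : γ.sum φ * (τ (γ.dart 0) - τ (X.flip (γ.dart 0))) = 0 := by
    have htwice := sum_eq_two_mul_sum
      (fun d => by rw [(mem_cocycles.1 hφ).1, X.flip_flip]; ring) hφτ
    rw [sum_mul_sub_flip_eq_zero hφ hτ] at htwice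
    simp only [ClosedPath.sum, hjump, ← Finset.sum_mul] at htwice ⊢
    linarith
  have hzero := (mul_eq_zero.1 hpairing).resolve_left hsum
  obtain ⟨t, rfl | rfl⟩ := hd
  · linarith [hjump t]
  · rw [X.flip_flip]
    linarith [hjump t]

/-- By duality with a cocycle of nonzero period, crossing `γ` can be avoided. -/
lemma dualConnected_union (hφ : φ ∈ X.cocycles) (hsum : γ.sum φ ≠ 0) (hT : X.DualConnected T)
    (hflip : ∀ d ∈ T, X.flip d ∈ T) (hφT : ∀ d ∈ T, φ d = 0)
    (hdisj : ∀ d ∈ T, X.src d ∉ γ.vertices) : X.DualConnected (γ.darts ∪ T) := by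
  refine dualConnected_of_forall
    (fun d hd => hd.imp γ.flip_mem_darts (hflip d)) fun τ hτ hτ' => ?_
  refine hT.eq_of_forall hτ fun d hd => ?_
  by_cases hdγ : d ∈ γ.darts
  · refine apply_flip_eq_of_mem_darts hφ hsum hτ (fun d hdγ hd => ?_) (fun d hdγ => ?_) hdγ
    · exact hτ' d fun h => h.elim hdγ fun hdT => hdisj d hdT hd
    · by_cases hdT : d ∈ T
      · rw [hφT d hdT, zero_mul]
      · rw [hτ' d fun h => h.elim hdγ hdT, sub_self, mul_zero]
  · exact hτ' d fun h => h.elim hdγ hd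

end SimpleCycle

end Duality

section CycleSystem

variable {V : Type*} {X : TriMap V} {m : ℕ}

/-- A system of cycles with one further cycle. -/
def CycleSystem.cons (F : X.CycleSystem (Fin m)) (γ : X.SimpleCycle)
    (hγ : γ.vertices ⊆ F.verticesᶜ) (hdual : X.DualConnected (γ.darts ∪ F.darts)) :
    X.CycleSystem (Fin (m + 1)) where
  cycle := Fin.cons γ F.cycle
  disjoint_vertices := by
    have hdisj (i : Fin m) : Disjoint γ.vertices (F.cycle i).vertices :=
      Set.disjoint_left.2 fun x hx hi => hγ hx (F.mem_vertices.2 ⟨i, hi⟩)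
    intro i j hij
    cases i using Fin.cases <;> cases j using Fin.cases
    · exact absurd rfl hij
    · exact hdisj _
    · exact (hdisj _).symm
    · exact F.disjoint_vertices fun h => hij (congrArg _ h)
  dualConnected := by
    convert hdual
    ext d
    simp [mem_darts, Fin.exists_fin_succ]

/-- The system without cycles. -/
def CycleSystem.empty (hX : X.Connected) : X.CycleSystem (Fin 0) where
  cycle i := i.elim0
  disjoint_vertices i := i.elim0
  dualConnected d e := by
    refine ReflTransGen.mono (fun a b => Or.imp_right fun h => ⟨h, ?_⟩) _ _ (hX d e)
    simp

end CycleSystem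

end TriMap

namespace TriSurface

section CycleSystem

variable {V : Type*} {m : ℕ}

lemma exists_cycleSystem_succ [AddCommGroup V] [Module ℝ V] {S : TriSurface V}
    {F : S.CycleSystem (Fin m)} (hF : F.IsInduced)
    (hS : S.Connected) (hm : 12 * (m : ℤ) < S.eulerDefect) :
    Nonempty (S.CycleSystem (Fin (m + 1))) := by
  have hspan : ¬ F.IsSpanning := fun h => by
    have := h.eulerDefect_le hF hS
    rw [Fintype.card_fin] at this
    lia
  simp only [TriMap.CycleSystem.IsSpanning, not_forall] at hspan
  obtain ⟨φ, hφ, hzero, x, s, k, hw, hs⟩ := hspan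
  obtain ⟨γ, hγ, hsum⟩ := TriMap.ClosedPath.exists_simpleCycle hφ hw hs
  exact ⟨F.cons γ hγ (γ.dualConnected_union hφ hsum F.dualConnected
    (fun d => F.flip_mem_darts) hzero fun d hd hd' => hγ hd' (F.src_mem_vertices hd))⟩

lemma exists_cycleSystem [NormedAddCommGroup V] [NormedSpace ℝ V] {S : TriSurface V}
    (hS : IsPreconnected S.space) :
    ∃ (S' : TriSurface V) (m : ℕ), S'.space = S.space ∧ S'.eulerDefect = S.eulerDefect ∧
      S.eulerDefect ≤ 12 * (m : ℤ) ∧ Nonempty (S'.CycleSystem (Fin m)) := by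
  by_contra! hnone
  have hall (m : ℕ) : ∃ S' : TriSurface V, S'.space = S.space ∧
      S'.eulerDefect = S.eulerDefect ∧ Nonempty (S'.CycleSystem (Fin m)) := by
    induction m with
    | zero => exact ⟨S, rfl, rfl, ⟨.empty (S.connected_of_isPreconnected_space hS)⟩⟩
    | succ m ih =>
      obtain ⟨S', hspace, hdefect, ⟨F⟩⟩ := ih
      have hm : 12 * (m : ℤ) < S.eulerDefect := by
        by_contra! hle
        exact (hnone S' m hspace hdefect hle).elim F
      have hspace' : S'.subdivide.space = S.space := S'.space_subdivide.trans hspace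
      have hdefect' := S'.eulerDefect_subdivide.trans hdefect
      exact ⟨S'.subdivide, hspace', hdefect', exists_cycleSystem_succ F.isInduced_subdivide
        (connected_of_isPreconnected_space _ (hspace' ▸ hS)) (hdefect' ▸ hm)⟩
  obtain ⟨S', hspace, hdefect, ⟨F⟩⟩ := hall S.eulerDefect.toNat
  exact (hnone S' _ hspace hdefect (by lia)).elim F

end CycleSystem

end TriSurface

/-! ### Cycles of edges as circles -/

section Circle

variable {E : Type*} [TopologicalSpace E] [T2Space E] {T : ℝ} {g : ℝ → E}

lemma nonempty_homeomorph_sphere_image_Ico (hT : 0 < T) (hg : ContinuousOn g (Set.Icc 0 T))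
    (hclosed : g 0 = g T) (hinj : Set.InjOn g (Set.Ico 0 T)) :
    Nonempty (g '' Set.Ico 0 T ≃ₜ Metric.sphere (0 : EuclideanSpace ℝ (Fin 2)) 1) := by
  have : Fact (0 < T) := ⟨hT⟩
  rw [← zero_add T] at hg hclosed hinj ⊢
  have hcont : Continuous (AddCircle.liftIco T 0 g) := AddCircle.liftIco_continuous hclosed hg
  have hinj' : Function.Injective (AddCircle.liftIco T 0 g) :=
    hinj.injective.comp (AddCircle.equivIco T 0).injective
  have hrange : Set.range (AddCircle.liftIco T 0 g) = g '' Set.Ico 0 (0 + T) := by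
    rw [AddCircle.liftIco, (AddCircle.equivIco T 0).surjective.range_comp, Set.range_domRestrict]
  obtain ⟨sphereHomeo⟩ := nonempty_sphere_homeomorph_circle
  exact ⟨(((hcont.isClosedEmbedding hinj').isEmbedding.toHomeomorph.trans
    (Homeomorph.setCongr hrange)).symm.trans (AddCircle.homeomorphCircle hT.ne')).trans
    sphereHomeo.symm⟩

end Circle

section PolygonalPath

variable {V : Type*} [NormedAddCommGroup V] [NormedSpace ℝ V]

/-- The path through `v 0, …, v k` at times `0, …, k`, linear in between. -/
noncomputable def polygonalPath (v : ℕ → V) (k : ℕ) (s : ℝ) : V :=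
  ∑ t ∈ Finset.range (k + 1), max 0 (1 - |s - t|) • v t

variable (v : ℕ → V) {k : ℕ}

lemma continuous_polygonalPath : Continuous (polygonalPath v k) := by
  unfold polygonalPath
  fun_prop

lemma polygonalPath_add {t : ℕ} (ht : t < k) {a : ℝ} (ha : a ∈ Set.Icc (0 : ℝ) 1) :
    polygonalPath v k (t + a) = AffineMap.lineMap (v t) (v (t + 1)) a := by
  obtain ⟨ha0, ha1⟩ := ha
  have hsub : {t, t + 1} ⊆ Finset.range (k + 1) := by
    simp only [Finset.insert_subset_iff, Finset.singleton_subset_iff, Finset.mem_range]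
    lia
  rw [polygonalPath, ← Finset.sum_subset hsub, Finset.sum_pair (by lia),
    AffineMap.lineMap_apply_module]
  · congr 2
    · rw [add_sub_cancel_left, abs_of_nonneg ha0, max_eq_right (by linarith)]
    · push_cast
      rw [add_sub_add_left_eq_sub, abs_of_nonpos (by linarith), max_eq_right (by linarith)]
      ring
  · intro u _ hu
    rw [max_eq_left, zero_smul]
    rw [Finset.mem_insert, Finset.mem_singleton, not_or] at hu
    rcases lt_or_ge u t with h | h
    · have : (u : ℝ) + 1 ≤ t := by exact_mod_cast h
      linarith [le_abs_self ((t : ℝ) + a - u)]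
    · have : (t : ℝ) + 2 ≤ u := by exact_mod_cast (by lia : t + 2 ≤ u)
      linarith [neg_le_abs ((t : ℝ) + a - u)]

end PolygonalPath

namespace TriMap.SimpleCycle

section Support

variable {V : Type*} [NormedAddCommGroup V] [NormedSpace ℝ V] {S : TriSurface V}
  (γ γ' : S.SimpleCycle)

/-- The closed polygon followed by a cycle. -/
def support : Set V := ⋃ t, S.edge (γ.dart t)

/-- The point dividing the edge of `γ.dart t` in the ratio `a : 1 - a`. -/
noncomputable def point (t : ℕ) (a : ℝ) : V :=
  AffineMap.lineMap (S.src (γ.dart t)) (S.src (γ.dart (t + 1))) a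

lemma point_zero (t : ℕ) : γ.point t 0 = S.src (γ.dart t) := AffineMap.lineMap_apply_zero ..

lemma mem_openEdge_iff {x : V} {t : ℕ} :
    x ∈ S.openEdge (γ.dart t) ↔ ∃ a ∈ Set.Ioo (0 : ℝ) 1, γ.point t a = x := by
  rw [TriMap.openEdge, γ.src_next_dart, openSegment_eq_image_lineMap]
  rfl

lemma support_subset_space : γ.support ⊆ S.space := by
  intro x hx
  obtain ⟨t, ht⟩ := Set.mem_iUnion.1 hx
  exact S.mem_space.2 ⟨_, S.edge_subset_face _ ht⟩

variable {γ γ'}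

lemma mem_support {x : V} :
    x ∈ γ.support ↔ x ∈ γ.vertices ∨ ∃ t, x ∈ S.openEdge (γ.dart t) := by
  simp only [support, Set.mem_iUnion]
  constructor
  · rintro ⟨t, ht⟩
    rw [TriMap.edge, ← insert_endpoints_openSegment] at ht
    rcases ht with rfl | rfl | ht
    · exact .inl (γ.src_dart_mem_vertices t)
    · exact .inl (γ.src_next_mem_vertices (γ.dart_mem_darts t))
    · exact .inr ⟨t, ht⟩
  · rintro (⟨t, rfl⟩ | ⟨t, ht⟩)
    · exact ⟨t, S.src_mem_edge _⟩
    · exact ⟨t, S.openEdge_subset_edge _ ht⟩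

lemma disjoint_support (h : Disjoint γ.vertices γ'.vertices) :
    Disjoint γ.support γ'.support := by
  rw [Set.disjoint_left] at h ⊢
  intro x hx hx'
  rcases mem_support.1 hx with hx | ⟨s, hs⟩ <;> rcases mem_support.1 hx' with hx' | ⟨t, ht⟩
  · exact h hx hx'
  · obtain ⟨s, rfl⟩ := hx
    exact S.ne_src_of_mem_openEdge ht _ rfl
  · obtain ⟨t, rfl⟩ := hx'
    exact S.ne_src_of_mem_openEdge hs _ rfl
  · refine h (γ.src_dart_mem_vertices s) ?_
    rcases S.eq_or_eq_flip_of_mem_openEdge ht (S.openEdge_subset_edge _ hs) with h | h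
    · exact h ▸ γ'.src_dart_mem_vertices t
    · exact h ▸ γ'.src_mem_vertices (γ'.flip_dart_mem_darts t)

lemma eq_of_point_eq {s t : ℕ} (hs : s < γ.length) (ht : t < γ.length) {a b : ℝ}
    (ha : a ∈ Set.Ico (0 : ℝ) 1) (hb : b ∈ Set.Ico (0 : ℝ) 1) (h : γ.point s a = γ.point t b) :
    s = t ∧ a = b := by
  have heq {s t : ℕ} (hs : s < γ.length) (ht : t < γ.length)
      (h : S.src (γ.dart s) = S.src (γ.dart t)) : s = t :=
    (γ.modEq_of_src_eq h).eq_of_lt_of_lt hs ht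
  rcases ha.1.eq_or_lt with rfl | ha0 <;> rcases hb.1.eq_or_lt with rfl | hb0
  · exact ⟨heq hs ht (by simpa only [point_zero] using h), rfl⟩
  · exact (S.ne_src_of_mem_openEdge (γ.mem_openEdge_iff.2 ⟨b, ⟨hb0, hb.2⟩, rfl⟩) _
      (h.symm.trans (γ.point_zero s))).elim
  · exact (S.ne_src_of_mem_openEdge (γ.mem_openEdge_iff.2 ⟨a, ⟨ha0, ha.2⟩, rfl⟩) _
      (h.trans (γ.point_zero t))).elim
  · have hmem : γ.point t b ∈ S.openEdge (γ.dart t) :=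
      γ.mem_openEdge_iff.2 ⟨b, ⟨hb0, hb.2⟩, rfl⟩
    have hmem' : γ.point t b ∈ S.openEdge (γ.dart s) :=
      γ.mem_openEdge_iff.2 ⟨a, ⟨ha0, ha.2⟩, h⟩
    have hdart := (S.eq_or_eq_flip_of_mem_openEdge hmem
      (S.openEdge_subset_edge _ hmem')).resolve_right (γ.dart_ne_flip_dart s t)
    obtain rfl := heq hs ht (congrArg S.src hdart)
    refine ⟨rfl, AffineMap.lineMap_injective ℝ ?_ h⟩
    rw [← γ.src_next_dart]
    exact (S.src_next_ne _).symm

lemma polygonalPath_eq_point {s : ℝ} (hs : s ∈ Set.Ico (0 : ℝ) γ.length) :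
    polygonalPath (fun t => S.src (γ.dart t)) γ.length s = γ.point ⌊s⌋₊ (s - ⌊s⌋₊) := by
  conv_lhs => rw [← add_sub_cancel (⌊s⌋₊ : ℝ) s]
  exact polygonalPath_add _ ((Nat.floor_lt hs.1).2 hs.2)
    ⟨sub_nonneg.2 (Nat.floor_le hs.1), by linarith [Nat.lt_floor_add_one s]⟩

lemma injOn_polygonalPath :
    Set.InjOn (polygonalPath (fun t => S.src (γ.dart t)) γ.length) (Set.Ico 0 γ.length) := by
  intro s hs t ht h
  have hfract {s : ℝ} (hs : s ∈ Set.Ico (0 : ℝ) γ.length) : s - ⌊s⌋₊ ∈ Set.Ico (0 : ℝ) 1 :=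
    ⟨sub_nonneg.2 (Nat.floor_le hs.1), by linarith [Nat.lt_floor_add_one s]⟩
  rw [polygonalPath_eq_point hs, polygonalPath_eq_point ht] at h
  obtain ⟨hfloor, hfr⟩ := eq_of_point_eq ((Nat.floor_lt hs.1).2 hs.2)
    ((Nat.floor_lt ht.1).2 ht.2) (hfract hs) (hfract ht) h
  rw [hfloor] at hfr
  linarith

variable (γ)

lemma image_polygonalPath :
    polygonalPath (fun t => S.src (γ.dart t)) γ.length '' Set.Ico 0 γ.length = γ.support := by
  have hlength : 0 < γ.length := by have := γ.three_le_length; lia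
  have hpoint {t : ℕ} {a : ℝ} (ha : a ∈ Set.Ico (0 : ℝ) 1) : γ.point t a ∈
      polygonalPath (fun t => S.src (γ.dart t)) γ.length '' Set.Ico 0 γ.length := by
    have ht : t % γ.length < γ.length := Nat.mod_lt t hlength
    have ht' : ((t % γ.length : ℕ) : ℝ) + 1 ≤ γ.length := by exact_mod_cast ht
    refine ⟨(t % γ.length : ℕ) + a, ⟨by have := ha.1; positivity, by linarith [ha.2]⟩, ?_⟩
    rw [polygonalPath_add _ ht ⟨ha.1, ha.2.le⟩, point, γ.dart_mod,
      γ.dart_eq_of_modEq ((Nat.mod_modEq t γ.length).add_right 1)]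
  ext x
  rw [mem_support]
  constructor
  · rintro ⟨s, hs, rfl⟩
    rw [polygonalPath_eq_point hs]
    rcases (sub_nonneg.2 (Nat.floor_le hs.1)).eq_or_lt with h | h
    · exact .inl ⟨⌊s⌋₊, by rw [← h, point_zero]⟩
    · exact .inr ⟨⌊s⌋₊, γ.mem_openEdge_iff.2
        ⟨_, ⟨h, by linarith [Nat.lt_floor_add_one s]⟩, rfl⟩⟩
  · rintro (⟨t, rfl⟩ | ⟨t, ht⟩)
    · simpa only [point_zero] using hpoint (t := t) ⟨le_rfl, one_pos⟩
    · obtain ⟨a, ha, rfl⟩ := γ.mem_openEdge_iff.1 ht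
      exact hpoint ⟨ha.1.le, ha.2⟩

lemma nonempty_support_homeomorph_sphere :
    Nonempty (γ.support ≃ₜ Metric.sphere (0 : EuclideanSpace ℝ (Fin 2)) 1) := by
  have hlength : 0 < γ.length := by have := γ.three_le_length; lia
  obtain ⟨k, hk⟩ := Nat.exists_eq_succ_of_ne_zero hlength.ne'
  rw [← γ.image_polygonalPath]
  refine nonempty_homeomorph_sphere_image_Ico (by exact_mod_cast hlength)
    (continuous_polygonalPath _).continuousOn ?_ γ.injOn_polygonalPath
  have hzero := polygonalPath_add (fun t => S.src (γ.dart t)) hlength (a := 0) (by simp)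
  have hlast := polygonalPath_add (fun t => S.src (γ.dart t)) (t := k) (k := γ.length)
    (by lia) (a := 1) (by simp)
  have hclosed := γ.dart_add_length 0
  have hcast : (k : ℝ) + 1 = γ.length := by rw [hk]; push_cast; rfl
  rw [hcast, AffineMap.lineMap_apply_one] at hlast
  rw [Nat.cast_zero, zero_add, AffineMap.lineMap_apply_zero] at hzero
  rw [hzero, hlast, ← hclosed, zero_add, hk]

end Support

end TriMap.SimpleCycle

namespace TriSurface

section Complement

variable {V : Type*} [NormedAddCommGroup V] [NormedSpace ℝ V] (S : TriSurface V)

lemma convex_openFace (d : S.Dart) : Convex ℝ (S.openFace d) := by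
  rintro _ ⟨u, v, w, hu, hv, hw, hsum, rfl⟩ _ ⟨u', v', w', hu', hv', hw', hsum', rfl⟩ s t hs ht hst
  have hpos {a b : ℝ} (ha : 0 < a) (hb : 0 < b) : 0 < s * a + t * b := by
    have := convex_Ioi (0 : ℝ) ha hb hs ht hst
    simpa using this
  exact ⟨s * u + t * u', s * v + t * v', s * w + t * w', hpos hu hu', hpos hv hv', hpos hw hw',
    by linear_combination s * hsum + t * hsum' + hst, by simp only [TriMap.bary]; module⟩

lemma nonempty_openFace (d : S.Dart) : (S.openFace d).Nonempty :=
  ⟨_, 1 / 3, 1 / 3, 1 / 3, by norm_num, by norm_num, by norm_num, by norm_num, rfl⟩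

lemma face_subset_closure_openFace (d : S.Dart) : S.face d ⊆ closure (S.openFace d) := by
  obtain ⟨_, u', v', w', hu', hv', hw', hsum', rfl⟩ := S.nonempty_openFace d
  intro x hx
  refine closure_mono ?_ (segment_subset_closure_openSegment
    (left_mem_segment ℝ x (S.bary d u' v' w')))
  obtain ⟨u, v, w, hu, hv, hw, hsum, rfl⟩ := S.mem_face.1 hx
  rintro _ ⟨a, b, ha, hb, hab, rfl⟩
  exact ⟨a * u + b * u', a * v + b * v', a * w + b * w', by positivity, by positivity,
    by positivity, by linear_combination a * hsum + b * hsum' + hab,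
    by simp only [TriMap.bary]; module⟩

lemma openFace_subset_face (d : S.Dart) : S.openFace d ⊆ S.face d := by
  rintro _ ⟨u, v, w, hu, hv, hw, hsum, rfl⟩
  exact S.mem_face.2 ⟨u, v, w, hu.le, hv.le, hw.le, hsum, rfl⟩

variable {S} {T : Set S.Dart} {U : Set V}

lemma isConnected_space_diff [Nonempty S.Dart] (hT : S.DualConnected T)
    (hface : ∀ d, Disjoint (S.openFace d) U) (hedge : ∀ d ∉ T, S.mid d ∉ U) :
    IsConnected (S.space \ U) := by
  have hopen (d : S.Dart) : S.openFace d ⊆ S.face d \ U :=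
    Set.subset_sdiff.2 ⟨S.openFace_subset_face d, hface d⟩
  have hne (d : S.Dart) : (S.face d \ U).Nonempty := (S.nonempty_openFace d).mono (hopen d)
  have hconn (d : S.Dart) : IsPreconnected (S.face d \ U) :=
    (S.convex_openFace d).isPreconnected.subset_closure (hopen d)
      (Set.sdiff_subset.trans (S.face_subset_closure_openFace d))
  rw [TriMap.space, Set.iUnion_sdiff]
  obtain ⟨d⟩ := ‹Nonempty S.Dart›
  refine ⟨(hne d).mono (Set.subset_iUnion _ d),
    IsPreconnected.iUnion_of_reflTransGen hconn fun d e => ReflTransGen.mono ?_ _ _ (hT d e)⟩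
  rintro a b (rfl | ⟨rfl, ha⟩)
  · rw [S.face_next, Set.inter_self]
    exact hne a
  · have hmid := S.openEdge_subset_edge _ (S.mid_mem_openEdge a)
    exact ⟨S.mid a, ⟨S.edge_subset_face _ hmid, hedge a ha⟩,
      ⟨S.edge_subset_face _ (by rwa [S.edge_flip]), hedge a ha⟩⟩

lemma isConnected_space_diff_support {ι : Type*} (F : S.CycleSystem ι) :
    IsConnected (S.space \ ⋃ i, (F.cycle i).support) := by
  refine isConnected_space_diff F.dualConnected (fun d => ?_) fun d hd => ?_
  · rw [Set.disjoint_left]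
    intro x hx hU
    simp only [Set.mem_iUnion, TriMap.SimpleCycle.support] at hU
    obtain ⟨i, t, ht⟩ := hU
    exact S.notMem_edge_of_mem_openFace hx _ ht
  · simp only [Set.mem_iUnion, TriMap.SimpleCycle.support, not_exists] at hd ⊢
    intro i t ht
    rcases S.eq_or_eq_flip_of_mem_openEdge (S.mid_mem_openEdge d) ht with h | h
    · exact hd i (h ▸ (F.cycle i).dart_mem_darts t)
    · refine hd i ?_
      rw [← S.flip_flip d, ← h]
      exact (F.cycle i).flip_dart_mem_darts t

end Complement

end TriSurface

section NonseparatingCircles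

lemma isConnected_compl_iff_image_val {X : Type*} [TopologicalSpace X] {s : Set X} {t : Set s} :
    IsConnected tᶜ ↔ IsConnected (s \ Subtype.val '' t) := by
  have himage : Subtype.val '' tᶜ = s \ Subtype.val '' t := by
    rw [Set.image_compl_eq_range_sdiff_image Subtype.val_injective, Subtype.range_coe]
  rw [← himage, IsConnected, IsConnected, Set.image_nonempty,
    Topology.IsInducing.subtypeVal.isPreconnected_image]

/-- The property whose largest `m` is the genus of `X`: there are `m` pairwise disjoint circles in
`X` whose union has connected complement. -/
def HasNonseparatingCircles (X : Type*) [TopologicalSpace X] (m : ℕ) : Prop :=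
  ∃ C : Fin m → Set X, (Pairwise fun i j => Disjoint (C i) (C j)) ∧
    (∀ i, Nonempty (C i ≃ₜ Metric.sphere (0 : EuclideanSpace ℝ (Fin 2)) 1)) ∧
    IsConnected (⋃ i, C i)ᶜ

lemma hasNonseparatingCircles_coe_iff {X : Type*} [TopologicalSpace X] {s : Set X} {m : ℕ} :
    HasNonseparatingCircles s m ↔ ∃ K : Fin m → Set X, (∀ i, K i ⊆ s) ∧
      Pairwise (Function.onFun Disjoint K) ∧
      (∀ i, Nonempty (K i ≃ₜ Metric.sphere (0 : EuclideanSpace ℝ (Fin 2)) 1)) ∧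
      IsConnected (s \ ⋃ i, K i) := by
  have homeo (t : Set s) : t ≃ₜ Subtype.val '' t :=
    Topology.IsEmbedding.subtypeVal.homeomorphImage t
  constructor
  · rintro ⟨C, hdisj, hcircle, hconn⟩
    refine ⟨fun i => Subtype.val '' C i, fun i => Subtype.coe_image_subset s (C i),
      fun i j hij => (Set.disjoint_image_iff Subtype.val_injective).2 (hdisj hij),
      fun i => (hcircle i).map (homeo (C i)).symm.trans, ?_⟩
    rwa [← Set.image_iUnion, ← isConnected_compl_iff_image_val]
  · rintro ⟨K, hK, hdisj, hcircle, hconn⟩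
    have himage (i : Fin m) : Subtype.val '' (Subtype.val ⁻¹' K i : Set s) = K i := by
      rw [Subtype.image_preimage_coe, Set.inter_eq_right]
      exact hK i
    refine ⟨fun i => Subtype.val ⁻¹' K i, fun i j hij => (hdisj hij).preimage _,
      fun i => (hcircle i).map ((homeo _).trans (Homeomorph.setCongr (himage i))).trans, ?_⟩
    rw [isConnected_compl_iff_image_val, Set.image_iUnion]
    simpa only [himage] using hconn

end NonseparatingCircles

namespace TriSurface

variable {V : Type*} [NormedAddCommGroup V] [NormedSpace ℝ V] {S : TriSurface V}

lemma twelve_mul_genus_eq (hS : IsPreconnected S.space) :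
    12 * (genus S.space : ℤ) = S.eulerDefect := by
  have hupper {m : ℕ} (hm : HasNonseparatingCircles S.space m) :
      12 * (m : ℤ) ≤ S.eulerDefect := by
    obtain ⟨K, hK, hdisj, hcircle, hconn⟩ := hasNonseparatingCircles_coe_iff.1 hm
    simpa only [Fintype.card_fin] using
      S.twelve_mul_card_le_eulerDefect_of_disjoint_circles hS hK hdisj hcircle hconn
  obtain ⟨S', m, hspace, -, hm, ⟨F⟩⟩ := S.exists_cycleSystem hS
  have hmem : HasNonseparatingCircles S.space m := by
    rw [hasNonseparatingCircles_coe_iff, ← hspace]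
    exact ⟨fun i => (F.cycle i).support, fun i => (F.cycle i).support_subset_space,
      fun i j hij => TriMap.SimpleCycle.disjoint_support (F.disjoint_vertices hij),
      fun i => (F.cycle i).nonempty_support_homeomorph_sphere,
      S'.isConnected_space_diff_support F⟩
  have hgreatest : IsGreatest {k | HasNonseparatingCircles S.space k} m :=
    ⟨hmem, fun k hk => by
      have := (hupper hk).trans hm
      lia⟩
  rw [show genus S.space = m from hgreatest.csSup_eq]
  exact (hupper hmem).antisymm hm

end TriSurface

/-! ### Triangulated complexes -/

namespace TriMap

section FaceVertices

variable {V : Type*}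

open Classical in
/-- The three vertices of the face of a dart. -/
noncomputable def faceVertices (X : TriMap V) (d : X.Dart) : Finset V :=
  {X.src d, X.src (X.next d), X.src (X.next (X.next d))}

variable {X : TriMap V} {d e : X.Dart} {v : V}

lemma mem_faceVertices :
    v ∈ X.faceVertices d ↔
      v = X.src d ∨ v = X.src (X.next d) ∨ v = X.src (X.next (X.next d)) := by
  simp only [faceVertices, Finset.mem_insert, Finset.mem_singleton]

lemma coe_faceVertices :
    (X.faceVertices d : Set V) = {X.src d, X.src (X.next d), X.src (X.next (X.next d))} := by
  ext v
  simp only [Finset.mem_coe, mem_faceVertices, Set.mem_insert_iff, Set.mem_singleton_iff]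

lemma src_mem_faceVertices : X.src d ∈ X.faceVertices d := mem_faceVertices.2 (.inl rfl)

lemma faceVertices_next : X.faceVertices (X.next d) = X.faceVertices d := by
  ext v
  simp only [mem_faceVertices, X.next_next_next]
  tauto

lemma SameFace.faceVertices_eq (h : X.SameFace d e) : X.faceVertices d = X.faceVertices e := by
  rcases h with rfl | rfl | rfl <;> simp only [faceVertices_next]

lemma exists_sameFace_src_eq (hv : v ∈ X.faceVertices d) : ∃ e, X.SameFace e d ∧ X.src e = v := by
  rcases mem_faceVertices.1 hv with rfl | rfl | rfl
  exacts [⟨_, .inl rfl, rfl⟩, ⟨_, .inr (.inl rfl), rfl⟩, ⟨_, .inr (.inr rfl), rfl⟩]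

variable [AddCommGroup V] [Module ℝ V]

lemma face_eq_convexHull_faceVertices : X.face d = convexHull ℝ (X.faceVertices d) := by
  rw [coe_faceVertices, face]

lemma SameFace.reflTransGen_step (h : X.SameFace d e) (x : V) :
    ReflTransGen (X.Step x) d e := by
  rcases h with rfl | rfl | rfl
  · exact .refl
  · exact Step.reflTransGen_symm (.inl rfl)
  · exact .single (.inl (X.next_next_next e).symm)

lemma exists_reflTransGen_step_src_eq {u w x : V} (hu : u ∈ X.faceVertices d)
    (hw : w ∈ X.faceVertices d) (huw : u ≠ w) (hx : x ∈ segment ℝ u w) :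
    ∃ e, ReflTransGen (X.Step x) d e ∧ X.src e = u ∧ X.src (X.next e) = w := by
  obtain ⟨e, hed, rfl⟩ := exists_sameFace_src_eq hu
  rw [← hed.faceVertices_eq] at hw
  have hde : ReflTransGen (X.Step x) d e := hed.symm.reflTransGen_step x
  rcases mem_faceVertices.1 hw with rfl | rfl | rfl
  · exact (huw rfl).elim
  · exact ⟨e, hde, rfl, rfl⟩
  · have hstep : X.Step x (X.next (X.next e)) (X.flip (X.next (X.next e))) :=
      .inr ⟨rfl, by rwa [edge, X.next_next_next, segment_symm]⟩
    refine ⟨X.flip (X.next (X.next e)), ?_, by simp, by simp⟩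
    exact ((hde.tail (.inl rfl)).tail (.inl rfl)).tail hstep

end FaceVertices

/-- The map `X` triangulates `K`: its faces are the triangles of `K`, each taken with a single
orientation, and every face of `K` lies in a triangle. -/
structure Triangulates {V : Type*} [AddCommGroup V] [Module ℝ V] (X : TriMap V)
    (K : SimplicialComplex ℝ V) : Prop where
  faceVertices_mem_faces : ∀ d, X.faceVertices d ∈ K.faces
  card_faceVertices : ∀ d, (X.faceVertices d).card = 3
  dart_ext : ∀ {d e}, X.src d = X.src e → X.src (X.next d) = X.src (X.next e) → d = e
  sameFace_of_faceVertices_eq : ∀ {d e}, X.faceVertices d = X.faceVertices e → X.SameFace d e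
  exists_subset_faceVertices : ∀ {s}, s ∈ K.faces → ∃ d, s ⊆ X.faceVertices d

/-- The triangles at each vertex are joined to one another across edges through that vertex. -/
def ConnectedStars {V : Type*} [AddCommGroup V] [Module ℝ V] (X : TriMap V) : Prop :=
  ∀ {v : V} {d e : X.Dart}, v ∈ X.faceVertices d → v ∈ X.faceVertices e →
    ReflTransGen (X.Step v) d e

namespace Triangulates

section Incidence

variable {V : Type*} [AddCommGroup V] [Module ℝ V] {X : TriMap V} {K : SimplicialComplex ℝ V}

lemma src_next_ne (h : X.Triangulates K) (d : X.Dart) : X.src (X.next d) ≠ X.src d := by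
  classical
  intro heq
  have hcard := h.card_faceVertices d
  rw [faceVertices, heq, Finset.insert_eq_of_mem (Finset.mem_insert_self ..)] at hcard
  have := Finset.card_le_two (a := X.src d) (b := X.src (X.next (X.next d)))
  lia

lemma src_next_next_ne (h : X.Triangulates K) (d : X.Dart) :
    X.src (X.next (X.next d)) ≠ X.src d := by
  have := h.src_next_ne (X.next (X.next d))
  rw [X.next_next_next] at this
  exact this.symm

lemma affineIndependent (h : X.Triangulates K) (d : X.Dart) :
    AffineIndependent ℝ ![X.src d, X.src (X.next d), X.src (X.next (X.next d))] := by
  let vertex : Fin 3 → X.faceVertices d :=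
    ![⟨X.src d, mem_faceVertices.2 (.inl rfl)⟩,
      ⟨X.src (X.next d), mem_faceVertices.2 (.inr (.inl rfl))⟩,
      ⟨X.src (X.next (X.next d)), mem_faceVertices.2 (.inr (.inr rfl))⟩]
  have hinj : Function.Injective vertex := by
    have h01 := h.src_next_ne d
    have h02 := h.src_next_next_ne d
    have h12 := h.src_next_ne (X.next d)
    intro i j hij
    have hij' := congrArg Subtype.val hij
    fin_cases i <;> fin_cases j <;> simp_all [vertex]
  convert (K.indep (h.faceVertices_mem_faces d)).comp_embedding ⟨vertex, hinj⟩ using 1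
  funext i
  fin_cases i <;> rfl

lemma space_eq (h : X.Triangulates K) : X.space = K.space := by
  ext x
  rw [X.mem_space, SimplicialComplex.mem_space_iff]
  constructor
  · rintro ⟨d, hd⟩
    exact ⟨X.faceVertices d, h.faceVertices_mem_faces d, by rwa [← face_eq_convexHull_faceVertices]⟩
  · rintro ⟨s, hs, hx⟩
    obtain ⟨d, hd⟩ := h.exists_subset_faceVertices hs
    rw [← Finset.coe_subset] at hd
    exact ⟨d, by rw [face_eq_convexHull_faceVertices]; exact convexHull_mono hd hx⟩

lemma face_inter_face (h : X.Triangulates K) (d e : X.Dart) :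
    X.face d ∩ X.face e = convexHull ℝ (X.faceVertices d ∩ X.faceVertices e : Set V) := by
  rw [face_eq_convexHull_faceVertices, face_eq_convexHull_faceVertices]
  exact K.convexHull_inter_convexHull (h.faceVertices_mem_faces d) (h.faceVertices_mem_faces e)

lemma reflTransGen_step_of_mem_segment (h : X.Triangulates K) {d e : X.Dart} {u w x : V}
    (hud : u ∈ X.faceVertices d) (hwd : w ∈ X.faceVertices d) (hue : u ∈ X.faceVertices e)
    (hwe : w ∈ X.faceVertices e) (huw : u ≠ w) (hx : x ∈ segment ℝ u w) :
    ReflTransGen (X.Step x) d e := by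
  obtain ⟨d', hd', rfl, rfl⟩ := exists_reflTransGen_step_src_eq hud hwd huw hx
  obtain ⟨e', he', hsrc, htgt⟩ := exists_reflTransGen_step_src_eq hue hwe huw hx
  obtain rfl := h.dart_ext hsrc htgt
  exact hd'.trans (reflTransGen_step_symm he')

lemma faceVertices_eq_of_subset (h : X.Triangulates K) {d : X.Dart} {s : Finset V}
    (hs : s ⊆ X.faceVertices d) (hcard : s.card = 3) : X.faceVertices d = s :=
  (Finset.eq_of_subset_of_card_le hs (by rw [hcard, h.card_faceVertices])).symm

lemma reflTransGen_step_of_mem_face (h : X.Triangulates K) {d e : X.Dart} {v x y : V}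
    (hvd : v ∈ X.faceVertices d) (hve : v ∈ X.faceVertices e) (hxd : x ∈ X.face d)
    (hxe : x ∈ X.face e) (hxv : x ≠ v) (hy : y ∈ segment ℝ v x) :
    ReflTransGen (X.Step y) d e := by
  classical
  have hx : x ∈ convexHull ℝ (X.faceVertices d ∩ X.faceVertices e : Set V) :=
    h.face_inter_face d e ▸ ⟨hxd, hxe⟩
  obtain ⟨u, ⟨hud, hue⟩, huv⟩ : ∃ u ∈ (X.faceVertices d ∩ X.faceVertices e : Set V), u ≠ v := by
    by_contra! hall
    exact hxv (by simpa using convexHull_mono (t := {v}) hall hx)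
  by_cases hw : ∃ w ∈ (X.faceVertices d ∩ X.faceVertices e : Set V), w ≠ v ∧ w ≠ u
  · obtain ⟨w, ⟨hwd, hwe⟩, hwv, hwu⟩ := hw
    have hcard : ({v, u, w} : Finset V).card = 3 :=
      Finset.card_eq_three.2 ⟨v, u, w, huv.symm, hwv.symm, hwu.symm, rfl⟩
    refine (h.sameFace_of_faceVertices_eq ?_).reflTransGen_step y
    rw [h.faceVertices_eq_of_subset (s := {v, u, w}) ?_ hcard,
      h.faceVertices_eq_of_subset (s := {v, u, w}) ?_ hcard]
    · simpa [Finset.insert_subset_iff] using ⟨hve, hue, hwe⟩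
    · simpa [Finset.insert_subset_iff] using ⟨hvd, hud, hwd⟩
  · have hsub : (X.faceVertices d ∩ X.faceVertices e : Set V) ⊆ {v, u} := by
      intro w hwmem
      by_contra hne
      simp only [Set.mem_insert_iff, Set.mem_singleton_iff, not_or] at hne
      exact hw ⟨w, hwmem, hne⟩
    have hxseg : x ∈ segment ℝ v u := convexHull_pair (𝕜 := ℝ) v u ▸ convexHull_mono hsub hx
    exact h.reflTransGen_step_of_mem_segment hvd hud hve hue huv.symm
      ((convex_segment v u).segment_subset (left_mem_segment ..) hxseg hy)

lemma reflTransGen_step_of_mem_face_of_connectedStars (h : X.Triangulates K)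
    (hstar : X.ConnectedStars) {x : V} {d e : X.Dart} (hd : x ∈ X.face d) (he : x ∈ X.face e) :
    ReflTransGen (X.Step x) d e := by
  obtain ⟨v, hvd, hve⟩ :
      (X.faceVertices d ∩ X.faceVertices e : Set V).Nonempty := by
    rw [← convexHull_nonempty_iff (𝕜 := ℝ), ← h.face_inter_face]
    exact ⟨x, hd, he⟩
  rcases eq_or_ne x v with rfl | hxv
  · exact hstar hvd hve
  · exact h.reflTransGen_step_of_mem_face hvd hve hd he hxv (right_mem_segment ..)

/-- The surface defined by a triangulation with connected vertex stars. -/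
noncomputable def toTriSurface (h : X.Triangulates K) (hstar : X.ConnectedStars) :
    TriSurface V where
  toTriMap := X
  affineIndependent := h.affineIndependent
  reflTransGen_step := h.reflTransGen_step_of_mem_face_of_connectedStars hstar

lemma finite_faces (h : X.Triangulates K) : K.faces.Finite := by
  refine (Set.finite_iUnion fun d => (X.faceVertices d).powerset.finite_toSet).subset fun s hs => ?_
  obtain ⟨d, hd⟩ := h.exists_subset_faceVertices hs
  exact Set.mem_iUnion.2 ⟨d, Finset.mem_coe.2 (Finset.mem_powerset.2 hd)⟩

end Incidence

end Triangulates

end TriMap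

lemma card_eq_mul_ncard_range {A B : Type*} [Fintype A] {f : A → B} {c : ℕ}
    (hf : ∀ a, {a' | f a' = f a}.ncard = c) : Fintype.card A = c * (Set.range f).ncard := by
  classical
  have hfiber : ∀ b ∈ Finset.univ.image f, (Finset.univ.filter fun a => f a = b).card = c := by
    intro b hb
    obtain ⟨a, -, rfl⟩ := Finset.mem_image.1 hb
    rw [← hf a, ← Set.ncard_coe_finset, Finset.coe_filter_univ]
  rw [← Finset.card_univ, Finset.card_eq_sum_card_image f, Finset.sum_const_nat hfiber, mul_comm,
    ← Set.image_univ, ← Finset.coe_univ, ← Finset.coe_image, Set.ncard_coe_finset]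

namespace TriMap.Triangulates

section Counting

variable {V : Type*} [AddCommGroup V] [Module ℝ V] {X : TriMap V} {K : SimplicialComplex ℝ V}

lemma range_src (h : X.Triangulates K) : Set.range X.src = K.vertices := by
  ext v
  constructor
  · rintro ⟨d, rfl⟩
    exact K.down_closed (h.faceVertices_mem_faces d)
      (Finset.singleton_subset_iff.2 src_mem_faceVertices) (Finset.singleton_nonempty _)
  · intro hv
    obtain ⟨d, hd⟩ := h.exists_subset_faceVertices hv
    obtain ⟨e, -, he⟩ := exists_sameFace_src_eq (hd (Finset.mem_singleton_self v))
    exact ⟨e, he⟩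

lemma range_faceVertices (h : X.Triangulates K) :
    Set.range X.faceVertices = {t | t ∈ K.faces ∧ t.card = 3} := by
  ext t
  constructor
  · rintro ⟨d, rfl⟩
    exact ⟨h.faceVertices_mem_faces d, h.card_faceVertices d⟩
  · rintro ⟨ht, hcard⟩
    obtain ⟨d, hd⟩ := h.exists_subset_faceVertices ht
    exact ⟨d, h.faceVertices_eq_of_subset hd hcard⟩

lemma card_dart_eq_three_mul (h : X.Triangulates K) :
    Fintype.card X.Dart = 3 * {t | t ∈ K.faces ∧ t.card = 3}.ncard := by
  rw [← h.range_faceVertices]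
  refine card_eq_mul_ncard_range fun d => Set.ncard_eq_three.2 ⟨d, X.next d, X.next (X.next d), ?_⟩
  have hnext (e : X.Dart) : e ≠ X.next e := fun he => h.src_next_ne e (congrArg X.src he).symm
  refine ⟨hnext d, fun he => h.src_next_next_ne d (congrArg X.src he).symm, hnext _, ?_⟩
  ext e
  exact ⟨h.sameFace_of_faceVertices_eq, SameFace.faceVertices_eq⟩

open Classical in
lemma range_edgeVertices (h : X.Triangulates K) :
    Set.range (fun d => ({X.src d, X.src (X.next d)} : Finset V)) =
      {s | s ∈ K.faces ∧ s.card = 2} := by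
  ext s
  constructor
  · rintro ⟨d, rfl⟩
    refine ⟨K.down_closed (h.faceVertices_mem_faces d) ?_ (Finset.insert_nonempty _ _),
      Finset.card_pair (h.src_next_ne d).symm⟩
    simp [Finset.insert_subset_iff, mem_faceVertices]
  · rintro ⟨hs, hcard⟩
    obtain ⟨u, w, huw, rfl⟩ := Finset.card_eq_two.1 hcard
    obtain ⟨d, hd⟩ := h.exists_subset_faceVertices hs
    obtain ⟨e, -, rfl, rfl⟩ := exists_reflTransGen_step_src_eq (hd (by simp)) (hd (by simp)) huw
      (left_mem_segment ℝ u w)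
    exact ⟨e, rfl⟩

lemma card_dart_eq_two_mul (h : X.Triangulates K) :
    Fintype.card X.Dart = 2 * {s | s ∈ K.faces ∧ s.card = 2}.ncard := by
  classical
  rw [← h.range_edgeVertices]
  refine card_eq_mul_ncard_range fun d => Set.ncard_eq_two.2 ⟨d, X.flip d, fun he => ?_, ?_⟩
  · exact h.src_next_ne d (by rw [← X.src_flip, ← he])
  ext e
  simp only [Set.mem_ofPred_eq, Set.mem_insert_iff, Set.mem_singleton_iff, ← Finset.coe_inj,
    Finset.coe_pair, Set.pair_eq_pair_iff]
  constructor
  · rintro (⟨hsrc, htgt⟩ | ⟨hsrc, htgt⟩)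
    · exact .inl (h.dart_ext hsrc htgt)
    · exact .inr (h.dart_ext (by rw [hsrc, X.src_flip]) (by rw [htgt, X.src_next_flip]))
  · rintro (rfl | rfl)
    · exact .inl ⟨rfl, rfl⟩
    · exact .inr ⟨X.src_flip d, X.src_next_flip d⟩

lemma eulerDefect_eq (h : X.Triangulates K) :
    X.eulerDefect = 12 - 6 * ((K.vertices.ncard : ℤ)
      - {s | s ∈ K.faces ∧ s.card = 2}.ncard + {t | t ∈ K.faces ∧ t.card = 3}.ncard) := by
  have hthree := h.card_dart_eq_three_mul
  have htwo := h.card_dart_eq_two_mul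
  rw [TriMap.eulerDefect, numVertices, h.range_src]
  lia

end Counting

end TriMap.Triangulates

/-! ### Local connectedness at vertices -/

section PuncturedLocallyConnected

open Topology

/-- Every point has arbitrarily small neighbourhoods that remain connected when the point itself is
removed from them. -/
def PuncturedLocallyConnected (Z : Type*) [TopologicalSpace Z] : Prop :=
  ∀ z : Z, ∀ N ∈ 𝓝 z, ∃ W ⊆ N, W ∈ 𝓝 z ∧ IsConnected (W \ {z})

lemma PuncturedLocallyConnected.of_isOpenEmbedding {Y Z : Type*} [TopologicalSpace Y]
    [TopologicalSpace Z] (hZ : PuncturedLocallyConnected Z) {f : Y → Z} (hf : IsOpenEmbedding f) :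
    PuncturedLocallyConnected Y := by
  intro y N hN
  obtain ⟨W, hWN, hW, hconn⟩ := hZ (f y) (f '' N) (hf.isOpenMap.image_mem_nhds hN)
  refine ⟨f ⁻¹' W, fun x hx => (hf.injective.mem_set_image).1 (hWN hx),
    hf.continuous.continuousAt.preimage_mem_nhds hW, ?_⟩
  have hpre : f ⁻¹' W \ {y} = f ⁻¹' (W \ {f y}) := by
    ext x
    simp only [Set.mem_sdiff, Set.mem_preimage, Set.mem_singleton_iff, hf.injective.eq_iff]
  rw [hpre]
  exact hconn.preimage_of_isOpenMap hf.injective hf.isOpenMap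
    (Set.sdiff_subset.trans (hWN.trans (Set.image_subset_range f N)))

lemma puncturedLocallyConnected_coe_iff {Z : Type*} [TopologicalSpace Z] {s : Set Z} :
    PuncturedLocallyConnected s ↔
      ∀ z ∈ s, ∀ N ∈ 𝓝[s] z, ∃ W ⊆ N ∩ s, W ∈ 𝓝[s] z ∧ IsConnected (W \ {z}) := by
  have himage (z : s) (W : Set s) :
      IsConnected (W \ {z}) ↔ IsConnected (((↑) '' W : Set Z) \ {(z : Z)}) := by
    rw [← Set.image_singleton, ← Set.image_sdiff Subtype.val_injective, IsConnected, IsConnected,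
      Set.image_nonempty, IsInducing.subtypeVal.isPreconnected_image]
  constructor
  · intro h z hz N hN
    obtain ⟨W, hWN, hW, hconn⟩ := h ⟨z, hz⟩ ((↑) ⁻¹' N) (preimage_coe_mem_nhds_subtype.2 hN)
    refine ⟨(↑) '' W, ?_, ?_, (himage _ _).1 hconn⟩
    · rintro _ ⟨x, hx, rfl⟩
      exact ⟨hWN hx, x.2⟩
    · rw [nhdsWithin_eq_map_subtype_coe hz]
      exact Filter.image_mem_map hW
  · rintro h ⟨z, hz⟩ N hN
    obtain ⟨W, hWN, hW, hconn⟩ := h z hz ((↑) '' N)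
      (by rw [nhdsWithin_eq_map_subtype_coe hz]; exact Filter.image_mem_map hN)
    refine ⟨(↑) ⁻¹' W, ?_, preimage_coe_mem_nhds_subtype.2 hW, (himage _ _).2 ?_⟩
    · exact fun x hx => Subtype.val_injective.mem_set_image.1 (hWN hx).1
    · rwa [Subtype.image_preimage_coe, Set.inter_eq_right.2 (hWN.trans Set.inter_subset_right)]

variable {E : Type*} [NormedAddCommGroup E] [NormedSpace ℝ E] {s : Set E}

lemma isConnected_ball_sdiff_singleton (hE : 1 < Module.rank ℝ E) (x : E) {r : ℝ} (hr : 0 < r) :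
    IsConnected (Metric.ball x r \ {x}) := by
  let φ := OpenPartialHomeomorph.univBall x r
  have himage : φ '' {0}ᶜ = Metric.ball x r \ {x} := by
    have hinj : Function.Injective φ :=
      Set.injOn_univ.1 (OpenPartialHomeomorph.univBall_source x r ▸ φ.injOn)
    have hrange : φ '' Set.univ = Metric.ball x r := by
      rw [← OpenPartialHomeomorph.univBall_source x r, φ.image_source_eq_target,
        OpenPartialHomeomorph.univBall_target x hr]
    rw [Set.compl_eq_univ_sdiff, Set.image_sdiff hinj, hrange, Set.image_singleton,
      OpenPartialHomeomorph.univBall_apply_zero]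
  rw [← himage]
  exact (isConnected_compl_singleton_of_one_lt_rank hE 0).image φ
    (OpenPartialHomeomorph.continuous_univBall x r).continuousOn

lemma isConnected_sdiff_singleton_of_notMem_interior (hs : Convex ℝ s)
    (hne : (interior s).Nonempty) {x : E} (hx : x ∉ interior s) : IsConnected (s \ {x}) := by
  refine IsConnected.subset_closure ⟨hne, hs.interior.isPreconnected⟩
    (Set.subset_sdiff_singleton interior_subset hx) ?_
  rw [hs.closure_interior_eq_closure_of_nonempty_interior hne]
  exact Set.sdiff_subset.trans subset_closure

lemma puncturedLocallyConnected_of_convex (hE : 1 < Module.rank ℝ E) (hs : Convex ℝ s)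
    (hne : (interior s).Nonempty) : PuncturedLocallyConnected s := by
  refine puncturedLocallyConnected_coe_iff.2 fun x hx N hN => ?_
  obtain ⟨r, hr, hball⟩ := Metric.mem_nhdsWithin_iff.1 hN
  by_cases hxint : x ∈ interior s
  · obtain ⟨r', hr', hball'⟩ := Metric.mem_nhds_iff.1 (mem_interior_iff_mem_nhds.1 hxint)
    have hs' : Metric.ball x (min r r') ⊆ s :=
      (Metric.ball_subset_ball (min_le_right r r')).trans hball'
    have hmin : 0 < min r r' := lt_min hr hr'
    refine ⟨Metric.ball x (min r r'), fun y hy => ⟨hball ⟨?_, hs' hy⟩, hs' hy⟩,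
      mem_nhdsWithin_of_mem_nhds (Metric.ball_mem_nhds x hmin),
      isConnected_ball_sdiff_singleton hE x hmin⟩
    exact Metric.ball_subset_ball (min_le_left r r') hy
  · have hmeet : (interior (Metric.ball x r ∩ s)).Nonempty := by
      rw [interior_inter, Metric.isOpen_ball.interior_eq]
      refine mem_closure_iff_nhds.1 ?_ _ (Metric.ball_mem_nhds x hr)
      rw [hs.closure_interior_eq_closure_of_nonempty_interior hne]
      exact subset_closure hx
    refine ⟨Metric.ball x r ∩ s, Set.subset_inter hball Set.inter_subset_right,
      Filter.inter_mem (mem_nhdsWithin_of_mem_nhds (Metric.ball_mem_nhds x hr))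
        self_mem_nhdsWithin, ?_⟩
    exact isConnected_sdiff_singleton_of_notMem_interior ((convex_ball x r).inter hs) hmeet
      fun hx' => hxint (interior_mono Set.inter_subset_right hx')

lemma one_lt_rank_real_prod_real : 1 < Module.rank ℝ (ℝ × ℝ) :=
  Module.one_lt_rank_of_one_lt_finrank (by simp)

lemma puncturedLocallyConnected_real_prod_real : PuncturedLocallyConnected (ℝ × ℝ) :=
  (puncturedLocallyConnected_of_convex one_lt_rank_real_prod_real convex_univ
    (by simp)).of_isOpenEmbedding (Homeomorph.Set.univ (ℝ × ℝ)).symm.isOpenEmbedding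

lemma puncturedLocallyConnected_halfPlane : PuncturedLocallyConnected HalfPlane := by
  refine puncturedLocallyConnected_of_convex one_lt_rank_real_prod_real
    (convex_halfSpace_ge (LinearMap.snd ℝ ℝ ℝ).isLinear 0) ⟨(0, 1), mem_interior.2 ?_⟩
  exact ⟨{p | 0 < p.2}, fun p (hp : 0 < p.2) => hp.le, isOpen_lt continuous_const continuous_snd,
    one_pos (α := ℝ)⟩

lemma LocallyPlanar.puncturedLocallyConnected {K : SimplicialComplex ℝ (Pt n)}
    (hK : LocallyPlanar K) : PuncturedLocallyConnected K.space := by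
  refine puncturedLocallyConnected_coe_iff.2 fun x hx N hN => ?_
  obtain ⟨U, hUK, hU, hpunct⟩ :
      ∃ U ⊆ K.space, U ∈ 𝓝[K.space] x ∧ PuncturedLocallyConnected U := by
    rcases (hK x hx).2 with ⟨U, hUK, hU, V, hV, ⟨e⟩⟩ | ⟨U, hUK, hU, V, hV, ⟨e⟩⟩
    · exact ⟨U, hUK, hU, puncturedLocallyConnected_real_prod_real.of_isOpenEmbedding
        (hV.isOpenEmbedding_subtypeVal.comp e.isOpenEmbedding)⟩
    · exact ⟨U, hUK, hU, puncturedLocallyConnected_halfPlane.of_isOpenEmbedding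
        (hV.isOpenEmbedding_subtypeVal.comp e.isOpenEmbedding)⟩
  have hnhds : 𝓝[U] x = 𝓝[K.space] x :=
    le_antisymm (nhdsWithin_mono x hUK) (nhdsWithin_le_of_mem hU)
  rw [← hnhds] at hN ⊢
  obtain ⟨W, hWN, hW, hconn⟩ :=
    puncturedLocallyConnected_coe_iff.1 hpunct x (mem_of_mem_nhdsWithin hx hU) N hN
  exact ⟨W, hWN.trans (Set.inter_subset_inter_right N hUK), hW, hconn⟩

end PuncturedLocallyConnected

section OpenStar

open Topology

variable {V : Type*} [NormedAddCommGroup V] [NormedSpace ℝ V] {K : SimplicialComplex ℝ V} {v : V}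

/-- The open star of `v`: the part of the space that meets only faces having `v` as a vertex. -/
def openStar (K : SimplicialComplex ℝ V) (v : V) : Set V :=
  {x ∈ K.space | ∀ s ∈ K.faces, x ∈ convexHull ℝ (s : Set V) → v ∈ s}

lemma openStar_mem_nhdsWithin (hfin : K.faces.Finite) (hv : v ∈ K.vertices) :
    openStar K v ∈ 𝓝[K.space] v := by
  have hclosed : IsClosed (⋃ s ∈ {s ∈ K.faces | v ∉ s}, convexHull ℝ (s : Set V)) :=
    (hfin.subset (Set.sep_subset _ _)).isClosed_biUnion fun s _ =>
      s.finite_toSet.isClosed_convexHull ℝ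
  have hnot : v ∉ ⋃ s ∈ {s ∈ K.faces | v ∉ s}, convexHull ℝ (s : Set V) := by
    simp only [Set.mem_iUnion, not_exists]
    rintro s ⟨hs, hvs⟩ hmem
    have hinter : v ∈ convexHull ℝ ((({v} : Finset V) : Set V) ∩ s) := by
      rw [← K.convexHull_inter_convexHull hv hs]
      exact ⟨by simp, hmem⟩
    rw [Finset.coe_singleton, Set.singleton_inter_eq_empty.2 hvs, convexHull_empty] at hinter
    exact hinter
  filter_upwards [self_mem_nhdsWithin, mem_nhdsWithin_of_mem_nhds
    (hclosed.isOpen_compl.mem_nhds hnot)] with x hx hxs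
  refine ⟨hx, fun s hs hmem => by_contra fun hvs => hxs ?_⟩
  exact Set.mem_biUnion (show s ∈ {s ∈ K.faces | v ∉ s} from ⟨hs, hvs⟩) hmem

lemma nonempty_inter_openSegment_of_mem_nhdsWithin {s W : Set V} {u : V} (huv : u ≠ v)
    (hs : openSegment ℝ v u ⊆ s) (hW : W ∈ 𝓝[s] v) :
    ((W \ {v}) ∩ openSegment ℝ v u).Nonempty := by
  obtain ⟨O, hO, hOW⟩ := mem_nhdsWithin_iff_exists_mem_nhds_inter.1 hW
  have hv : v ∈ closure (openSegment ℝ v u) := by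
    rw [closure_openSegment]
    exact left_mem_segment ℝ v u
  obtain ⟨x, hxO, hx⟩ := mem_closure_iff_nhds.1 hv O hO
  refine ⟨x, ⟨hOW ⟨hxO, hs hx⟩, ?_⟩, hx⟩
  rintro rfl
  exact huv (left_mem_openSegment_iff.1 hx).symm

lemma exists_connected_punctured_openStar (hK : PuncturedLocallyConnected K.space)
    (hfin : K.faces.Finite) (hv : v ∈ K.vertices) :
    ∃ W ⊆ openStar K v, W ∈ 𝓝[K.space] v ∧ IsConnected (W \ {v}) := by
  obtain ⟨W, hW, hnhds, hconn⟩ := puncturedLocallyConnected_coe_iff.1 hK v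
    (K.vertices_subset_space hv) (openStar K v) (openStar_mem_nhdsWithin hfin hv)
  exact ⟨W, hW.trans Set.inter_subset_left, hnhds, hconn⟩

lemma exists_mem_faces_ne_singleton (hK : PuncturedLocallyConnected K.space)
    (hfin : K.faces.Finite) (hv : v ∈ K.vertices) : ∃ s ∈ K.faces, v ∈ s ∧ s ≠ {v} := by
  obtain ⟨W, hW, -, ⟨x, hxW, hxv⟩, -⟩ := exists_connected_punctured_openStar hK hfin hv
  obtain ⟨hx, hstar⟩ := hW hxW
  obtain ⟨s, hs, hxs⟩ := SimplicialComplex.mem_space_iff.1 hx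
  refine ⟨s, hs, hstar s hs hxs, ?_⟩
  rintro rfl
  exact hxv (by simpa using hxs)

namespace TriMap.Triangulates

variable {X : TriMap V}

lemma nonempty_inter_face (h : X.Triangulates K) {d : X.Dart} (hd : v ∈ X.faceVertices d)
    {W : Set V} (hW : W ∈ 𝓝[K.space] v) : ((W \ {v}) ∩ X.face d).Nonempty := by
  obtain ⟨e, hed, rfl⟩ := exists_sameFace_src_eq hd
  have hsub : openSegment ℝ (X.src e) (X.src (X.next e)) ⊆ X.face d := by
    rw [face_eq_convexHull_faceVertices, ← hed.faceVertices_eq]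
    exact (openSegment_subset_segment ..).trans <| segment_subset_convexHull
      (mem_faceVertices.2 (.inl rfl)) (mem_faceVertices.2 (.inr (.inl rfl)))
  have hspace : X.face d ⊆ K.space := h.space_eq ▸ fun x hx => X.mem_space.2 ⟨d, hx⟩
  exact (nonempty_inter_openSegment_of_mem_nhdsWithin (h.src_next_ne e) (hsub.trans hspace) hW).mono
    (Set.inter_subset_inter_right _ hsub)

/-- If the triangles at `v` fell into two classes not joined across edges at `v`, the two unions
would meet only in `v` and so disconnect every small punctured neighbourhood of `v`. -/
lemma connectedStars (h : X.Triangulates K) (hK : PuncturedLocallyConnected K.space) :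
    X.ConnectedStars := by
  intro v d e hd he
  have hv : v ∈ K.vertices :=
    K.down_closed (h.faceVertices_mem_faces d) (Finset.singleton_subset_iff.2 hd)
      (Finset.singleton_nonempty v)
  obtain ⟨W, hWstar, hW, -, hconn⟩ := exists_connected_punctured_openStar hK h.finite_faces hv
  by_contra hnot
  let union (P : X.Dart → Prop) : Set V := ⋃ a : {a // v ∈ X.faceVertices a ∧ P a}, X.face a
  have hclosed (P : X.Dart → Prop) : IsClosed (union P) := isClosed_iUnion_of_finite fun a =>
    (Set.toFinite _).isClosed_convexHull ℝ
  have hmeets {P : X.Dart → Prop} {a : X.Dart} (ha : v ∈ X.faceVertices a) (hP : P a) :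
      ((W \ {v}) ∩ union P).Nonempty :=
    (h.nonempty_inter_face ha hW).mono
      (Set.inter_subset_inter_right _ (Set.subset_iUnion_of_subset ⟨a, ha, hP⟩ subset_rfl))
  have hcover : W \ {v} ⊆ union (ReflTransGen (X.Step v) d) ∪
      union (fun a => ¬ ReflTransGen (X.Step v) d a) := by
    rintro x ⟨hxW, -⟩
    obtain ⟨hx, hstar⟩ := hWstar hxW
    obtain ⟨a, ha⟩ := X.mem_space.1 (h.space_eq ▸ hx)
    have hva : v ∈ X.faceVertices a :=
      hstar _ (h.faceVertices_mem_faces a) (by rwa [← face_eq_convexHull_faceVertices])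
    by_cases hda : ReflTransGen (X.Step v) d a
    · exact .inl (Set.mem_iUnion.2 ⟨⟨a, hva, hda⟩, ha⟩)
    · exact .inr (Set.mem_iUnion.2 ⟨⟨a, hva, hda⟩, ha⟩)
  obtain ⟨x, ⟨-, hxv⟩, hxA, hxB⟩ := isPreconnected_closed_iff.1 hconn _ _ (hclosed _) (hclosed _)
    hcover (hmeets hd .refl) (hmeets he hnot)
  obtain ⟨⟨a, hva, hda⟩, hxa⟩ := Set.mem_iUnion.1 hxA
  obtain ⟨⟨b, hvb, hdb⟩, hxb⟩ := Set.mem_iUnion.1 hxB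
  exact hdb (hda.trans
    (h.reflTransGen_step_of_mem_face hva hvb hxa hxb hxv (left_mem_segment ℝ v x)))

end TriMap.Triangulates

end OpenStar

/-! ### Orientations -/

/-- The map whose darts are determined by their endpoints, each having an oppositely directed one,
which then serves as its flip. -/
noncomputable abbrev TriMap.ofOppositeDarts {V : Type*} {Dart : Type} [Fintype Dart] [Nonempty Dart]
    (next : Dart → Dart) (src : Dart → V) (hnext : ∀ d, next (next (next d)) = d)
    (hext : ∀ {d e}, src d = src e → src (next d) = src (next e) → d = e)
    (hopp : ∀ d, ∃ e, src e = src (next d) ∧ src (next e) = src d) : TriMap V where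
  Dart := Dart
  next := next
  flip d := (hopp d).choose
  src := src
  next_next_next := hnext
  flip_flip d := by
    have hd := (hopp d).choose_spec
    have hd' := (hopp (hopp d).choose).choose_spec
    exact hext (hd'.1.trans hd.2) (hd'.2.trans hd.1)
  src_flip d := (hopp d).choose_spec.1

section Orientation

variable {K : SimplicialComplex ℝ (Pt n)}

/-- The three-element faces of `K`. -/
abbrev Triangle (K : SimplicialComplex ℝ (Pt n)) := {t : Finset (Pt n) // t ∈ K.faces ∧ t.card = 3}

/-- The components of a cyclic ordering of three vertices, indexed modulo `3`. -/
def cyclicVertex (o : Pt n × Pt n × Pt n) : Fin 3 → Pt n := ![o.1, o.2.1, o.2.2]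

lemma mem_triDirs_iff {o : Pt n × Pt n × Pt n} {p : Pt n × Pt n} :
    p ∈ triDirs o ↔ ∃ i, p = (cyclicVertex o i, cyclicVertex o (i + 1)) := by
  simp [triDirs, cyclicVertex, Fin.exists_fin_succ]

/-- A choice of cyclic orderings as in the definition of `Orientable`. -/
structure IsOrientation (K : SimplicialComplex ℝ (Pt n))
    (ori : Finset (Pt n) → Pt n × Pt n × Pt n) : Prop where
  coe_eq : ∀ t ∈ K.faces, t.card = 3 →
    (t : Set (Pt n)) = {(ori t).1, (ori t).2.1, (ori t).2.2}
  swap_mem_triDirs : ∀ t₁ ∈ K.faces, ∀ t₂ ∈ K.faces, t₁.card = 3 → t₂.card = 3 → t₁ ≠ t₂ →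
    ∀ e ∈ K.faces, e.card = 2 → e ⊆ t₁ → e ⊆ t₂ →
    ∀ x y : Pt n, x ∈ e → y ∈ e → x ≠ y →
      (x, y) ∈ triDirs (ori t₁) → (y, x) ∈ triDirs (ori t₂)

namespace IsOrientation

variable {ori : Finset (Pt n) → Pt n × Pt n × Pt n} {t t' : Triangle K} {i : Fin 3}

lemma mem_iff (h : IsOrientation K ori) {x : Pt n} :
    x ∈ t.1 ↔ ∃ i, cyclicVertex (ori t) i = x := by
  rw [← Finset.mem_coe, h.coe_eq t.1 t.2.1 t.2.2]
  simp [cyclicVertex, Fin.exists_fin_succ, eq_comm]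

lemma cyclicVertex_injective (h : IsOrientation K ori) (t : Triangle K) :
    Function.Injective (cyclicVertex (ori t)) := by
  classical
  have himage : Finset.univ.image (cyclicVertex (ori t)) = t.1 := by
    ext x
    simp [h.mem_iff]
  rw [← Set.injOn_univ, ← Finset.coe_univ]
  exact Finset.card_image_iff.1 (by rw [himage, t.2.2, Finset.card_fin])

open Classical in
lemma edge_mem_faces (h : IsOrientation K ori) (t : Triangle K) (i : Fin 3) :
    {cyclicVertex (ori t) i, cyclicVertex (ori t) (i + 1)} ∈ K.faces := by
  refine K.down_closed t.2.1 ?_ (Finset.insert_nonempty _ _)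
  simp [Finset.insert_subset_iff, h.mem_iff]

lemma exists_reverse (h : IsOrientation K ori) (hne : t ≠ t')
    (hsrc : cyclicVertex (ori t) i ∈ t'.1) (htgt : cyclicVertex (ori t) (i + 1) ∈ t'.1) :
    ∃ j, cyclicVertex (ori t') j = cyclicVertex (ori t) (i + 1) ∧
      cyclicVertex (ori t') (j + 1) = cyclicVertex (ori t) i := by
  classical
  have hxy : cyclicVertex (ori t) i ≠ cyclicVertex (ori t) (i + 1) :=
    (h.cyclicVertex_injective t).ne (by simp)
  obtain ⟨j, hj⟩ := mem_triDirs_iff.1 <| h.swap_mem_triDirs t t.2.1 t' t'.2.1 t.2.2 t'.2.2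
    (Subtype.coe_ne_coe.2 hne) _ (h.edge_mem_faces t i) (Finset.card_pair hxy)
    (by simp [Finset.insert_subset_iff, h.mem_iff])
    (by simpa [Finset.insert_subset_iff] using ⟨hsrc, htgt⟩)
    _ _ (by simp) (by simp) hxy (mem_triDirs_iff.2 ⟨i, rfl⟩)
  exact ⟨j, (congrArg Prod.fst hj).symm, (congrArg Prod.snd hj).symm⟩

lemma dart_ext (h : IsOrientation K ori) {d e : Triangle K × Fin 3}
    (hsrc : cyclicVertex (ori d.1) d.2 = cyclicVertex (ori e.1) e.2)
    (htgt : cyclicVertex (ori d.1) (d.2 + 1) = cyclicVertex (ori e.1) (e.2 + 1)) : d = e := by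
  obtain ⟨t, i⟩ := d
  obtain ⟨t', j⟩ := e
  by_cases ht : t = t'
  · subst ht
    exact congrArg (Prod.mk t) (h.cyclicVertex_injective t hsrc)
  · obtain ⟨k, hk, hk'⟩ := h.exists_reverse ht
      (h.mem_iff.2 ⟨j, hsrc.symm⟩) (h.mem_iff.2 ⟨j + 1, htgt.symm⟩)
    have hkj : k = j + 1 := h.cyclicVertex_injective t' (hk.trans htgt)
    have hkj' : k + 1 = j := h.cyclicVertex_injective t' (hk'.trans hsrc)
    lia

lemma exists_opposite (h : IsOrientation K ori)
    (hedge : ∀ e ∈ K.faces, e.card = 2 → IsInteriorEdge K e) (d : Triangle K × Fin 3) :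
    ∃ e : Triangle K × Fin 3, cyclicVertex (ori e.1) e.2 = cyclicVertex (ori d.1) (d.2 + 1) ∧
      cyclicVertex (ori e.1) (e.2 + 1) = cyclicVertex (ori d.1) d.2 := by
  classical
  obtain ⟨t, i⟩ := d
  have hxy : cyclicVertex (ori t) i ≠ cyclicVertex (ori t) (i + 1) :=
    (h.cyclicVertex_injective t).ne (by simp)
  obtain ⟨-, -, hcard⟩ := hedge _ (h.edge_mem_faces t i) (Finset.card_pair hxy)
  obtain ⟨t', ⟨ht', hcard', hsub⟩, hne⟩ :=
    Set.exists_ne_of_one_lt_ncard (hcard.symm ▸ one_lt_two) t.1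
  simp only [Finset.insert_subset_iff, Finset.singleton_subset_iff] at hsub
  obtain ⟨j, hj, hj'⟩ := h.exists_reverse (t' := ⟨t', ht', hcard'⟩)
    (fun heq => hne (congrArg Subtype.val heq).symm) hsub.1 hsub.2
  exact ⟨(⟨t', ht', hcard'⟩, j), hj, hj'⟩

/-- The map of an oriented closed complex; the dart `(t, i)` is the edge of `t` starting at the
`i`-th vertex in the cyclic ordering of `t`. -/
noncomputable abbrev toTriMap [Fintype (Triangle K)] [Nonempty (Triangle K)]
    (h : IsOrientation K ori) (hedge : ∀ e ∈ K.faces, e.card = 2 → IsInteriorEdge K e) :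
    TriMap (Pt n) :=
  TriMap.ofOppositeDarts (Dart := Triangle K × Fin 3) (fun d => (d.1, d.2 + 1))
    (fun d => cyclicVertex (ori d.1) d.2) (fun d => Prod.ext rfl (by lia)) h.dart_ext
    (h.exists_opposite hedge)

variable [Fintype (Triangle K)] [Nonempty (Triangle K)]

lemma faceVertices_toTriMap (h : IsOrientation K ori)
    (hedge : ∀ e ∈ K.faces, e.card = 2 → IsInteriorEdge K e) (d : Triangle K × Fin 3) :
    (h.toTriMap hedge).faceVertices d = d.1.1 := by
  obtain ⟨t, i⟩ := d
  ext x
  rw [TriMap.mem_faceVertices, h.mem_iff]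
  change x = cyclicVertex (ori t) i ∨ x = cyclicVertex (ori t) (i + 1) ∨
    x = cyclicVertex (ori t) (i + 1 + 1) ↔ _
  have hcases (j : Fin 3) : j = i ∨ j = i + 1 ∨ j = i + 1 + 1 := by lia
  constructor
  · rintro (rfl | rfl | rfl) <;> exact ⟨_, rfl⟩
  · rintro ⟨j, rfl⟩
    rcases hcases j with rfl | rfl | rfl <;> simp only [true_or, or_true]

lemma triangulates_toTriMap (h : IsOrientation K ori)
    (hedge : ∀ e ∈ K.faces, e.card = 2 → IsInteriorEdge K e)
    (hcover : ∀ s ∈ K.faces, ∃ t : Triangle K, s ⊆ t.1) :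
    (h.toTriMap hedge).Triangulates K where
  faceVertices_mem_faces d := (h.faceVertices_toTriMap hedge d).symm ▸ d.1.2.1
  card_faceVertices d := (h.faceVertices_toTriMap hedge d).symm ▸ d.1.2.2
  dart_ext := h.dart_ext
  sameFace_of_faceVertices_eq {d e} hde := by
    rw [h.faceVertices_toTriMap hedge d, h.faceVertices_toTriMap hedge e] at hde
    obtain ⟨t, i⟩ := d
    obtain ⟨t', j⟩ := e
    obtain rfl := Subtype.ext hde
    have hcases : i = j ∨ i = j + 1 ∨ i = j + 1 + 1 := by lia
    exact hcases.imp (congrArg _) (Or.imp (congrArg _) (congrArg _))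
  exists_subset_faceVertices {s} hs := by
    obtain ⟨t, ht⟩ := hcover s hs
    exact ⟨(t, 0), (h.faceVertices_toTriMap hedge (t, 0)).symm ▸ ht⟩

end IsOrientation

lemma exists_triangle_of_two_le_card (hdim : TwoDimensional K)
    (hedge : ∀ e ∈ K.faces, e.card = 2 → IsInteriorEdge K e) {s : Finset (Pt n)} (hs : s ∈ K.faces)
    (hcard : 2 ≤ s.card) : ∃ t : Triangle K, s ⊆ t.1 := by
  rcases (hdim s hs).eq_or_lt with hthree | hlt
  · exact ⟨⟨s, hs, hthree⟩, subset_rfl⟩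
  · obtain ⟨-, -, htwo⟩ := hedge s hs (by lia)
    obtain ⟨t, ht, hthree, hst⟩ := Set.nonempty_of_ncard_ne_zero (htwo ▸ two_ne_zero)
    exact ⟨⟨t, ht, hthree⟩, hst⟩

lemma exists_triangle_of_mem_faces (hdim : TwoDimensional K)
    (hedge : ∀ e ∈ K.faces, e.card = 2 → IsInteriorEdge K e)
    (hK : PuncturedLocallyConnected K.space) (hfin : K.faces.Finite) {s : Finset (Pt n)}
    (hs : s ∈ K.faces) : ∃ t : Triangle K, s ⊆ t.1 := by
  rcases lt_or_ge s.card 2 with hlt | hge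
  · have hpos := Finset.card_pos.2 (K.nonempty_of_mem_faces hs)
    obtain ⟨v, rfl⟩ := Finset.card_eq_one.1 (show s.card = 1 by lia)
    obtain ⟨s', hs', hvs', hne⟩ := exists_mem_faces_ne_singleton hK hfin hs
    have hssub : {v} ⊂ s' := (Finset.singleton_subset_iff.2 hvs').ssubset_of_ne hne.symm
    have hlt' := Finset.card_lt_card hssub
    rw [Finset.card_singleton] at hlt'
    obtain ⟨t, ht⟩ := exists_triangle_of_two_le_card hdim hedge hs' hlt'
    exact ⟨t, hssub.subset.trans ht⟩
  · exact exists_triangle_of_two_le_card hdim hedge hs hge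

lemma exists_triangulates (hfin : K.faces.Finite) (hne : K.space.Nonempty)
    (hdim : TwoDimensional K) (hK : PuncturedLocallyConnected K.space)
    (hedge : ∀ e ∈ K.faces, e.card = 2 → IsInteriorEdge K e) (hor : Orientable K) :
    ∃ X : TriMap (Pt n), X.Triangulates K := by
  obtain ⟨ori, hcoe, hswap⟩ := hor
  have hcover : ∀ s ∈ K.faces, ∃ t : Triangle K, s ⊆ t.1 := fun s hs =>
    exists_triangle_of_mem_faces hdim hedge hK hfin hs
  have : Fintype (Triangle K) := (hfin.subset fun t ht => ht.1).fintype
  have : Nonempty (Triangle K) := by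
    obtain ⟨x, hx⟩ := hne
    obtain ⟨s, hs, -⟩ := SimplicialComplex.mem_space_iff.1 hx
    exact (hcover s hs).nonempty
  exact ⟨_, IsOrientation.triangulates_toTriMap ⟨hcoe, hswap⟩ hedge hcover⟩

end Orientation

/-- for a connected, locally planar, boundaryless, orientable `K`, the genus `g`
of `|K|` satisfies `χ(K) = 2 - 2g`. -/
theorem eulerChar_closed_orientable (K : SimplicialComplex ℝ (Pt n))
    (hfin : K.faces.Finite) (hdim : TwoDimensional K)
    (hconn : IsConnected K.space) (hlp : LocallyPlanar K)
    (hnobd : ∀ e ∈ K.faces, e.card = 2 → IsInteriorEdge K e)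
    (hor : Orientable K) :
    eulerChar K = 2 - 2 * (genus ↥K.space : ℤ) := by
  have hpunctured := hlp.puncturedLocallyConnected
  obtain ⟨X, hX⟩ := exists_triangulates hfin hconn.nonempty hdim hpunctured hnobd hor
  let S := hX.toTriSurface (hX.connectedStars hpunctured)
  have hspace : S.space = K.space := hX.space_eq
  have hgenus : 12 * (genus K.space : ℤ) = S.eulerDefect := by
    rw [← hspace]
    exact S.twelve_mul_genus_eq (hspace ▸ hconn.isPreconnected)
  have heuler : S.eulerDefect = 12 - 6 * eulerChar K := hX.eulerDefect_eq
  linarith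

end PaperAlg
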